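/- Suppose that s and k are natural numbers with k ≥ 3 and s > s₁(k). Then there exist a positive number δ = δ(k,s) and a constant C = C(k,s) such that for all sufficiently large X one has ∫_𝔪 |g_k(α;X)|^s dα ≤ C·X^{s−k−δ}. -/

import Mathlib

/-- Number of integral solutions of the Vinogradov system of degree k
in 2s variables from [1,X]. -/
noncomputable def Jcount (s k : ℕ) (X : ℝ) : ℕ :=
  Set.ncard {xy : (Fin s → ℤ) × (Fin s → ℤ) |
    (∀ i, 1 ≤ xy.1 i ∧ (xy.1 i : ℝ) ≤ X) ∧
    (∀ i, 1 ≤ xy.2 i ∧ (xy.2 i : ℝ) ≤ X) ∧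
    ∀ j ∈ Finset.Icc 1 k, ∑ i, ((xy.1 i) ^ j - (xy.2 i) ^ j) = 0}

/-- η(s,k): the least positive η such that, for each ε > 0,
J_{s,k}(X) ≤ C X^{2s - k(k+1)/2 + η + ε} for all sufficiently large X. -/
noncomputable def etaExp (s k : ℕ) : ℝ :=
  sInf {η : ℝ | 0 < η ∧ ∀ ε : ℝ, 0 < ε → ∃ C X₀ : ℝ, 0 < C ∧ ∀ X : ℝ, X₀ ≤ X →
    (Jcount s k X : ℝ) ≤ C * X ^ (2*(s:ℝ) - (k:ℝ)*((k:ℝ)+1)/2 + η + ε)}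

/-- e(z) = exp(2πiz). -/
noncomputable def ec (z : ℝ) : ℂ := Complex.exp (2 * Real.pi * Complex.I * z)

/-- The Weyl sum g_k(α;X) = ∑_{1 ≤ x ≤ X} e(α x^k). -/
noncomputable def gk (k : ℕ) (X : ℝ) (α : ℝ) : ℂ :=
  ∑ x ∈ Finset.Icc 1 ⌊X⌋₊, ec (α * (x:ℝ)^k)

/-- Δ*_v = max(η(v,k) - 1, η(v,k-1)). -/
noncomputable def DstarC (k v : ℕ) : ℝ := max (etaExp v k - 1) (etaExp v (k-1))

/-- s₀(k,v,w) = 2k² - 2 - (2k² - 2 - (2v + w² - w))/(1 + Δ*_v/w). -/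
noncomputable def s0C (k v w : ℕ) : ℝ :=
  2*(k:ℝ)^2 - 2 - (2*(k:ℝ)^2 - 2 - (2*(v:ℝ) + (w:ℝ)^2 - (w:ℝ))) / (1 + DstarC k v / (w:ℝ))

/-- s₁(k): the minimum of s₀(k,v,w) over 1 ≤ w ≤ k-1 and v ≥ 1 with
2v + w² - w < 2k² - 2. -/
noncomputable def s1C (k : ℕ) : ℝ :=
  sInf {x : ℝ | ∃ v w : ℕ, 1 ≤ w ∧ w ≤ k-1 ∧ 1 ≤ v ∧
    2*(v:ℝ) + (w:ℝ)^2 - (w:ℝ) < 2*(k:ℝ)^2 - 2 ∧ x = s0C k v w}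

/-- The minor arcs 𝔪 = 𝔪_k: α ∈ [0,1) such that whenever (a,q) = 1 and
|qα - a| ≤ (2k)⁻¹ X^{1-k} one has q > (2k)⁻¹ X. -/
def minorArcs (k : ℕ) (X : ℝ) : Set ℝ :=
  {α | α ∈ Set.Ico (0:ℝ) 1 ∧ ∀ a : ℤ, ∀ q : ℕ, 0 < q → Int.gcd a q = 1 →
    |(q:ℝ) * α - (a:ℝ)| ≤ (2*(k:ℝ))⁻¹ * X ^ (1 - (k:ℝ)) → (2*(k:ℝ))⁻¹ * X < (q:ℝ)}

/-!
The Vinogradov system of degree `k` at the critical exponent is treated by `ℓ²` decoupling over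
`ZMod (p ^ N)`, for a single prime `p > k`. A broad-narrow dichotomy reduces linear decoupling to
bilinear decoupling for transverse residue classes. There, decoupling in lower dimension and
Hölder's inequality trade the scales of the two classes against each other, and each round of this
gains a fixed fraction of the linear exponent, so that no positive exponent survives.

For `α` on the minor arcs one compares `gk k X α` with its translates `∑ e(α (x - y) ^ k)` for
`≫ X` values of `y`. In an even moment, the power sums of degree at most `k - 2` are fixed by
fibring and that of degree `k - 1` carries the phase `-k α y`, linear in `y`. As these phases are
separated modulo one, the dual large sieve decouples the values of this power sum, and what is left
integrates to a Vinogradov count: the minor arcs save a factor `X` at the critical exponent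
`k (k + 1)`. Interpolation with a pointwise truncation extends the saving of a power of `X` to all
`s > k ^ 2`. Finally, diagonal solutions give `η(v, w) ≥ w (w + 1) / 2 - v`, whence
`s₁(k) ≥ k ^ 2 + k - 2`.
-/

section FiniteSums

open Finset

variable {ι Y : Type*}

lemma Lp_sum_le [Fintype ι] (J : Finset Y) {F : Y → ι → ℝ} (hF : ∀ y ∈ J, ∀ i, 0 ≤ F y i) {s : ℕ}
    (hs : 1 ≤ s) :
    ∑ i, (∑ y ∈ J, F y i) ^ s ≤ (∑ y ∈ J, (∑ i, F y i ^ s) ^ (s : ℝ)⁻¹) ^ s := by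
  have hs0 : s ≠ 0 := by omega
  have hnonneg : 0 ≤ ∑ i, (∑ y ∈ J, F y i) ^ s :=
    sum_nonneg fun i _ => pow_nonneg (sum_nonneg fun y hy => hF y hy i) _
  have minkowski := le_sum_of_subadditive_on_pred
    (fun f : ι → ℝ => (∑ i, f i ^ s) ^ (s : ℝ)⁻¹) (fun f => ∀ i, 0 ≤ f i)
    (by simp [hs0]) (fun f g hf hg => by
      simpa using Real.Lp_add_le_of_nonneg (p := s) (by exact_mod_cast hs) (s := univ)
        (fun i _ => hf i) (fun i _ => hg i))
    (fun f g hf hg i => add_nonneg (hf i) (hg i)) F hF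
  simp only [Finset.sum_apply] at minkowski
  rw [← Real.rpow_inv_natCast_pow hnonneg hs0]
  exact pow_le_pow_left₀ (Real.rpow_nonneg hnonneg _) minkowski s

lemma sum_mul_Lp_sum_le [Fintype ι] (J : Finset Y) {w : ι → ℝ} (hw : ∀ i, 0 ≤ w i)
    {F : Y → ι → ℝ} (hF : ∀ y ∈ J, ∀ i, 0 ≤ F y i) {s : ℕ} (hs : 1 ≤ s) :
    ∑ i, w i * (∑ y ∈ J, F y i ^ (s : ℝ)⁻¹) ^ s
      ≤ (∑ y ∈ J, (∑ i, w i * F y i) ^ (s : ℝ)⁻¹) ^ s := by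
  have hs0 : s ≠ 0 := by omega
  have hnonneg : ∀ y ∈ J, ∀ i, 0 ≤ w i * F y i := fun y hy i => mul_nonneg (hw i) (hF y hy i)
  calc ∑ i, w i * (∑ y ∈ J, F y i ^ (s : ℝ)⁻¹) ^ s
      = ∑ i, (∑ y ∈ J, (w i * F y i) ^ (s : ℝ)⁻¹) ^ s := by
        refine sum_congr rfl fun i _ => ?_
        rw [sum_congr rfl fun y hy => Real.mul_rpow (hw i) (hF y hy i), ← mul_sum, mul_pow,
          Real.rpow_inv_natCast_pow (hw i) hs0]
    _ ≤ (∑ y ∈ J, (∑ i, ((w i * F y i) ^ (s : ℝ)⁻¹) ^ s) ^ (s : ℝ)⁻¹) ^ s :=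
        Lp_sum_le J (fun y hy i => Real.rpow_nonneg (hnonneg y hy i) _) hs
    _ = (∑ y ∈ J, (∑ i, w i * F y i) ^ (s : ℝ)⁻¹) ^ s := by
        congr 1
        refine sum_congr rfl fun y hy => ?_
        rw [sum_congr rfl fun i _ => Real.rpow_inv_natCast_pow (hnonneg y hy i) hs0]

lemma sum_rpow_mul_rpow_le {I : Finset ι} {U V : ι → ℝ} (hU : ∀ i ∈ I, 0 ≤ U i)
    (hV : ∀ i ∈ I, 0 ≤ V i) {a b : ℝ} (ha : 0 ≤ a) (hb : 0 ≤ b) (hab : a + b = 1) :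
    ∑ i ∈ I, U i ^ a * V i ^ b ≤ (∑ i ∈ I, U i) ^ a * (∑ i ∈ I, V i) ^ b := by
  rcases ha.eq_or_lt with rfl | ha
  · simp [show b = 1 by linarith]
  rcases hb.eq_or_lt with rfl | hb
  · simp [show a = 1 by linarith]
  have hconj : a⁻¹.HolderConjugate b⁻¹ :=
    Real.holderConjugate_iff.2 ⟨(one_lt_inv₀ ha).2 (by linarith), by simpa using hab⟩
  have holder := Real.inner_le_Lp_mul_Lq_of_nonneg I hconj
    (fun i hi => Real.rpow_nonneg (hU i hi) a) (fun i hi => Real.rpow_nonneg (hV i hi) b)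
  rwa [sum_congr rfl fun i hi => Real.rpow_rpow_inv (hU i hi) ha.ne',
    sum_congr rfl fun i hi => Real.rpow_rpow_inv (hV i hi) hb.ne', one_div, one_div, inv_inv,
    inv_inv] at holder

lemma sum_pow_le_sum_pow_mul_sum_pow {I : Finset ι} {f U V : ι → ℝ} (hf : ∀ i ∈ I, 0 ≤ f i)
    (hU : ∀ i ∈ I, 0 ≤ U i) (hV : ∀ i ∈ I, 0 ≤ V i) {m n : ℕ} (hmn : n + m ≠ 0)
    (h : ∀ i ∈ I, f i ^ (n + m) ≤ U i ^ n * V i ^ m) :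
    (∑ i ∈ I, f i) ^ (n + m) ≤ (∑ i ∈ I, U i) ^ n * (∑ i ∈ I, V i) ^ m := by
  have hpos : (0 : ℝ) < n + m := by exact_mod_cast hmn.bot_lt
  have rpow_pow : ∀ (j : ℕ) {x : ℝ}, 0 ≤ x → (x ^ (j / (n + m) : ℝ)) ^ (n + m) = x ^ j := by
    intro j x hx
    rw [← Real.rpow_mul_natCast hx, Nat.cast_add, div_mul_cancel₀ _ hpos.ne', Real.rpow_natCast]
  have hle : ∀ i ∈ I, f i ≤ U i ^ (n / (n + m) : ℝ) * V i ^ (m / (n + m) : ℝ) := fun i hi => by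
    have hU' := Real.rpow_nonneg (hU i hi) (n / (n + m))
    have hV' := Real.rpow_nonneg (hV i hi) (m / (n + m))
    refine le_of_pow_le_pow_left₀ hmn (mul_nonneg hU' hV') ?_
    rw [mul_pow, rpow_pow n (hU i hi), rpow_pow m (hV i hi)]
    exact h i hi
  calc (∑ i ∈ I, f i) ^ (n + m)
      ≤ ((∑ i ∈ I, U i) ^ (n / (n + m) : ℝ) * (∑ i ∈ I, V i) ^ (m / (n + m) : ℝ)) ^ (n + m) :=
        pow_le_pow_left₀ (sum_nonneg hf) ((sum_le_sum hle).trans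
          (sum_rpow_mul_rpow_le hU hV (by positivity) (by positivity) (by field_simp))) _
    _ = (∑ i ∈ I, U i) ^ n * (∑ i ∈ I, V i) ^ m := by
        rw [mul_pow, rpow_pow n (sum_nonneg hU), rpow_pow m (sum_nonneg hV)]

lemma sum_pow_le_pow_sum {I : Finset Y} {F : Y → ℝ} (hF : ∀ y ∈ I, 0 ≤ F y) {s : ℕ}
    (hs : s ≠ 0) : ∑ y ∈ I, F y ^ s ≤ (∑ y ∈ I, F y) ^ s := by
  obtain ⟨t, rfl⟩ := Nat.exists_eq_succ_of_ne_zero hs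
  calc ∑ y ∈ I, F y ^ (t + 1) ≤ ∑ y ∈ I, (∑ y ∈ I, F y) ^ t * F y := sum_le_sum fun y hy => by
          rw [pow_succ]
          exact mul_le_mul_of_nonneg_right
            (pow_le_pow_left₀ (hF y hy) (single_le_sum hF hy) _) (hF y hy)
    _ = (∑ y ∈ I, F y) ^ (t + 1) := by rw [← mul_sum, pow_succ]

lemma sum_rpow_inv_pow_le {I : Finset Y} {W F : Y → ℝ} (hW : ∀ y ∈ I, 0 ≤ W y)
    (hF : ∀ y ∈ I, 0 ≤ F y) {B : ℝ} (hB : 0 ≤ B) {t : ℕ} (ht : t ≠ 0)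
    (h : ∀ y ∈ I, W y ≤ B * F y ^ t) :
    (∑ y ∈ I, W y ^ (t : ℝ)⁻¹) ^ t ≤ B * (∑ y ∈ I, F y) ^ t := by
  have hroot : ∀ y ∈ I, W y ^ (t : ℝ)⁻¹ ≤ B ^ (t : ℝ)⁻¹ * F y := fun y hy => by
    rw [← Real.pow_rpow_inv_natCast (hF y hy) ht, ← Real.mul_rpow hB (pow_nonneg (hF y hy) t)]
    exact Real.rpow_le_rpow (hW y hy) (h y hy) (by positivity)
  calc (∑ y ∈ I, W y ^ (t : ℝ)⁻¹) ^ t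
      ≤ (∑ y ∈ I, B ^ (t : ℝ)⁻¹ * F y) ^ t :=
        pow_le_pow_left₀ (sum_nonneg fun y hy => Real.rpow_nonneg (hW y hy) _)
          (sum_le_sum hroot) t
    _ = B * (∑ y ∈ I, F y) ^ t := by
        rw [← mul_sum, mul_pow, Real.rpow_inv_natCast_pow hB ht]

end FiniteSums

section ExponentialSums

open Finset

variable {ι : Type*} {q : ℕ} [NeZero q] {k : ℕ}

/-- The exponential sum over `ZMod q` with frequency vectors `ψ i` and coefficients `a i`, where `i`
ranges over `S`. -/
noncomputable def oscSum (ψ : ι → Fin k → ZMod q) (a : ι → ℂ) (S : Finset ι)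
    (α : Fin k → ZMod q) : ℂ :=
  ∑ i ∈ S, a i * ZMod.stdAddChar (∑ m, α m * ψ i m)

/-- The moment of order `2 * s` of `oscSum` with respect to the weight `w`. -/
noncomputable def wMoment (w : (Fin k → ZMod q) → ℝ) (ψ : ι → Fin k → ZMod q) (a : ι → ℂ) (s : ℕ)
    (S : Finset ι) : ℝ :=
  ∑ α, w α * ‖oscSum ψ a S α‖ ^ (2 * s)

/-- The moment of order `2 * s` of `oscSum`, with respect to counting measure. -/
noncomputable def moment (ψ : ι → Fin k → ZMod q) (a : ι → ℂ) (s : ℕ) (S : Finset ι) : ℝ :=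
  ∑ α, ‖oscSum ψ a S α‖ ^ (2 * s)

/-- The coefficients `a` modulated by the characters of frequency `α`: translating the argument of
`oscSum` by `α` amounts to replacing `a` by `modulate ψ a α`. -/
noncomputable def modulate (ψ : ι → Fin k → ZMod q) (a : ι → ℂ) (α : Fin k → ZMod q) : ι → ℂ :=
  fun i => a i * ZMod.stdAddChar (∑ m, α m * ψ i m)

variable (ψ : ι → Fin k → ZMod q) (a : ι → ℂ)

lemma moment_nonneg (s : ℕ) (S : Finset ι) : 0 ≤ moment ψ a s S :=
  sum_nonneg fun _ _ => by positivity

lemma wMoment_nonneg {w : (Fin k → ZMod q) → ℝ} (hw : ∀ α, 0 ≤ w α) (s : ℕ) (S : Finset ι) :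
    0 ≤ wMoment w ψ a s S :=
  sum_nonneg fun α _ => mul_nonneg (hw α) (by positivity)

lemma wMoment_one (s : ℕ) (S : Finset ι) : wMoment (fun _ => 1) ψ a s S = moment ψ a s S := by
  simp only [wMoment, moment, one_mul]

lemma oscSum_empty (α : Fin k → ZMod q) : oscSum ψ a ∅ α = 0 := sum_empty

lemma wMoment_empty (w : (Fin k → ZMod q) → ℝ) {s : ℕ} (hs : s ≠ 0) : wMoment w ψ a s ∅ = 0 := by
  simp [wMoment, oscSum_empty, hs]

lemma moment_empty {s : ℕ} (hs : s ≠ 0) : moment ψ a s ∅ = 0 := by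
  rw [← wMoment_one, wMoment_empty ψ a _ hs]

lemma sum_oscSum_filter {Y : Type*} [Fintype Y] [DecidableEq Y] (π : ι → Y) (S : Finset ι)
    (α : Fin k → ZMod q) : ∑ y, oscSum ψ a {i ∈ S | π i = y} α = oscSum ψ a S α :=
  sum_fiberwise S π _

variable {ψ a}

lemma norm_oscSum_add {l : ℕ} {ψ' : ι → Fin l → ZMod q} {S : Finset ι} {τ : Fin k → ZMod q}
    {β : Fin l → ZMod q} {c : ZMod q}
    (h : ∀ i ∈ S, ∑ j, τ j * ψ i j = c + ∑ m, β m * ψ' i m) (α : Fin k → ZMod q) :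
    ‖oscSum ψ a S (α + τ)‖ = ‖oscSum ψ' (modulate ψ a α) S β‖ := by
  have hsum : oscSum ψ a S (α + τ) = ZMod.stdAddChar c * oscSum ψ' (modulate ψ a α) S β := by
    rw [oscSum, oscSum, mul_sum]
    refine sum_congr rfl fun i hi => ?_
    simp only [Pi.add_apply, add_mul, sum_add_distrib, h i hi, AddChar.map_add_eq_mul, modulate]
    ring
  rw [hsum, norm_mul, AddChar.norm_apply, one_mul]

lemma norm_oscSum_add_of_const {S : Finset ι} {τ : Fin k → ZMod q} {c : ZMod q}
    (h : ∀ i ∈ S, ∑ j, τ j * ψ i j = c) (α : Fin k → ZMod q) :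
    ‖oscSum ψ a S (α + τ)‖ = ‖oscSum ψ a S α‖ := by
  rw [norm_oscSum_add (ψ' := ψ) (β := 0) (c := c) (fun i hi => by simp [h i hi])]
  simp [oscSum, modulate]

lemma card_mul_wMoment_eq {l : ℕ} {ψ' : ι → Fin l → ZMod q}
    {T : (Fin l → ZMod q) → Fin k → ZMod q} {c : (Fin l → ZMod q) → ZMod q} {S : Finset ι}
    (hT : ∀ i ∈ S, ∀ β, ∑ j, T β j * ψ i j = c β + ∑ m, β m * ψ' i m)
    {w : (Fin k → ZMod q) → ℝ} (hwT : ∀ α β, w (α + T β) = w α) (s : ℕ) :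
    (Fintype.card (Fin l → ZMod q) : ℝ) * wMoment w ψ a s S
      = ∑ α, w α * moment ψ' (modulate ψ a α) s S := by
  calc (Fintype.card (Fin l → ZMod q) : ℝ) * wMoment w ψ a s S
      = ∑ _β : Fin l → ZMod q, wMoment w ψ a s S := by simp
    _ = ∑ β : Fin l → ZMod q, ∑ α, w (α + T β) * ‖oscSum ψ a S (α + T β)‖ ^ (2 * s) :=
        sum_congr rfl fun β _ => (Equiv.sum_comp (Equiv.addRight (T β))
          fun α => w α * ‖oscSum ψ a S α‖ ^ (2 * s)).symm
    _ = ∑ α, ∑ β : Fin l → ZMod q, w α * ‖oscSum ψ' (modulate ψ a α) S β‖ ^ (2 * s) := by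
        rw [sum_comm]
        refine sum_congr rfl fun α _ => sum_congr rfl fun β _ => ?_
        rw [hwT, norm_oscSum_add (fun i hi => hT i hi β)]
    _ = ∑ α, w α * moment ψ' (modulate ψ a α) s S := by simp only [moment, mul_sum]

-- Average over the translates by `T β`, which the weight does not notice.
lemma wMoment_le_of_decoupling {l : ℕ} {ψ' : ι → Fin l → ZMod q}
    {T : (Fin l → ZMod q) → Fin k → ZMod q} {c : (Fin l → ZMod q) → ZMod q} {S : Finset ι}
    (hT : ∀ i ∈ S, ∀ β, ∑ j, T β j * ψ i j = c β + ∑ m, β m * ψ' i m)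
    {w : (Fin k → ZMod q) → ℝ} (hw : ∀ α, 0 ≤ w α) (hwT : ∀ α β, w (α + T β) = w α)
    {Y : Type*} [Fintype Y] [DecidableEq Y] {π : ι → Y} {s : ℕ} (hs : 1 ≤ s) {D : ℝ} (hD : 0 ≤ D)
    (hdec : ∀ a' : ι → ℂ, moment ψ' a' s S
      ≤ D * (∑ y, moment ψ' a' s {i ∈ S | π i = y} ^ (s : ℝ)⁻¹) ^ s) :
    wMoment w ψ a s S ≤ D * (∑ y, wMoment w ψ a s {i ∈ S | π i = y} ^ (s : ℝ)⁻¹) ^ s := by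
  have hs0 : s ≠ 0 := by omega
  set G : ℝ := (Fintype.card (Fin l → ZMod q) : ℝ)
  have hG0 : 0 < G := Nat.cast_pos.2 Fintype.card_pos
  refine le_of_mul_le_mul_left ?_ hG0
  calc G * wMoment w ψ a s S
      = ∑ α, w α * moment ψ' (modulate ψ a α) s S := card_mul_wMoment_eq hT hwT s
    _ ≤ ∑ α, w α *
          (D * (∑ y, moment ψ' (modulate ψ a α) s {i ∈ S | π i = y} ^ (s : ℝ)⁻¹) ^ s) :=
        sum_le_sum fun α _ => mul_le_mul_of_nonneg_left (hdec _) (hw α)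
    _ = D * ∑ α, w α * (∑ y, moment ψ' (modulate ψ a α) s {i ∈ S | π i = y} ^ (s : ℝ)⁻¹) ^ s := by
        rw [mul_sum]
        exact sum_congr rfl fun α _ => mul_left_comm _ _ _
    _ ≤ D * (∑ y, (∑ α, w α * moment ψ' (modulate ψ a α) s {i ∈ S | π i = y}) ^ (s : ℝ)⁻¹) ^ s :=
        mul_le_mul_of_nonneg_left
          (sum_mul_Lp_sum_le univ hw (fun _ _ _ => moment_nonneg _ _ _ _) hs) hD
    _ = D * (∑ y, G ^ (s : ℝ)⁻¹ * wMoment w ψ a s {i ∈ S | π i = y} ^ (s : ℝ)⁻¹) ^ s := by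
        refine congrArg (fun x => D * x ^ s) (sum_congr rfl fun y _ => ?_)
        rw [← card_mul_wMoment_eq (fun i hi => hT i (mem_of_mem_filter i hi)) hwT,
          Real.mul_rpow hG0.le (wMoment_nonneg ψ a hw _ _)]
    _ = G * (D * (∑ y, wMoment w ψ a s {i ∈ S | π i = y} ^ (s : ℝ)⁻¹) ^ s) := by
        rw [← mul_sum, mul_pow, Real.rpow_inv_natCast_pow hG0.le hs0]
        ring

end ExponentialSums

section PolynomialJets

open Finset Polynomial

section

variable {R : Type*} [CommRing R]

lemma X_sub_C_pow_dvd_derivative {P : R[X]} {n : ℕ} {r : R}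
    (h : ∀ i < n, (taylor r P).coeff (i + 1) = 0) : (X - C r) ^ n ∣ derivative P := by
  have htaylor : X ^ n ∣ taylor r (derivative P) := by
    have hcomm : taylor r (derivative P) = derivative (taylor r P) := by
      simp [taylor_apply, derivative_comp]
    rw [hcomm, X_pow_dvd_iff]
    intro d hd
    rw [coeff_derivative, h d hd, zero_mul]
  have hdvd := map_dvd (taylorAlgHom (-r)) htaylor
  simpa [taylor_taylor, ← sub_eq_add_neg] using hdvd

lemma exists_eq_C_add_X_pow_mul {Q : R[X]} {n : ℕ} (h : ∀ i < n, Q.coeff (i + 1) = 0) :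
    ∃ P : R[X], Q = C (Q.coeff 0) + X ^ (n + 1) * P := by
  have hdvd : X ^ (n + 1) ∣ Q - C (Q.coeff 0) := by
    rw [X_pow_dvd_iff]
    rintro (_ | d) hd
    · simp
    · rw [coeff_sub, h d (by omega), coeff_C_succ, sub_zero]
  obtain ⟨P, hP⟩ := hdvd
  exact ⟨P, by rw [← hP]; ring⟩

lemma sub_pow_dvd_eval_sub_eval {Q : R[X]} {n : ℕ} {y : R}
    (h : ∀ i < n, (taylor y Q).coeff (i + 1) = 0) (z : R) :
    (z - y) ^ (n + 1) ∣ Q.eval z - Q.eval y := by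
  obtain ⟨P, hP⟩ := exists_eq_C_add_X_pow_mul h
  refine ⟨P.eval (z - y), ?_⟩
  have hz : Q.eval z = (taylor y Q).eval (z - y) := by rw [taylor_eval, sub_add_cancel]
  rw [hz, hP, taylor_coeff_zero]
  simp

lemma exists_eval_add_eq {Q : R[X]} {l m : ℕ} {x : R}
    (h : ∀ i < l, (taylor x Q).coeff (i + 1) = if i = m then 1 else 0) :
    ∃ (c : R) (P : R[X]), ∀ t, Q.eval (x + t) = c + t ^ (m + 1) + t ^ (l + 1) * P.eval t := by
  obtain ⟨P, hP⟩ := exists_eq_C_add_X_pow_mul (Q := taylor x Q - X ^ (m + 1)) (n := l)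
    fun i hi => by simp [h i hi, coeff_X_pow]
  refine ⟨(taylor x Q - X ^ (m + 1)).coeff 0, P, fun t => ?_⟩
  have ht := congrArg (eval t) (eq_add_of_sub_eq hP)
  rw [taylor_eval, add_comm t] at ht
  rw [ht]
  simp only [eval_add, eval_C, eval_mul, eval_pow, eval_X]
  ring

lemma coeff_taylor_sum_C_mul {k : ℕ} (z : R) (v : Fin k → R) (f : Fin k → R[X]) (i : ℕ) :
    (taylor z (∑ j, C (v j) * f j)).coeff i = ∑ j, (taylor z (f j)).coeff i * v j := by
  rw [map_sum, finsetSum_coeff]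
  refine sum_congr rfl fun j _ => ?_
  rw [taylor_mul, taylor_C, coeff_C_mul, mul_comm]

end

section

variable {F : Type*} [Field F]

lemma derivative_eq_zero_of_taylor_coeff_eq_zero {P : F[X]} {k l : ℕ} (hP : P.natDegree ≤ k)
    (hl : l ≤ k) {x y : F} (hxy : l < k → x ≠ y)
    (hy : ∀ i < k - l, (taylor y P).coeff (i + 1) = 0)
    (hx : ∀ i < l, (taylor x P).coeff (i + 1) = 0) : derivative P = 0 := by
  have hcop : IsCoprime ((X - C y) ^ (k - l)) ((X - C x) ^ l) := by
    rcases hl.lt_or_eq with h | rfl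
    · exact (isCoprime_X_sub_C_of_isUnit_sub (sub_ne_zero.2 (hxy h).symm).isUnit).pow
    · simp [isCoprime_one_left]
  have hdvd := hcop.mul_dvd (X_sub_C_pow_dvd_derivative hy) (X_sub_C_pow_dvd_derivative hx)
  rcases eq_or_ne P.natDegree 0 with h0 | h0
  · exact derivative_of_natDegree_zero h0
  by_contra hne
  have hle := natDegree_le_of_dvd hdvd hne
  rw [Monic.natDegree_mul ((monic_X_sub_C _).pow _) ((monic_X_sub_C _).pow _),
    (monic_X_sub_C _).natDegree_pow, (monic_X_sub_C _).natDegree_pow, natDegree_X_sub_C,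
    natDegree_X_sub_C] at hle
  have hlt := natDegree_derivative_lt h0
  omega

lemma eq_zero_of_sum_taylor_coeff_mul_eq_zero {k l : ℕ}
    (hk : ∀ j : Fin k, ((j.1 + 1 : ℕ) : F) ≠ 0) (hl : l ≤ k) {x y : F} (hxy : l < k → x ≠ y)
    {v : Fin k → F} (hy : ∀ i < k - l, ∑ j, (taylor y (X ^ (j.1 + 1))).coeff (i + 1) * v j = 0)
    (hx : ∀ i < l, ∑ j, (taylor x (X ^ (j.1 + 1))).coeff (i + 1) * v j = 0) : v = 0 := by
  set P : F[X] := ∑ j, C (v j) * X ^ (j.1 + 1)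
  have hdeg : P.natDegree ≤ k :=
    natDegree_sum_le_of_forall_le _ _ fun j _ => (natDegree_C_mul_X_pow_le _ _).trans j.2
  have hderiv : derivative P = 0 := by
    refine derivative_eq_zero_of_taylor_coeff_eq_zero hdeg hl hxy (fun i hi => ?_) fun i hi => ?_
    · rw [coeff_taylor_sum_C_mul, hy i hi]
    · rw [coeff_taylor_sum_C_mul, hx i hi]
  funext j
  have hcoeff : P.coeff (j.1 + 1) = v j := by
    rw [finsetSum_coeff, sum_eq_single j] <;> simp +contextual [coeff_X_pow, Fin.ext_iff, eq_comm]
  have hzero := coeff_derivative P j.1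
  rw [hderiv, coeff_zero, hcoeff, ← Nat.cast_succ] at hzero
  exact (mul_eq_zero.1 hzero.symm).resolve_right (hk j)

lemma exists_matrix_mul_eq_one {m n R : Type*} [DecidableEq m] [Fintype n] [CommRing R]
    (ρ : R →+* F) [IsLocalHom ρ] (e : m ≃ n) {A : Matrix m n R}
    (hA : ∀ v : n → F, (A.map ρ).mulVec v = 0 → v = 0) : ∃ B : Matrix n m R, A * B = 1 := by
  classical
  have hdet : IsUnit (A.submatrix e.symm id).det := by
    refine isUnit_of_map_unit ρ _ (isUnit_iff_ne_zero.2 fun h0 => ?_)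
    rw [RingHom.map_det] at h0
    obtain ⟨v, hv, hv0⟩ := Matrix.exists_mulVec_eq_zero_iff.2 h0
    refine hv (hA v (funext fun i => ?_))
    simpa [Matrix.mulVec, dotProduct] using congrFun hv0 (e i)
  refine ⟨(A.submatrix e.symm id)⁻¹.submatrix id e, ?_⟩
  calc A * (A.submatrix e.symm id)⁻¹.submatrix id e
      = (A.submatrix e.symm id * (A.submatrix e.symm id)⁻¹).submatrix e e := by
        ext i j
        simp [Matrix.mul_apply]
    _ = 1 := by rw [Matrix.mul_nonsing_inv _ hdet, Matrix.submatrix_one_equiv]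

end

lemma isLocalHom_castHom_zmod_pow {p N : ℕ} [Fact p.Prime] (hN : p ∣ p ^ N) :
    IsLocalHom (ZMod.castHom hN (ZMod p)) := by
  have hp : p.Prime := Fact.out
  refine ⟨fun x hx => ?_⟩
  have : NeZero (p ^ N) := ⟨pow_ne_zero _ hp.ne_zero⟩
  obtain ⟨n, rfl⟩ := ZMod.natCast_zmod_surjective x
  rw [map_natCast, ZMod.isUnit_iff_coprime] at hx
  rw [ZMod.isUnit_iff_coprime]
  exact hx.pow_right N

/-- The components `X ^ (m + 1) + p * g m` of a curve that agrees with the moment curve modulo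
`p`. -/
noncomputable def momentPoly (p : ℕ) {q k : ℕ} (g : Fin k → (ZMod q)[X]) (m : Fin k) :
    (ZMod q)[X] :=
  X ^ (m.1 + 1) + C (p : ZMod q) * g m

lemma castHom_coeff_taylor_momentPoly {p q k : ℕ} (hq : p ∣ q) (g : Fin k → (ZMod q)[X]) (z : ℤ)
    (j : Fin k) (i : ℕ) :
    ZMod.castHom hq (ZMod p) ((taylor (z : ZMod q) (momentPoly p g j)).coeff i)
      = (taylor (z : ZMod p) (X ^ (j.1 + 1))).coeff i := by
  rw [← coeff_map, map_taylor, momentPoly]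
  simp

variable {p k l N : ℕ}

lemma natCast_pow_mul_eval_eq {Q : (ZMod (p ^ N))[X]} {n b ρ : ℕ} {y z : ℤ}
    (h : ∀ i < n, (taylor (y : ZMod (p ^ N)) Q).coeff (i + 1) = 0) (hN : N ≤ ρ + (n + 1) * b)
    (hz : z ≡ y [ZMOD (p : ℤ) ^ b]) :
    (p : ZMod (p ^ N)) ^ ρ * Q.eval (z : ZMod (p ^ N))
      = (p : ZMod (p ^ N)) ^ ρ * Q.eval (y : ZMod (p ^ N)) := by
  obtain ⟨v, hv⟩ := hz.symm.dvd
  obtain ⟨w, hw⟩ := sub_pow_dvd_eval_sub_eval h (z : ZMod (p ^ N))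
  have hp0 : (p : ZMod (p ^ N)) ^ (ρ + (n + 1) * b) = 0 :=
    pow_eq_zero_of_le hN (by rw [← Nat.cast_pow, ZMod.natCast_self])
  rw [← sub_eq_zero, ← mul_sub, hw, ← Int.cast_sub, hv]
  push_cast
  rw [mul_pow, ← pow_mul, mul_comm b, ← mul_assoc, ← mul_assoc, ← pow_add, hp0]
  simp

lemma exists_eval_add_pow_mul_eq {q : ℕ} {Q : (ZMod q)[X]} {m a : ℕ} (hm : m < l) (ha : 1 ≤ a)
    {x : ZMod q} (h : ∀ i < l, (taylor x Q).coeff (i + 1) = if i = m then 1 else 0) :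
    ∃ (c : ZMod q) (G : (ZMod q)[X]), ∀ u, Q.eval (x + (p : ZMod q) ^ a * u)
      = c + (p : ZMod q) ^ (a * (m + 1)) * (X ^ (m + 1) + C (p : ZMod q) * G).eval u := by
  obtain ⟨c, P, hP⟩ := exists_eval_add_eq h
  have hexp : a * (l + 1) = a * (m + 1) + 1 + (a * (l - m) - 1) := by
    have hpos : 1 ≤ a * (l - m) := Nat.mul_pos ha (by omega)
    have hsplit : a * (l + 1) = a * (m + 1) + a * (l - m) := by
      rw [← Nat.mul_add]
      congr 1
      omega
    omega
  refine ⟨c, C ((p : ZMod q) ^ (a * (l - m) - 1)) * X ^ (l + 1) *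
    P.comp (C ((p : ZMod q) ^ a) * X), fun u => ?_⟩
  rw [hP]
  simp only [eval_add, eval_C, eval_mul, eval_pow, eval_X, eval_comp]
  rw [mul_pow, mul_pow, ← pow_mul, ← pow_mul, hexp, pow_add, pow_add, pow_one]
  ring

variable [Fact p.Prime]

lemma exists_adapted_combinations (hk : k < p) (hl : l ≤ k) (g : Fin k → (ZMod (p ^ N))[X])
    {x y : ℤ} (hxy : l < k → ¬ x ≡ y [ZMOD p]) :
    ∃ T : Fin l → Fin k → ZMod (p ^ N), ∀ m : Fin l,
      (∀ i < k - l, (taylor (y : ZMod (p ^ N))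
        (∑ j, C (T m j) * momentPoly p g j)).coeff (i + 1) = 0) ∧
      (∀ i < l, (taylor (x : ZMod (p ^ N))
        (∑ j, C (T m j) * momentPoly p g j)).coeff (i + 1) = if i = m.1 then 1 else 0) := by
  rcases Nat.eq_zero_or_pos N with rfl | hN
  · have : Subsingleton (ZMod (p ^ 0)) := by rw [pow_zero]; infer_instance
    exact ⟨0, fun m => ⟨fun i _ => Subsingleton.elim _ _, fun i _ => Subsingleton.elim _ _⟩⟩
  have hpN : p ∣ p ^ N := dvd_pow_self p hN.ne'
  have := isLocalHom_castHom_zmod_pow hpN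
  let A : Matrix (Fin (k - l) ⊕ Fin l) (Fin k) (ZMod (p ^ N)) := fun r j =>
    Sum.elim (fun i => (taylor (y : ZMod (p ^ N)) (momentPoly p g j)).coeff (i.1 + 1))
      (fun i => (taylor (x : ZMod (p ^ N)) (momentPoly p g j)).coeff (i.1 + 1)) r
  have hA : ∀ v, (A.map (ZMod.castHom hpN (ZMod p))).mulVec v = 0 → v = 0 := by
    intro v hv
    refine eq_zero_of_sum_taylor_coeff_mul_eq_zero (fun j => ?_) hl (x := (x : ZMod p))
      (y := (y : ZMod p)) (fun h hz => hxy h ((ZMod.intCast_eq_intCast_iff _ _ _).1 hz))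
      (fun i hi => ?_) fun i hi => ?_
    · rw [Ne, ZMod.natCast_eq_zero_iff]
      exact Nat.not_dvd_of_pos_of_lt j.1.succ_pos (by omega)
    · refine Eq.trans (sum_congr rfl fun j _ => ?_) (congrFun hv (Sum.inl ⟨i, hi⟩))
      rw [← castHom_coeff_taylor_momentPoly hpN g]
      rfl
    · refine Eq.trans (sum_congr rfl fun j _ => ?_) (congrFun hv (Sum.inr ⟨i, hi⟩))
      rw [← castHom_coeff_taylor_momentPoly hpN g]
      rfl
  obtain ⟨B, hB⟩ := exists_matrix_mul_eq_one (ZMod.castHom hpN (ZMod p))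
    (finSumFinEquiv.trans (finCongr (by omega))) hA
  have hAB : ∀ r r', ∑ j, A r j * B j r' = if r = r' then 1 else 0 := fun r r' => by
    rw [← Matrix.mul_apply, hB, Matrix.one_apply]
  refine ⟨fun m j => B j (Sum.inr m), fun m => ⟨fun i hi => ?_, fun i hi => ?_⟩⟩
  · rw [coeff_taylor_sum_C_mul]
    exact (hAB (Sum.inl ⟨i, hi⟩) (Sum.inr m)).trans (if_neg Sum.inl_ne_inr)
  · rw [coeff_taylor_sum_C_mul]
    exact (hAB (Sum.inr ⟨i, hi⟩) (Sum.inr m)).trans (by simp [Fin.ext_iff])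

lemma exists_adapted_frequencies (hk : k < p) (hl : l ≤ k) (g : Fin k → (ZMod (p ^ N))[X])
    {x y : ℤ} (hxy : l < k → ¬ x ≡ y [ZMOD p]) :
    ∃ T : Fin l → Fin k → ZMod (p ^ N),
      (∀ (m : Fin l) (b ρ : ℕ) (z : ℤ), N ≤ ρ + (k - l + 1) * b → z ≡ y [ZMOD (p : ℤ) ^ b] →
        (p : ZMod (p ^ N)) ^ ρ * ∑ j, T m j * (momentPoly p g j).eval (z : ZMod (p ^ N))
          = (p : ZMod (p ^ N)) ^ ρ * ∑ j, T m j * (momentPoly p g j).eval (y : ZMod (p ^ N))) ∧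
      (∀ a : ℕ, 1 ≤ a → ∃ (g' : Fin l → (ZMod (p ^ N))[X]) (c : Fin l → ZMod (p ^ N)),
        ∀ (m : Fin l) (u : ℤ),
          ∑ j, T m j * (momentPoly p g j).eval ((x + (p : ℤ) ^ a * u : ℤ) : ZMod (p ^ N))
            = c m + (p : ZMod (p ^ N)) ^ (a * (m.1 + 1))
                * (momentPoly p g' m).eval (u : ZMod (p ^ N))) := by
  obtain ⟨T, hT⟩ := exists_adapted_combinations hk hl g hxy
  have heval : ∀ (m : Fin l) (z : ZMod (p ^ N)), ∑ j, T m j * (momentPoly p g j).eval z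
      = (∑ j, C (T m j) * momentPoly p g j).eval z := fun m z => by simp [eval_finsetSum]
  refine ⟨T, fun m b ρ z hN hz => ?_, fun a ha => ?_⟩
  · rw [heval, heval]
    exact natCast_pow_mul_eval_eq (hT m).1 hN hz
  · choose c g' h using fun m : Fin l => exists_eval_add_pow_mul_eq (p := p) m.2 ha (hT m).2
    refine ⟨g', c, fun m u => ?_⟩
    rw [heval, momentPoly, ← h]
    push_cast
    rfl

end PolynomialJets

section TriangularNumbers

/-- The `k`-th triangular number, half of the critical exponent of the Vinogradov system of
degree `k`. -/
def tri (k : ℕ) : ℕ := (k + 1).choose 2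

lemma tri_succ (k : ℕ) : tri (k + 1) = tri k + (k + 1) := by
  rw [tri, Nat.choose_succ_succ' (k + 1) 1, Nat.choose_one_right, add_comm, tri]

lemma two_mul_tri (k : ℕ) : 2 * tri k = k * (k + 1) := by
  rw [tri, Nat.choose_two_right, Nat.add_sub_cancel, mul_comm (k + 1),
    Nat.mul_div_cancel' (Nat.even_mul_succ_self k).two_dvd]

lemma tri_mono : Monotone tri := fun _ _ h => Nat.choose_le_choose 2 (by omega)

lemma le_tri (k : ℕ) : k ≤ tri k := by
  cases k with
  | zero => simp
  | succ k => rw [tri_succ]; omega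

lemma tri_ne_zero {k : ℕ} (hk : 1 ≤ k) : tri k ≠ 0 :=
  (Nat.lt_of_lt_of_le hk (le_tri k)).ne'

end TriangularNumbers

open Polynomial in
/-- The frequencies `p ^ r m * φ m (u i)`, where `φ = momentPoly p g`. -/
noncomputable def polyFreq (p : ℕ) {N k : ℕ} (r : Fin k → ℕ) (g : Fin k → (ZMod (p ^ N))[X])
    (u : ℤ → ℤ) (i : ℤ) (m : Fin k) : ZMod (p ^ N) :=
  (p : ZMod (p ^ N)) ^ r m * (momentPoly p g m).eval (u i : ZMod (p ^ N))

section ExponentialSums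

open Finset

variable {ι : Type*} {q : ℕ} [NeZero q] {k : ℕ}

/-- The decoupled counterpart of `moment`: the sum of the moments, raised to the power `1 / s`, of
the parts of the exponential sum supported on the fibres of `π`. -/
noncomputable def fiberSum (ψ : ι → Fin k → ZMod q) (a : ι → ℂ) (s : ℕ) {Y : Type*} [Fintype Y]
    [DecidableEq Y] (π : ι → Y) (S : Finset ι) : ℝ :=
  ∑ y, moment ψ a s {i ∈ S | π i = y} ^ (s : ℝ)⁻¹

/-- The moment of order `2 * s` of `oscSum` on `S` with the weight `‖oscSum ψ a S'‖ ^ (2 * t)`. -/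
noncomputable def bilMoment (ψ : ι → Fin k → ZMod q) (a : ι → ℂ) (s : ℕ) (S : Finset ι) (t : ℕ)
    (S' : Finset ι) : ℝ :=
  wMoment (fun α => ‖oscSum ψ a S' α‖ ^ (2 * t)) ψ a s S

variable (ψ : ι → Fin k → ZMod q) (a : ι → ℂ)

lemma fiberSum_nonneg (s : ℕ) {Y : Type*} [Fintype Y] [DecidableEq Y] (π : ι → Y)
    (S : Finset ι) : 0 ≤ fiberSum ψ a s π S :=
  sum_nonneg fun _ _ => Real.rpow_nonneg (moment_nonneg _ _ _ _) _

lemma sum_filter_filter_of_refines {Y Z : Type*} [Fintype Y] [Fintype Z] [DecidableEq Y]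
    [DecidableEq Z] {F : Finset ι → ℝ} (hF : F ∅ = 0) {S : Finset ι} {π : ι → Y} {σ : ι → Z}
    (h : ∀ i ∈ S, ∀ j ∈ S, σ i = σ j → π i = π j) :
    ∑ y, ∑ z, F {i ∈ {i ∈ S | π i = y} | σ i = z} = ∑ z, F {i ∈ S | σ i = z} := by
  rw [sum_comm]
  refine sum_congr rfl fun z _ => ?_
  rcases {i ∈ S | σ i = z}.eq_empty_or_nonempty with hempty | ⟨i, hi⟩
  · simp [filter_comm (fun i => π i = _), hempty, hF]
  · rw [mem_filter] at hi
    rw [Fintype.sum_eq_single (π i) fun y hy => ?_, filter_filter]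
    · refine congrArg F (filter_congr fun j hj => and_iff_right_of_imp fun hjz => ?_)
      exact h j hj i hi.1 (hjz.trans hi.2.symm)
    · rw [filter_filter, filter_false_of_mem, hF]
      rintro j hj ⟨hjy, hjz⟩
      exact hy (hjy ▸ h j hj i hi.1 (hjz.trans hi.2.symm))

variable {S : Finset ι} {Y Z : Type*} [Fintype Y] [DecidableEq Y] [Fintype Z] [DecidableEq Z]
  {π : ι → Y} {σ : ι → Z} {s : ℕ}

lemma moment_empty_rpow_inv (hs : s ≠ 0) : moment ψ a s ∅ ^ (s : ℝ)⁻¹ = 0 := by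
  rw [moment_empty _ _ hs, Real.zero_rpow (inv_ne_zero (Nat.cast_ne_zero.2 hs))]

lemma sum_fiberSum_filter (hs : s ≠ 0) (h : ∀ i ∈ S, ∀ j ∈ S, σ i = σ j → π i = π j) :
    ∑ y, fiberSum ψ a s σ {i ∈ S | π i = y} = fiberSum ψ a s σ S :=
  sum_filter_filter_of_refines (F := fun T => moment ψ a s T ^ (s : ℝ)⁻¹)
    (moment_empty_rpow_inv ψ a hs) h

lemma fiberSum_filter_le {W : Type*} [Finite W] [DecidableEq W] {π : ι → W} (hs : s ≠ 0)
    (h : ∀ i ∈ S, ∀ j ∈ S, σ i = σ j → π i = π j) (y : W) :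
    fiberSum ψ a s σ {i ∈ S | π i = y} ≤ fiberSum ψ a s σ S := by
  cases nonempty_fintype W
  rw [← sum_fiberSum_filter ψ a hs h]
  exact single_le_sum (f := fun y => fiberSum ψ a s σ {i ∈ S | π i = y})
    (fun _ _ => fiberSum_nonneg _ _ _ _ _) (mem_univ y)

lemma fiberSum_congr (hs : s ≠ 0) (h : ∀ i ∈ S, ∀ j ∈ S, σ i = σ j ↔ π i = π j) :
    fiberSum ψ a s π S = fiberSum ψ a s σ S := by
  rw [← sum_fiberSum_filter ψ a hs fun i hi j hj => (h i hi j hj).1,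
    ← sum_fiberSum_filter ψ a hs fun i hi j hj => (h i hi j hj).2]
  simp only [fiberSum]
  rw [sum_comm]
  simp only [filter_comm (fun i => σ i = _)]

lemma norm_sq_oscSum_le (π : ι → Y) (S : Finset ι) (α : Fin k → ZMod q) :
    ‖oscSum ψ a S α‖ ^ 2 ≤ Fintype.card Y * ∑ y, ‖oscSum ψ a {i ∈ S | π i = y} α‖ ^ 2 := by
  rw [← sum_oscSum_filter ψ a π S α]
  exact (pow_le_pow_left₀ (norm_nonneg _) (norm_sum_le _ _) 2).trans sq_sum_le_card_mul_sum_sq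

lemma wMoment_le_card_pow_mul_pow {w : (Fin k → ZMod q) → ℝ} (hw : ∀ α, 0 ≤ w α) (hs : 1 ≤ s)
    (π : ι → Y) (S : Finset ι) :
    wMoment w ψ a s S
      ≤ (Fintype.card Y : ℝ) ^ s * (∑ y, wMoment w ψ a s {i ∈ S | π i = y} ^ (s : ℝ)⁻¹) ^ s := by
  have hs0 : s ≠ 0 := by omega
  calc wMoment w ψ a s S
      ≤ ∑ α, (Fintype.card Y : ℝ) ^ s
          * (w α * (∑ y, ‖oscSum ψ a {i ∈ S | π i = y} α‖ ^ 2) ^ s) := by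
        refine sum_le_sum fun α _ => ?_
        rw [pow_mul, mul_left_comm, ← mul_pow]
        exact mul_le_mul_of_nonneg_left
          (pow_le_pow_left₀ (by positivity) (norm_sq_oscSum_le ψ a π S α) _) (hw α)
    _ ≤ _ := by
        rw [← mul_sum]
        refine mul_le_mul_of_nonneg_left ?_ (by positivity)
        simpa only [wMoment, pow_mul, Real.pow_rpow_inv_natCast (sq_nonneg _) hs0] using
          sum_mul_Lp_sum_le univ hw
            (F := fun y α => ‖oscSum ψ a {i ∈ S | π i = y} α‖ ^ (2 * s))
            (fun _ _ _ => by positivity) hs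

lemma moment_le_card_pow_mul_fiberSum_pow (hs : 1 ≤ s) (π : ι → Y) (S : Finset ι) :
    moment ψ a s S ≤ (Fintype.card Y : ℝ) ^ s * fiberSum ψ a s π S ^ s := by
  simpa only [wMoment_one, fiberSum] using
    wMoment_le_card_pow_mul_pow ψ a (fun _ => zero_le_one) hs π S

lemma bilMoment_nonneg (s : ℕ) (S : Finset ι) (t : ℕ) (S' : Finset ι) :
    0 ≤ bilMoment ψ a s S t S' :=
  wMoment_nonneg ψ a (fun _ => by positivity) s S

lemma bilMoment_comm (s : ℕ) (S : Finset ι) (t : ℕ) (S' : Finset ι) :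
    bilMoment ψ a s S t S' = bilMoment ψ a t S' s S :=
  sum_congr rfl fun _ _ => mul_comm _ _

lemma bilMoment_zero_right (s : ℕ) (S S' : Finset ι) : bilMoment ψ a s S 0 S' = moment ψ a s S := by
  simp only [bilMoment, mul_zero, pow_zero, wMoment_one]

lemma bilMoment_zero_left (S : Finset ι) (t : ℕ) (S' : Finset ι) :
    bilMoment ψ a 0 S t S' = moment ψ a t S' := by
  rw [bilMoment_comm, bilMoment_zero_right]

lemma bilMoment_pow_le {n m s₁ s₂ t t₁ t₂ : ℕ} (hnm : n + m ≠ 0)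
    (hs : s * (n + m) = s₁ * n + s₂ * m) (ht : t * (n + m) = t₁ * n + t₂ * m) (S S' : Finset ι) :
    bilMoment ψ a s S t S' ^ (n + m)
      ≤ bilMoment ψ a s₁ S t₁ S' ^ n * bilMoment ψ a s₂ S t₂ S' ^ m := by
  refine sum_pow_le_sum_pow_mul_sum_pow (fun _ _ => by positivity) (fun _ _ => by positivity)
    (fun _ _ => by positivity) hnm fun α _ => le_of_eq ?_
  calc (‖oscSum ψ a S' α‖ ^ (2 * t) * ‖oscSum ψ a S α‖ ^ (2 * s)) ^ (n + m)
      = ‖oscSum ψ a S' α‖ ^ (2 * (t * (n + m))) * ‖oscSum ψ a S α‖ ^ (2 * (s * (n + m))) := by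
        rw [mul_pow, ← pow_mul, ← pow_mul, mul_assoc, mul_assoc]
    _ = (‖oscSum ψ a S' α‖ ^ (2 * t₁) * ‖oscSum ψ a S α‖ ^ (2 * s₁)) ^ n
          * (‖oscSum ψ a S' α‖ ^ (2 * t₂) * ‖oscSum ψ a S α‖ ^ (2 * s₂)) ^ m := by
        rw [hs, ht]
        ring

end ExponentialSums

section Orthogonality

open Finset

variable {ι : Type*} {q : ℕ} [NeZero q] {k : ℕ}

lemma addChar_map_sum {A M : Type*} [AddCommMonoid A] [CommMonoid M] (χ : AddChar A M)
    (S : Finset ι) (f : ι → A) : χ (∑ i ∈ S, f i) = ∏ i ∈ S, χ (f i) :=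
  map_prod χ.toMonoidHom (fun i => Multiplicative.ofAdd (f i)) S

lemma sum_stdAddChar_dot (v : Fin k → ZMod q) :
    ∑ α : Fin k → ZMod q, ZMod.stdAddChar (∑ m, α m * v m)
      = if v = 0 then (Fintype.card (Fin k → ZMod q) : ℂ) else 0 := by
  split_ifs with h
  · simp [h]
  · obtain ⟨j, hj⟩ := Function.ne_iff.1 h
    simp only [addChar_map_sum]
    rw [← Fintype.piFinset_univ,
      ← prod_univ_sum (fun _ => univ) (fun m x => ZMod.stdAddChar (x * v m))]
    refine prod_eq_zero (mem_univ j) ?_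
    rw [AddChar.sum_mulShift _ (ZMod.isPrimitive_stdAddChar q), if_neg (by simpa using hj),
      Nat.cast_zero]

lemma norm_sq_oscSum_eq (ψ : ι → Fin k → ZMod q) (a : ι → ℂ) (S : Finset ι)
    (α : Fin k → ZMod q) :
    ((‖oscSum ψ a S α‖ ^ 2 : ℝ) : ℂ) = ∑ i ∈ S, ∑ j ∈ S, a i * (starRingEnd ℂ) (a j)
      * ZMod.stdAddChar (∑ m, α m * (ψ i - ψ j) m) := by
  push_cast
  rw [← Complex.mul_conj', oscSum, map_sum, sum_mul_sum]
  refine sum_congr rfl fun i _ => sum_congr rfl fun j _ => ?_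
  simp only [Pi.sub_apply, mul_sub, sum_sub_distrib]
  rw [sub_eq_add_neg, AddChar.map_add_eq_mul, AddChar.map_neg_eq_conj, map_mul]
  ring

lemma moment_one_eq (ψ : ι → Fin k → ZMod q) (a : ι → ℂ) (S : Finset ι) :
    ((moment ψ a 1 S : ℝ) : ℂ) = (Fintype.card (Fin k → ZMod q) : ℂ) *
      ∑ i ∈ S, ∑ j ∈ S, if ψ i = ψ j then a i * (starRingEnd ℂ) (a j) else 0 := by
  simp only [moment, mul_one, Complex.ofReal_sum, norm_sq_oscSum_eq]
  rw [sum_comm, mul_sum]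
  refine sum_congr rfl fun i _ => ?_
  rw [sum_comm, mul_sum]
  refine sum_congr rfl fun j _ => ?_
  rw [← mul_sum, sum_stdAddChar_dot]
  simp only [sub_eq_zero]
  split_ifs <;> ring

lemma moment_one_eq_sum_filter {Y : Type*} [Fintype Y] [DecidableEq Y]
    {ψ : ι → Fin k → ZMod q} {S : Finset ι} {π : ι → Y}
    (h : ∀ i ∈ S, ∀ j ∈ S, ψ i = ψ j → π i = π j) (a : ι → ℂ) :
    moment ψ a 1 S = ∑ y, moment ψ a 1 {i ∈ S | π i = y} := by
  rw [← Complex.ofReal_inj, Complex.ofReal_sum]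
  simp only [moment_one_eq]
  rw [← mul_sum, ← sum_fiberwise S π]
  congr 1
  refine sum_congr rfl fun y _ => sum_congr rfl fun i hi => ?_
  rw [sum_filter]
  refine sum_congr rfl fun j hj => ?_
  rw [mem_filter] at hi
  by_cases hij : ψ i = ψ j
  · rw [if_pos hij, if_pos (by rw [← h i hi.1 j hj hij, hi.2])]
  · simp [hij]

end Orthogonality

section Decoupling

open Finset Polynomial

/-- `fiberSum` for the residue classes of `u` modulo `Q`. -/
noncomputable abbrev classSum {ι : Type*} {q : ℕ} [NeZero q] {k : ℕ} (ψ : ι → Fin k → ZMod q)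
    (a : ι → ℂ) (s Q : ℕ) [NeZero Q] (u : ι → ℤ) (S : Finset ι) : ℝ :=
  fiberSum ψ a s (fun i => (u i : ZMod Q)) S

/-- A decoupling inequality into residue classes modulo `p ^ n`, with constant `D`, for all
perturbed moment curves of degree `k`. -/
def DecBound (p k n : ℕ) [NeZero p] (D : ℝ) : Prop :=
  0 ≤ D ∧ ∀ (N : ℕ) (r : Fin k → ℕ) (g : Fin k → (ZMod (p ^ N))[X]) (u : ℤ → ℤ) (a : ℤ → ℂ)
    (S : Finset ℤ), (∀ m, r m + k * n ≤ N) →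
    moment (polyFreq p r g u) a (tri k) S
      ≤ D * classSum (polyFreq p r g u) a (tri k) (p ^ n) u S ^ tri k

/-- A bilinear decoupling inequality into residue classes modulo `p ^ n`, with constant `M`, for
two sums supported on transverse residue classes modulo `p ^ a` and `p ^ b`. -/
def BilBound (p k n l a b : ℕ) [NeZero p] (M : ℝ) : Prop :=
  0 ≤ M ∧ ∀ (N : ℕ) (r : Fin k → ℕ) (g : Fin k → (ZMod (p ^ N))[X]) (u : ℤ → ℤ) (co : ℤ → ℂ)
    (S S' : Finset ℤ) (ξ η : ℤ), (∀ m, r m + k * n ≤ N) → ¬ ξ ≡ η [ZMOD p] →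
    (∀ i ∈ S, u i ≡ ξ [ZMOD (p : ℤ) ^ a]) → (∀ i ∈ S', u i ≡ η [ZMOD (p : ℤ) ^ b]) →
    bilMoment (polyFreq p r g u) co (tri l) S (tri k - tri l) S'
      ≤ M * (classSum (polyFreq p r g u) co (tri k) (p ^ n) u S ^ tri l
        * classSum (polyFreq p r g u) co (tri k) (p ^ n) u S' ^ (tri k - tri l))

lemma DecBound.mono {p k n : ℕ} [NeZero p] {D D' : ℝ} (h : DecBound p k n D) (hD : D ≤ D') :
    DecBound p k n D' :=
  ⟨h.1.trans hD, fun N r g u a S hr => (h.2 N r g u a S hr).trans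
    (mul_le_mul_of_nonneg_right hD (pow_nonneg (fiberSum_nonneg _ _ _ _ _) _))⟩

lemma BilBound.mono {p k n l a b : ℕ} [NeZero p] {D D' : ℝ} (h : BilBound p k n l a b D)
    (hD : D ≤ D') : BilBound p k n l a b D' :=
  ⟨h.1.trans hD, fun N r g u co S S' ξ η hr hξη hS hS' =>
    (h.2 N r g u co S S' ξ η hr hξη hS hS').trans
      (mul_le_mul_of_nonneg_right hD (mul_nonneg (pow_nonneg (fiberSum_nonneg _ _ _ _ _) _)
        (pow_nonneg (fiberSum_nonneg _ _ _ _ _) _)))⟩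

lemma intCast_zmod_pow_eq_of_le {p m n : ℕ} (hmn : m ≤ n) {x y : ℤ}
    (h : (x : ZMod (p ^ n)) = y) : (x : ZMod (p ^ m)) = y := by
  rw [ZMod.intCast_eq_intCast_iff] at h ⊢
  exact h.of_dvd (by exact_mod_cast pow_dvd_pow p hmn)

lemma decBound_trivial (p n : ℕ) [NeZero p] {k : ℕ} (hk : 1 ≤ k) :
    DecBound p k n (((p : ℝ) ^ n) ^ tri k) := by
  refine ⟨by positivity, fun N r g u a S _ => ?_⟩
  simpa using moment_le_card_pow_mul_fiberSum_pow (polyFreq p r g u) a (hk.trans (le_tri k))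
    (fun i => (u i : ZMod (p ^ n))) S

lemma intCast_eq_zero_of_pow_mul_intCast_eq_zero {p r n N : ℕ} [NeZero p] (hN : r + n ≤ N) {x : ℤ}
    (h : (p : ZMod (p ^ N)) ^ r * (x : ZMod (p ^ N)) = 0) : (x : ZMod (p ^ n)) = 0 := by
  have hdvd : (p : ℤ) ^ N ∣ (p : ℤ) ^ r * x := by
    rw [← Nat.cast_pow, ← ZMod.intCast_zmod_eq_zero_iff_dvd, ← h]
    push_cast
    rfl
  rw [ZMod.intCast_zmod_eq_zero_iff_dvd, Nat.cast_pow]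
  refine Int.dvd_of_mul_dvd_mul_left (pow_ne_zero r (Nat.cast_ne_zero.2 (NeZero.ne p))) ?_
  rw [← pow_add]
  exact (pow_dvd_pow _ hN).trans hdvd

lemma intCast_eq_of_polyFreq_eq {p n N : ℕ} [NeZero p] {r : Fin 1 → ℕ}
    {g : Fin 1 → (ZMod (p ^ N))[X]} {u : ℤ → ℤ} {i j : ℤ} (hN : r 0 + n ≤ N)
    (h : polyFreq p r g u i = polyFreq p r g u j) : (u i : ZMod (p ^ n)) = u j := by
  obtain ⟨z, hz⟩ := sub_dvd_eval_sub (u i : ZMod (p ^ N)) (u j : ZMod (p ^ N)) (g 0)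
  have hfreq := congrFun h 0
  simp only [polyFreq, momentPoly, eval_add, eval_mul, eval_X, eval_C, Fin.val_zero,
    zero_add, pow_one] at hfreq
  have hprod : (p : ZMod (p ^ N)) ^ r 0 * ((u i - u j : ℤ) : ZMod (p ^ N))
      * (1 + (p : ZMod (p ^ N)) * z) = 0 := by
    push_cast
    linear_combination hfreq - (p : ZMod (p ^ N)) ^ r 0 * p * hz
  have hnil : IsNilpotent ((p : ZMod (p ^ N)) * z) :=
    (Commute.all _ _).isNilpotent_mul_right ⟨N, by rw [← Nat.cast_pow, ZMod.natCast_self]⟩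
  rw [hnil.isUnit_one_add.mul_left_eq_zero] at hprod
  rw [← sub_eq_zero, ← Int.cast_sub]
  exact intCast_eq_zero_of_pow_mul_intCast_eq_zero hN hprod

lemma decBound_one (p n : ℕ) [NeZero p] : DecBound p 1 n 1 := by
  refine ⟨zero_le_one, fun N r g u a S hr => ?_⟩
  have htri : tri 1 = 1 := rfl
  rw [htri, classSum, fiberSum, pow_one, one_mul]
  simp only [Nat.cast_one, inv_one, Real.rpow_one]
  refine (moment_one_eq_sum_filter (fun i _ j _ hij => ?_) a).le
  exact intCast_eq_of_polyFreq_eq (by simpa using hr 0) hij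

lemma sum_combination_mul_polyFreq {p k l N ρ : ℕ} {r : Fin k → ℕ} (hρ : ∀ m, r m ≤ ρ)
    (g : Fin k → (ZMod (p ^ N))[X]) (u : ℤ → ℤ) (T : Fin l → Fin k → ZMod (p ^ N))
    (β : Fin l → ZMod (p ^ N)) (i : ℤ) :
    ∑ j, (∑ m, β m * T m j * (p : ZMod (p ^ N)) ^ (ρ - r j)) * polyFreq p r g u i j
      = ∑ m, β m * ((p : ZMod (p ^ N)) ^ ρ
        * ∑ j, T m j * (momentPoly p g j).eval (u i : ZMod (p ^ N))) := by
  simp only [sum_mul, mul_sum]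
  rw [sum_comm]
  refine sum_congr rfl fun m _ => sum_congr rfl fun j _ => ?_
  rw [polyFreq, ← Nat.sub_add_cancel (hρ j), pow_add, Nat.add_sub_cancel]
  ring

lemma eq_add_mul_ediv_of_modEq {x ξ m : ℤ} (h : x ≡ ξ [ZMOD m]) : x = ξ + m * ((x - ξ) / m) := by
  rw [Int.mul_ediv_cancel' h.symm.dvd]
  ring

lemma bilMoment_le_of_decBound {p k l a b c : ℕ} [Fact p.Prime] (hk : k < p) (hl1 : 1 ≤ l)
    (hl : l ≤ k) (ha : 1 ≤ a) (hac : a ≤ c) {D : ℝ} (hD : DecBound p l (c - a) D) {N : ℕ}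
    {r : Fin k → ℕ} (g : Fin k → (ZMod (p ^ N))[X]) {u : ℤ → ℤ} (co : ℤ → ℂ) {S S' : Finset ℤ}
    {ξ η : ℤ} (hξη : l < k → ¬ ξ ≡ η [ZMOD p]) (hS : ∀ i ∈ S, u i ≡ ξ [ZMOD (p : ℤ) ^ a])
    (hS' : ∀ i ∈ S', u i ≡ η [ZMOD (p : ℤ) ^ b]) {ρ : ℕ} (hρ : ∀ m, r m ≤ ρ)
    (hρc : ρ + l * c ≤ N) (hρb : N ≤ ρ + (k - l + 1) * b) (t : ℕ) :
    bilMoment (polyFreq p r g u) co (tri l) S t S'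
      ≤ D * (∑ y : ZMod (p ^ (c - a)), bilMoment (polyFreq p r g u) co (tri l)
          {i ∈ S | (((u i - ξ) / (p : ℤ) ^ a : ℤ) : ZMod (p ^ (c - a))) = y} t S'
            ^ (tri l : ℝ)⁻¹) ^ tri l := by
  obtain ⟨T, hTη, hTξ⟩ := exists_adapted_frequencies hk hl g hξη
  obtain ⟨g', c', hc'⟩ := hTξ a ha
  refine wMoment_le_of_decoupling
    (ψ' := polyFreq p (fun m : Fin l => ρ + a * (m.1 + 1)) g' fun i => (u i - ξ) / (p : ℤ) ^ a)
    (T := fun β j => ∑ m, β m * T m j * (p : ZMod (p ^ N)) ^ (ρ - r j))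
    (c := fun β => ∑ m, β m * ((p : ZMod (p ^ N)) ^ ρ * c' m))
    (fun i hi β => ?_) (fun _ => by positivity) (fun α β => ?_) (hl1.trans (le_tri l)) hD.1
    fun a' => hD.2 N _ g' _ a' S fun m => ?_
  · rw [sum_combination_mul_polyFreq hρ, ← sum_add_distrib]
    refine sum_congr rfl fun m _ => ?_
    have hval := hc' m ((u i - ξ) / (p : ℤ) ^ a)
    rw [← eq_add_mul_ediv_of_modEq (hS i hi)] at hval
    rw [polyFreq, hval, pow_add]
    ring
  · rw [norm_oscSum_add_of_const (c := ∑ m, β m * ((p : ZMod (p ^ N)) ^ ρ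
      * ∑ j, T m j * (momentPoly p g j).eval (η : ZMod (p ^ N)))) fun i hi => ?_]
    rw [sum_combination_mul_polyFreq hρ]
    exact sum_congr rfl fun m _ => congrArg (β m * ·) (hTη m b ρ (u i) hρb (hS' i hi))
  · have hm : a * (m.1 + 1) ≤ a * l := Nat.mul_le_mul_left _ m.2
    have hlc : a * l + l * (c - a) = l * c := by
      rw [mul_comm a l, ← Nat.mul_add, Nat.add_sub_cancel' hac]
    omega

lemma intCast_ediv_pow_eq_iff {p a c : ℕ} (hp : p ≠ 0) (hac : a ≤ c) {x y ξ : ℤ}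
    (hx : x ≡ ξ [ZMOD (p : ℤ) ^ a]) (hy : y ≡ ξ [ZMOD (p : ℤ) ^ a]) :
    (((x - ξ) / (p : ℤ) ^ a : ℤ) : ZMod (p ^ (c - a))) = ((y - ξ) / (p : ℤ) ^ a : ℤ) ↔
      (x : ZMod (p ^ c)) = (y : ZMod (p ^ c)) := by
  have hpa : (p : ℤ) ^ a ≠ 0 := pow_ne_zero _ (Nat.cast_ne_zero.2 hp)
  have hsub : y - x = (p : ℤ) ^ a * ((y - ξ) / (p : ℤ) ^ a - (x - ξ) / (p : ℤ) ^ a) := by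
    linear_combination eq_add_mul_ediv_of_modEq hy - eq_add_mul_ediv_of_modEq hx
  rw [ZMod.intCast_eq_intCast_iff_dvd_sub, ZMod.intCast_eq_intCast_iff_dvd_sub, hsub,
    Nat.cast_pow, Nat.cast_pow, ← Nat.sub_add_cancel hac, Nat.add_sub_cancel, pow_add,
    mul_comm ((p : ℤ) ^ (c - a))]
  exact (mul_dvd_mul_iff_left hpa).symm

lemma moment_le_of_modEq {p k n a : ℕ} [Fact p.Prime] (hk1 : 1 ≤ k) (hk : k < p) (ha : 1 ≤ a)
    (han : a ≤ n) {D : ℝ} (hD : DecBound p k (n - a) D) {N : ℕ} {r : Fin k → ℕ}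
    (g : Fin k → (ZMod (p ^ N))[X]) {u : ℤ → ℤ} (co : ℤ → ℂ) {S : Finset ℤ}
    (hr : ∀ m, r m + k * n ≤ N) {ξ : ℤ} (hS : ∀ i ∈ S, u i ≡ ξ [ZMOD (p : ℤ) ^ a]) :
    moment (polyFreq p r g u) co (tri k) S
      ≤ D * classSum (polyFreq p r g u) co (tri k) (p ^ n) u S ^ tri k := by
  have hN : k * n ≤ N := (Nat.le_add_left _ _).trans (hr ⟨0, hk1⟩)
  have htri : tri k ≠ 0 := tri_ne_zero hk1
  have h := bilMoment_le_of_decBound (S' := ∅) (b := N) (η := 0) (ρ := N - k * n) hk hk1 le_rfl ha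
    han hD g co (fun h => absurd h (lt_irrefl _)) hS (by simp)
    (fun m => Nat.le_sub_of_add_le (hr m)) (by omega) (by rw [Nat.sub_self]; omega) 0
  simp only [bilMoment_zero_right] at h
  rwa [classSum, ← fiberSum_congr _ _ htri fun i hi j hj =>
    (intCast_ediv_pow_eq_iff (Fact.out : p.Prime).ne_zero han (hS i hi) (hS j hj)).symm]

lemma BilBound.bilMoment_le_of_forall_modEq {p k n l c b : ℕ} [NeZero p] {M : ℝ}
    (hM : BilBound p k n l c b M) (hl : 1 ≤ l) {N : ℕ} {r : Fin k → ℕ}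
    (g : Fin k → (ZMod (p ^ N))[X]) {u : ℤ → ℤ} (co : ℤ → ℂ) {S S' : Finset ℤ} {ξ η : ℤ}
    (hr : ∀ m, r m + k * n ≤ N) (hξη : ¬ ξ ≡ η [ZMOD p]) (hSξ : ∀ i ∈ S, u i ≡ ξ [ZMOD p])
    (hS : ∀ i ∈ S, ∀ j ∈ S, u i ≡ u j [ZMOD (p : ℤ) ^ c])
    (hS' : ∀ i ∈ S', u i ≡ η [ZMOD (p : ℤ) ^ b]) :
    bilMoment (polyFreq p r g u) co (tri l) S (tri k - tri l) S'
      ≤ M * classSum (polyFreq p r g u) co (tri k) (p ^ n) u S' ^ (tri k - tri l)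
        * classSum (polyFreq p r g u) co (tri k) (p ^ n) u S ^ tri l := by
  rcases S.eq_empty_or_nonempty with rfl | ⟨i₀, hi₀⟩
  · rw [bilMoment, wMoment_empty _ _ _ (tri_ne_zero hl)]
    exact mul_nonneg (mul_nonneg hM.1 (pow_nonneg (fiberSum_nonneg _ _ _ _ _) _))
      (pow_nonneg (fiberSum_nonneg _ _ _ _ _) _)
  · rw [mul_assoc, mul_comm (_ ^ (tri k - tri l))]
    exact hM.2 N r g u co S S' (u i₀) η hr (fun h => hξη ((hSξ i₀ hi₀).symm.trans h))
      (fun i hi => hS i hi i₀ hi₀) hS'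

lemma BilBound.sum_bilMoment_le {p k n l a b c : ℕ} [Fact p.Prime] (hl1 : 1 ≤ l) (hl : l < k)
    (ha : 1 ≤ a) (hac : a ≤ c) (hcn : c ≤ n) {M : ℝ} (hM : BilBound p k n l c b M) {N : ℕ}
    {r : Fin k → ℕ} (g : Fin k → (ZMod (p ^ N))[X]) {u : ℤ → ℤ} (co : ℤ → ℂ) {S S' : Finset ℤ}
    {ξ η : ℤ} (hr : ∀ m, r m + k * n ≤ N) (hξη : ¬ ξ ≡ η [ZMOD p])
    (hS : ∀ i ∈ S, u i ≡ ξ [ZMOD (p : ℤ) ^ a]) (hS' : ∀ i ∈ S', u i ≡ η [ZMOD (p : ℤ) ^ b]) :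
    (∑ y : ZMod (p ^ (c - a)), bilMoment (polyFreq p r g u) co (tri l)
        {i ∈ S | (((u i - ξ) / (p : ℤ) ^ a : ℤ) : ZMod (p ^ (c - a))) = y} (tri k - tri l) S'
          ^ (tri l : ℝ)⁻¹) ^ tri l
      ≤ M * classSum (polyFreq p r g u) co (tri k) (p ^ n) u S' ^ (tri k - tri l)
        * classSum (polyFreq p r g u) co (tri k) (p ^ n) u S ^ tri l := by
  have hdiv : ∀ i ∈ S, ∀ j ∈ S, (((u i - ξ) / (p : ℤ) ^ a : ℤ) : ZMod (p ^ (c - a)))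
      = ((u j - ξ) / (p : ℤ) ^ a : ℤ) ↔ (u i : ZMod (p ^ c)) = (u j : ZMod (p ^ c)) :=
    fun i hi j hj =>
      intCast_ediv_pow_eq_iff (Fact.out : p.Prime).ne_zero hac (hS i hi) (hS j hj)
  have hfibers := sum_fiberSum_filter (polyFreq p r g u) co (tri_ne_zero (hl1.trans hl.le))
    fun i hi j hj hij => (hdiv i hi j hj).2 (intCast_zmod_pow_eq_of_le hcn hij)
  rw [classSum, classSum, ← hfibers]
  refine sum_rpow_inv_pow_le (fun _ _ => bilMoment_nonneg _ _ _ _ _ _)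
    (fun _ _ => fiberSum_nonneg _ _ _ _ _)
    (mul_nonneg hM.1 (pow_nonneg (fiberSum_nonneg _ _ _ _ _) _)) (tri_ne_zero hl1)
    fun y _ => hM.bilMoment_le_of_forall_modEq hl1 g co hr hξη (fun i hi => ?_)
      (fun i hi j hj => ?_) hS'
  · exact (hS i (mem_of_mem_filter i hi)).of_dvd (dvd_pow_self _ (by omega))
  · rw [mem_filter] at hi hj
    have hij := (hdiv i hi.1 j hj.1).1 (hi.2.trans hj.2.symm)
    rwa [ZMod.intCast_eq_intCast_iff, Nat.cast_pow] at hij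

lemma BilBound.refine_left {p k n l a b c : ℕ} [Fact p.Prime] (hk : k < p) (hl1 : 1 ≤ l)
    (hl : l < k) (ha : 1 ≤ a) (hac : a ≤ c) (hcn : c ≤ n) (hbn : b ≤ n)
    (hcb : l * c ≤ (k - l + 1) * b) {D M : ℝ} (hD : DecBound p l (c - a) D)
    (hM : BilBound p k n l c b M) : BilBound p k n l a b (D * M) := by
  refine ⟨mul_nonneg hD.1 hM.1, fun N r g u co S S' ξ η hr hξη hS hS' => ?_⟩
  have hN : k * n ≤ N := (Nat.le_add_left _ _).trans (hr ⟨0, by omega⟩)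
  have hkb : (k - l + 1) * b ≤ k * n := Nat.mul_le_mul (by omega) hbn
  have hρ : ∀ m, r m ≤ N - (k - l + 1) * b := fun m => by have := hr m; omega
  have hdec := bilMoment_le_of_decBound hk hl1 hl.le ha hac hD g co
    (fun _ => hξη) hS hS' hρ (by omega) (by omega) (tri k - tri l)
  refine hdec.trans ((mul_le_mul_of_nonneg_left (hM.sum_bilMoment_le hl1 hl ha hac hcn g co hr
    hξη hS hS') hD.1).trans_eq ?_)
  ring

lemma tri_add (l m : ℕ) : tri (l + m) = tri l + tri m + l * m := by
  have hlm := two_mul_tri (l + m)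
  have hl := two_mul_tri l
  have hm := two_mul_tri m
  nlinarith

lemma BilBound.holder {p l m n a b : ℕ} [NeZero p] {M M₁ M₂ : ℝ} (hM : 0 ≤ M)
    (h₁ : BilBound p (l + 1 + m) n m b a M₁) (h₂ : BilBound p (l + 1 + m) n l a b M₂)
    (hMM : M₁ * M₂ ^ m ≤ M ^ (1 + m)) : BilBound p (l + 1 + m) n (l + 1) a b M := by
  refine ⟨hM, fun N r g u co S S' ξ η hr hξη hS hS' => ?_⟩
  have hS'S := h₁.2 N r g u co S' S η ξ hr (fun h => hξη h.symm) hS' hS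
  have hSS' := h₂.2 N r g u co S S' ξ η hr hξη hS hS'
  have htri : tri (l + 1 + m) = tri (l + 1) + tri m + (l + 1) * m := tri_add _ _
  have htri' : tri (l + 1) = tri l + (l + 1) := tri_succ l
  rw [show tri (l + 1 + m) - tri m = tri (l + 1) + (l + 1) * m by omega] at hS'S
  rw [show tri (l + 1 + m) - tri l = tri m + (l + 1) * m + (l + 1) by omega] at hSS'
  rw [show tri (l + 1 + m) - tri (l + 1) = tri m + (l + 1) * m by omega]
  set ψ := polyFreq p r g u
  set A := classSum ψ co (tri (l + 1 + m)) (p ^ n) u S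
  set B := classSum ψ co (tri (l + 1 + m)) (p ^ n) u S'
  have hA0 : 0 ≤ A := fiberSum_nonneg _ _ _ _ _
  have hB0 : 0 ≤ B := fiberSum_nonneg _ _ _ _ _
  refine le_of_pow_le_pow_left₀ (n := 1 + m) (by omega)
    (mul_nonneg hM (mul_nonneg (pow_nonneg hA0 _) (pow_nonneg hB0 _))) ?_
  calc bilMoment ψ co (tri (l + 1)) S (tri m + (l + 1) * m) S' ^ (1 + m)
      ≤ bilMoment ψ co (tri (l + 1) + (l + 1) * m) S (tri m) S' ^ 1
          * bilMoment ψ co (tri l) S (tri m + (l + 1) * m + (l + 1)) S' ^ m :=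
        bilMoment_pow_le ψ co (by omega) (by rw [htri']; ring) (by ring) S S'
    _ ≤ (M₁ * (B ^ tri m * A ^ (tri (l + 1) + (l + 1) * m))) ^ 1
          * (M₂ * (A ^ tri l * B ^ (tri m + (l + 1) * m + (l + 1)))) ^ m := by
        rw [bilMoment_comm ψ co (tri (l + 1) + (l + 1) * m)]
        have hM₁ := h₁.1
        have h0 := bilMoment_nonneg ψ co
        gcongr <;> first | exact pow_nonneg (h0 _ _ _ _) _ | apply h0
    _ = M₁ * M₂ ^ m * (A ^ (tri (l + 1)) * B ^ (tri m + (l + 1) * m)) ^ (1 + m) := by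
        rw [htri']
        ring
    _ ≤ M ^ (1 + m) * (A ^ tri (l + 1) * B ^ (tri m + (l + 1) * m)) ^ (1 + m) :=
        mul_le_mul_of_nonneg_right hMM
          (pow_nonneg (mul_nonneg (pow_nonneg hA0 _) (pow_nonneg hB0 _)) _)
    _ = (M * (A ^ tri (l + 1) * B ^ (tri m + (l + 1) * m))) ^ (1 + m) := (mul_pow _ _ _).symm

lemma bilBound_zero {p k n a b : ℕ} [Fact p.Prime] (hk1 : 1 ≤ k) (hk : k < p) (hb : 1 ≤ b)
    (hbn : b ≤ n) {D : ℝ} (hD : DecBound p k (n - b) D) : BilBound p k n 0 a b D := by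
  refine ⟨hD.1, fun N r g u co S S' ξ η hr _ _ hS' => ?_⟩
  have htri : tri 0 = 0 := rfl
  rw [htri, bilMoment_zero_left, pow_zero, one_mul, Nat.sub_zero]
  exact moment_le_of_modEq hk1 hk hb hbn hD g co hr hS'

lemma bilBound_of_decBound {p k n l a b : ℕ} [NeZero p] (hk1 : 1 ≤ k) (hl : l ≤ k) {D : ℝ}
    (hD : DecBound p k n D) : BilBound p k n l a b D := by
  refine ⟨hD.1, fun N r g u co S S' ξ η hr _ _ _ => ?_⟩
  obtain ⟨t, ht⟩ := Nat.exists_eq_add_of_le (tri_mono hl)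
  have hk0 : tri l + t ≠ 0 := ht ▸ tri_ne_zero hk1
  have hS := hD.2 N r g u co S hr
  have hS' := hD.2 N r g u co S' hr
  rw [show tri k - tri l = t by omega]
  set ψ := polyFreq p r g u
  set A := classSum ψ co (tri k) (p ^ n) u S
  set B := classSum ψ co (tri k) (p ^ n) u S'
  have hD0 := hD.1
  have hA0 : 0 ≤ A := fiberSum_nonneg _ _ _ _ _
  have hB0 : 0 ≤ B := fiberSum_nonneg _ _ _ _ _
  refine le_of_pow_le_pow_left₀ hk0 (by positivity) ?_
  calc bilMoment ψ co (tri l) S t S' ^ (tri l + t)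
      ≤ bilMoment ψ co (tri k) S 0 S' ^ tri l * bilMoment ψ co 0 S (tri k) S' ^ t :=
        bilMoment_pow_le ψ co hk0 (by rw [ht]; ring) (by rw [ht]; ring) S S'
    _ ≤ (D * A ^ tri k) ^ tri l * (D * B ^ tri k) ^ t := by
        rw [bilMoment_zero_right, bilMoment_zero_left]
        have h0 := moment_nonneg ψ co (tri k)
        gcongr <;> first | exact pow_nonneg (h0 _) _ | apply h0
    _ = (D * (A ^ tri l * B ^ t)) ^ (tri l + t) := by
        rw [ht]
        ring

end Decoupling

section BroadNarrow

open Finset Polynomial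

lemma BilBound.coarsen_left {p k n l b c : ℕ} [Fact p.Prime] (hk : k < p) (hl1 : 1 ≤ l)
    (hl : l < k) (hc : 1 ≤ c) (hcn : c ≤ n) (hbn : b ≤ n) (hcb : l * c ≤ (k - l + 1) * b) {M : ℝ}
    (hM : BilBound p k n l c b M) : BilBound p k n l 1 b (((p : ℝ) ^ c) ^ tri l * M) := by
  have hp : (1 : ℝ) ≤ p := by exact_mod_cast (Fact.out : p.Prime).one_le
  refine (hM.refine_left hk hl1 hl le_rfl hc hcn hbn hcb (decBound_trivial p _ hl1)).mono
    (mul_le_mul_of_nonneg_right (pow_le_pow_left₀ (by positivity) ?_ _) hM.1)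
  exact pow_le_pow_right₀ hp (Nat.sub_le _ _)

lemma BilBound.coarsen_right {p k n l a b : ℕ} [Fact p.Prime] (hl : l < k) (hbn : b ≤ n) {M : ℝ}
    (hM : BilBound p k n l a b M) :
    BilBound p k n l a 1 (((p : ℝ) ^ b) ^ (tri k - tri l) * M) := by
  refine ⟨mul_nonneg (by positivity) hM.1, fun N r g u co S S' ξ η hr hξη hS hS' => ?_⟩
  have htri : tri l < tri k :=
    Nat.lt_of_lt_of_le (by rw [tri_succ]; omega) (tri_mono (Nat.succ_le_of_lt hl))
  set ψ := polyFreq p r g u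
  have hfiber : ∀ z : ZMod (p ^ b),
      bilMoment ψ co (tri k - tri l) {i ∈ S' | (u i : ZMod (p ^ b)) = z} (tri l) S
        ≤ M * classSum ψ co (tri k) (p ^ n) u S ^ tri l
          * classSum ψ co (tri k) (p ^ n) u {i ∈ S' | (u i : ZMod (p ^ b)) = z}
            ^ (tri k - tri l) := fun z => by
    rcases {i ∈ S' | (u i : ZMod (p ^ b)) = z}.eq_empty_or_nonempty with hempty | ⟨j, hj⟩
    · rw [hempty, bilMoment, wMoment_empty _ _ _ (by omega)]
      exact mul_nonneg (mul_nonneg hM.1 (pow_nonneg (fiberSum_nonneg _ _ _ _ _) _))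
        (pow_nonneg (fiberSum_nonneg _ _ _ _ _) _)
    · rw [mem_filter] at hj
      have hjη : u j ≡ η [ZMOD p] := by simpa using hS' j hj.1
      rw [mul_assoc, bilMoment_comm]
      refine hM.2 N r g u co S _ ξ (u j) hr (fun h => hξη (h.trans hjη)) hS fun i hi => ?_
      have hij := (mem_filter.1 hi).2.trans hj.2.symm
      rwa [ZMod.intCast_eq_intCast_iff, Nat.cast_pow] at hij
  have hsum := sum_rpow_inv_pow_le (I := univ) (fun z _ => bilMoment_nonneg _ _ _ _ _ _)
    (fun _ _ => fiberSum_nonneg _ _ _ _ _)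
    (mul_nonneg hM.1 (pow_nonneg (fiberSum_nonneg _ _ _ _ _) _)) (by omega) fun z _ => hfiber z
  rw [sum_fiberSum_filter ψ co (by omega) fun i _ j _ => intCast_zmod_pow_eq_of_le hbn] at hsum
  have hsplit := wMoment_le_card_pow_mul_pow ψ co (w := fun α => ‖oscSum ψ co S α‖ ^ (2 * tri l))
    (fun _ => by positivity) (s := tri k - tri l) (by omega) (fun i => (u i : ZMod (p ^ b))) S'
  rw [ZMod.card, Nat.cast_pow] at hsplit
  rw [bilMoment_comm]
  refine hsplit.trans ((mul_le_mul_of_nonneg_left hsum (by positivity)).trans_eq ?_)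
  ring

lemma exists_narrow_or_broad {Y : Type*} [Fintype Y] [Nonempty Y] {x : Y → ℝ}
    (hx : ∀ y, 0 ≤ x y) {τ : ℝ} (hτ : 0 ≤ τ) :
    ∃ y, ∑ y, x y ≤ (1 + τ) * x y ∨
      ∃ z, z ≠ y ∧ ∑ y, x y ≤ Fintype.card Y * x y ∧ τ * x y ≤ Fintype.card Y * x z := by
  classical
  obtain ⟨y, -, hy⟩ := exists_max_image univ x univ_nonempty
  refine ⟨y, or_iff_not_imp_right.2 fun hbroad => ?_⟩
  have hsum : ∑ y, x y ≤ Fintype.card Y * x y := by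
    simpa using sum_le_card_nsmul univ x (x y) hy
  have hcard : (0 : ℝ) < Fintype.card Y := by exact_mod_cast Fintype.card_pos
  have hrest : ∑ z ∈ univ.erase y, x z ≤ τ * x y := by
    refine le_of_mul_le_mul_left ?_ hcard
    calc Fintype.card Y * ∑ z ∈ univ.erase y, x z
        ≤ ∑ _z ∈ univ.erase y, τ * x y := by
          rw [mul_sum]
          refine sum_le_sum fun z hz => ?_
          by_contra! hz'
          exact hbroad ⟨z, ne_of_mem_erase hz, hsum, hz'.le⟩
      _ ≤ ∑ _z : Y, τ * x y :=
          sum_le_sum_of_subset_of_nonneg (erase_subset y _) fun _ _ _ => mul_nonneg hτ (hx y)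
      _ = Fintype.card Y * (τ * x y) := by simp
  rw [← add_sum_erase univ x (mem_univ y)]
  linarith

lemma pow_sum_le_narrow_add_broad {Y : Type*} [Fintype Y] [DecidableEq Y] [Nonempty Y] {x : Y → ℝ}
    (hx : ∀ y, 0 ≤ x y) {τ : ℝ} (hτ : 0 < τ) (T T' : ℕ) :
    (∑ y, x y) ^ (T + T') ≤ (1 + τ) ^ (T + T') * ∑ y, x y ^ (T + T')
      + (Fintype.card Y : ℝ) ^ (T + T') * (Fintype.card Y / τ) ^ T'
        * ∑ y, ∑ z ∈ univ.erase y, x y ^ T * x z ^ T' := by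
  have hsum0 : 0 ≤ ∑ y, x y := sum_nonneg fun y _ => hx y
  have hprod0 : ∀ y z, 0 ≤ x y ^ T * x z ^ T' := fun y z =>
    mul_nonneg (pow_nonneg (hx y) _) (pow_nonneg (hx z) _)
  obtain ⟨y, hnarrow | ⟨z, hzy, hy, hz⟩⟩ := exists_narrow_or_broad hx hτ.le
  · refine le_add_of_le_of_nonneg ?_ (mul_nonneg (by positivity)
      (sum_nonneg fun y _ => sum_nonneg fun z _ => hprod0 y z))
    calc (∑ y, x y) ^ (T + T') ≤ ((1 + τ) * x y) ^ (T + T') := pow_le_pow_left₀ hsum0 hnarrow _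
      _ = (1 + τ) ^ (T + T') * x y ^ (T + T') := mul_pow _ _ _
      _ ≤ (1 + τ) ^ (T + T') * ∑ y, x y ^ (T + T') := by
          gcongr
          exact single_le_sum (f := fun y => x y ^ (T + T')) (fun y _ => pow_nonneg (hx y) _)
            (mem_univ y)
  · refine le_add_of_nonneg_of_le
      (mul_nonneg (by positivity) (sum_nonneg fun y _ => pow_nonneg (hx y) _)) ?_
    have hyz : x y ≤ Fintype.card Y / τ * x z := by
      rw [div_mul_eq_mul_div, le_div_iff₀ hτ]
      linarith
    calc (∑ y, x y) ^ (T + T') ≤ (Fintype.card Y * x y) ^ (T + T') :=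
          pow_le_pow_left₀ hsum0 hy _
      _ = (Fintype.card Y : ℝ) ^ (T + T') * (x y ^ T * x y ^ T') := by
          rw [mul_pow, pow_add (x y)]
      _ ≤ (Fintype.card Y : ℝ) ^ (T + T') * (x y ^ T * (Fintype.card Y / τ * x z) ^ T') := by
          have := hx y
          gcongr
      _ = (Fintype.card Y : ℝ) ^ (T + T') * (Fintype.card Y / τ) ^ T' * (x y ^ T * x z ^ T') := by
          ring
      _ ≤ _ := by
          refine mul_le_mul_of_nonneg_left ?_ (by positivity)
          refine (single_le_sum (fun z _ => hprod0 y z)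
            (mem_erase.2 ⟨hzy, mem_univ z⟩)).trans ?_
          exact single_le_sum (f := fun y => ∑ z ∈ univ.erase y, x y ^ T * x z ^ T')
            (fun y _ => sum_nonneg fun z _ => hprod0 y z) (mem_univ y)

lemma moment_le_narrow_add_broad {ι : Type*} {q : ℕ} [NeZero q] {k : ℕ} (ψ : ι → Fin k → ZMod q)
    (a : ι → ℂ) {Y : Type*} [Fintype Y] [DecidableEq Y] [Nonempty Y] (π : ι → Y) {τ : ℝ}
    (hτ : 0 < τ) (s t : ℕ) (S : Finset ι) :
    moment ψ a (s + t) S ≤ (1 + τ) ^ (2 * (s + t)) * ∑ y, moment ψ a (s + t) {i ∈ S | π i = y}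
      + (Fintype.card Y : ℝ) ^ (2 * (s + t)) * (Fintype.card Y / τ) ^ (2 * t)
        * ∑ y, ∑ z ∈ univ.erase y,
            bilMoment ψ a s {i ∈ S | π i = y} t {i ∈ S | π i = z} := by
  have hpointwise : ∀ α, ‖oscSum ψ a S α‖ ^ (2 * (s + t))
      ≤ (1 + τ) ^ (2 * (s + t)) * ∑ y, ‖oscSum ψ a {i ∈ S | π i = y} α‖ ^ (2 * (s + t))
        + (Fintype.card Y : ℝ) ^ (2 * (s + t)) * (Fintype.card Y / τ) ^ (2 * t)
          * ∑ y, ∑ z ∈ univ.erase y, ‖oscSum ψ a {i ∈ S | π i = y} α‖ ^ (2 * s)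
            * ‖oscSum ψ a {i ∈ S | π i = z} α‖ ^ (2 * t) := fun α => by
    have h := pow_sum_le_narrow_add_broad (x := fun y => ‖oscSum ψ a {i ∈ S | π i = y} α‖)
      (fun _ => norm_nonneg _) hτ (2 * s) (2 * t)
    rw [← mul_add] at h
    refine le_trans ?_ h
    rw [← sum_oscSum_filter ψ a π S α]
    exact pow_le_pow_left₀ (norm_nonneg _) (norm_sum_le _ _) _
  refine (sum_le_sum fun α _ => hpointwise α).trans_eq ?_
  rw [sum_add_distrib, ← mul_sum, ← mul_sum, sum_comm]
  congr 2
  rw [sum_comm]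
  refine sum_congr rfl fun y _ => ?_
  rw [sum_comm]
  exact sum_congr rfl fun z _ => sum_congr rfl fun α _ => mul_comm _ _

lemma modEq_val_of_intCast_eq {p : ℕ} [NeZero p] {x : ℤ} {y : ZMod p} (h : (x : ZMod p) = y) :
    x ≡ y.val [ZMOD p] := by
  rw [← ZMod.intCast_eq_intCast_iff, Int.cast_natCast, ZMod.natCast_zmod_val, h]

lemma intCast_zmod_eq_of_pow_succ {p n : ℕ} {x y : ℤ} (h : (x : ZMod (p ^ (n + 1))) = y) :
    (x : ZMod p) = y := by
  rw [ZMod.intCast_eq_intCast_iff] at h ⊢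
  exact h.of_dvd (by exact_mod_cast dvd_pow_self p n.succ_ne_zero)

lemma DecBound.sum_moment_le {p k n : ℕ} [Fact p.Prime] (hk1 : 1 ≤ k) (hk : k < p) {D : ℝ}
    (hD : DecBound p k n D) {N : ℕ} {r : Fin k → ℕ} (g : Fin k → (ZMod (p ^ N))[X]) (u : ℤ → ℤ)
    (co : ℤ → ℂ) (S : Finset ℤ) (hr : ∀ m, r m + k * (n + 1) ≤ N) :
    ∑ y, moment (polyFreq p r g u) co (tri k) {i ∈ S | (u i : ZMod p) = y}
      ≤ D * classSum (polyFreq p r g u) co (tri k) (p ^ (n + 1)) u S ^ tri k := by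
  set A : ZMod p → ℝ := fun y =>
    classSum (polyFreq p r g u) co (tri k) (p ^ (n + 1)) u {i ∈ S | (u i : ZMod p) = y}
  have hA0 : ∀ y, 0 ≤ A y := fun y => fiberSum_nonneg _ _ _ _ _
  calc _ ≤ ∑ y, D * A y ^ tri k := sum_le_sum fun y _ =>
        moment_le_of_modEq hk1 hk le_rfl (by omega) (by simpa using hD) g co hr (ξ := y.val)
          fun i hi => by simpa using modEq_val_of_intCast_eq (mem_filter.1 hi).2
    _ ≤ D * (∑ y, A y) ^ tri k := by
        rw [← mul_sum]
        exact mul_le_mul_of_nonneg_left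
          (sum_pow_le_pow_sum (fun y _ => hA0 y) (tri_ne_zero hk1)) hD.1
    _ = _ := by
        rw [sum_fiberSum_filter _ _ (tri_ne_zero hk1) fun i _ j _ => intCast_zmod_eq_of_pow_succ]

lemma BilBound.bilMoment_le_of_ne {p k n l : ℕ} [NeZero p] (hk1 : 1 ≤ k) (hl : l ≤ k) {M : ℝ}
    (hM : BilBound p k (n + 1) l 1 1 M) {N : ℕ} {r : Fin k → ℕ} (g : Fin k → (ZMod (p ^ N))[X])
    (u : ℤ → ℤ) (co : ℤ → ℂ) (S : Finset ℤ) (hr : ∀ m, r m + k * (n + 1) ≤ N) {y z : ZMod p}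
    (hyz : y ≠ z) :
    bilMoment (polyFreq p r g u) co (tri l) {i ∈ S | (u i : ZMod p) = y} (tri k - tri l)
        {i ∈ S | (u i : ZMod p) = z}
      ≤ M * classSum (polyFreq p r g u) co (tri k) (p ^ (n + 1)) u S ^ tri k := by
  have hsupp : ∀ y, ∀ i ∈ {i ∈ S | (u i : ZMod p) = y}, u i ≡ (y.val : ℤ) [ZMOD (p : ℤ) ^ 1] :=
    fun y i hi => by simpa using modEq_val_of_intCast_eq (mem_filter.1 hi).2
  have hle : ∀ y, classSum (polyFreq p r g u) co (tri k) (p ^ (n + 1)) u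
      {i ∈ S | (u i : ZMod p) = y} ≤ classSum (polyFreq p r g u) co (tri k) (p ^ (n + 1)) u S :=
    fiberSum_filter_le _ _ (tri_ne_zero hk1) fun i _ j _ => intCast_zmod_eq_of_pow_succ
  refine (hM.2 N r g u co _ _ y.val z.val hr (fun h => hyz ?_) (hsupp y) (hsupp z)).trans
    (mul_le_mul_of_nonneg_left ?_ hM.1)
  · simpa using (ZMod.intCast_eq_intCast_iff _ _ _).2 h
  · rw [← pow_mul_pow_sub _ (tri_mono hl)]
    exact mul_le_mul (pow_le_pow_left₀ (fiberSum_nonneg _ _ _ _ _) (hle y) _)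
      (pow_le_pow_left₀ (fiberSum_nonneg _ _ _ _ _) (hle z) _)
      (pow_nonneg (fiberSum_nonneg _ _ _ _ _) _) (pow_nonneg (fiberSum_nonneg _ _ _ _ _) _)

lemma DecBound.succ {p k n l : ℕ} [Fact p.Prime] (hk : k < p) (hl : l ≤ k) (hk1 : 1 ≤ k)
    {D M τ : ℝ} (hτ : 0 < τ) (hD : DecBound p k n D) (hM : BilBound p k (n + 1) l 1 1 M) :
    DecBound p k (n + 1) ((1 + τ) ^ (2 * tri k) * D
      + (p : ℝ) ^ (2 * tri k) * (p / τ) ^ (2 * (tri k - tri l)) * p ^ 2 * M) := by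
  refine ⟨add_nonneg (mul_nonneg (by positivity) hD.1) (mul_nonneg (by positivity) hM.1),
    fun N r g u co S hr => ?_⟩
  have hnarrow := hD.sum_moment_le hk1 hk g u co S hr
  have hsplit := moment_le_narrow_add_broad (polyFreq p r g u) co (fun i => (u i : ZMod p)) hτ
    (tri l) (tri k - tri l) S
  rw [Nat.add_sub_of_le (tri_mono hl), ZMod.card] at hsplit
  set Q := classSum (polyFreq p r g u) co (tri k) (p ^ (n + 1)) u S
  have hbroad : ∑ y : ZMod p, ∑ z ∈ univ.erase y,
      bilMoment (polyFreq p r g u) co (tri l) {i ∈ S | (u i : ZMod p) = y} (tri k - tri l)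
        {i ∈ S | (u i : ZMod p) = z} ≤ p ^ 2 * (M * Q ^ tri k) := by
    have hQ0 : 0 ≤ M * Q ^ tri k := mul_nonneg hM.1 (pow_nonneg (fiberSum_nonneg _ _ _ _ _) _)
    calc _ ≤ ∑ y : ZMod p, ∑ _z ∈ univ.erase y, M * Q ^ tri k :=
          sum_le_sum fun y _ => sum_le_sum fun z hz =>
            hM.bilMoment_le_of_ne hk1 hl g u co S hr (ne_of_mem_erase hz).symm
      _ ≤ ∑ _y : ZMod p, ∑ _z : ZMod p, M * Q ^ tri k := sum_le_sum fun y _ =>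
          sum_le_sum_of_subset_of_nonneg (erase_subset y _) fun _ _ _ => hQ0
      _ = p ^ 2 * (M * Q ^ tri k) := by
          simp only [sum_const, card_univ, ZMod.card, nsmul_eq_mul]
          ring
  refine hsplit.trans ((add_le_add (mul_le_mul_of_nonneg_left hnarrow (by positivity))
    (mul_le_mul_of_nonneg_left hbroad (by positivity))).trans_eq ?_)
  ring

end BroadNarrow

section BilinearGain

open Finset

/-- The decoupling constants for residue classes modulo `p ^ n` are `O(p ^ (η * n))`. -/
def DecExponent (p k : ℕ) [NeZero p] (η : ℝ) : Prop :=
  ∃ C : ℝ, 1 ≤ C ∧ ∀ n : ℕ, DecBound p k n (C * (p : ℝ) ^ (η * n))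

/-- Bilinear decoupling estimates with a gain of `p ^ (y l * b)` over the exponent `η`, at the
scales `c = (k - l + 1) * b / l` balancing the two sums. The divisibility of `b` keeps the scales
reached by `r` further steps integral. -/
def BilGain (p k : ℕ) [NeZero p] (η : ℝ) (r : ℕ) (y : ℕ → ℝ) (C : ℝ) : Prop :=
  ∀ n b l c : ℕ, 1 ≤ b → k.factorial ^ r ∣ b → k ^ r * b ≤ n → 1 ≤ l → l < k →
    l * c = (k - l + 1) * b → BilBound p k n l c b (C * (p : ℝ) ^ (η * n - y l * b))

lemma DecExponent.mono {p k : ℕ} [NeZero p] {η η' : ℝ} (h : DecExponent p k η) (hle : η ≤ η') :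
    DecExponent p k η' := by
  obtain ⟨C, hC, h⟩ := h
  have hp : (1 : ℝ) ≤ p := by exact_mod_cast NeZero.one_le
  refine ⟨C, hC, fun n => (h n).mono ?_⟩
  gcongr

lemma le_mul_of_mul_le {k l b c : ℕ} (hl : 1 ≤ l) (hlk : l ≤ k) (h : l * c ≤ (k - l + 1) * b) :
    c ≤ k * b :=
  calc c ≤ l * c := Nat.le_mul_of_pos_left _ hl
    _ ≤ (k - l + 1) * b := h
    _ ≤ k * b := Nat.mul_le_mul_right _ (by omega)

lemma factorial_pow_dvd_of_mul_eq {k l m b c r : ℕ} (hl1 : 1 ≤ l) (hl : l ≤ k)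
    (h : l * c = m * b) (hb : k.factorial ^ (r + 1) ∣ b) : k.factorial ^ r ∣ c := by
  refine Nat.dvd_of_mul_dvd_mul_left hl1 ?_
  calc l * k.factorial ^ r ∣ k.factorial * k.factorial ^ r :=
        mul_dvd_mul_right (Nat.dvd_factorial hl1 hl) _
    _ = k.factorial ^ (r + 1) := (pow_succ' _ _).symm
    _ ∣ l * c := h ▸ hb.mul_left m

lemma exists_mul_eq_mul_of_factorial_pow_dvd {k l b r : ℕ} (hr : r ≠ 0) (hl1 : 1 ≤ l) (hl : l ≤ k)
    (hb : k.factorial ^ r ∣ b) (m : ℕ) : ∃ c, l * c = m * b := by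
  obtain ⟨e, rfl⟩ := ((Nat.dvd_factorial hl1 hl).trans (dvd_pow_self _ hr)).trans hb
  exact ⟨m * e, mul_left_comm l m e⟩

lemma mul_rpow_mul_pow_eq {x e₁ e₂ e : ℝ} (hx : 0 < x) (A : ℝ) {m : ℕ}
    (h : e₁ + e₂ * m = e * (1 + m : ℕ)) :
    A * x ^ e₁ * (A * x ^ e₂) ^ m = (A * x ^ e) ^ (1 + m) := by
  rw [mul_pow, mul_pow, ← Real.rpow_mul_natCast hx.le, ← Real.rpow_mul_natCast hx.le, ← h,
    Real.rpow_add hx, pow_add]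
  ring

lemma BilGain.mono {p k r : ℕ} [NeZero p] {η C C' : ℝ} {y : ℕ → ℝ} (h : BilGain p k η r y C)
    (hC : C ≤ C') : BilGain p k η r y C' :=
  fun n b l c h1 h2 h3 h4 h5 h6 => (h n b l c h1 h2 h3 h4 h5 h6).mono (by gcongr)

lemma bilGain_zero {p k : ℕ} [NeZero p] {η C : ℝ} {y : ℕ → ℝ} (r : ℕ) (hy : ∀ l, y (l + 1) = 0)
    (h : ∀ n : ℕ, DecBound p k n (C * (p : ℝ) ^ (η * n))) : BilGain p k η r y C := by
  intro n b l c _ _ _ hl1 hl _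
  rw [← Nat.sub_add_cancel hl1, hy, zero_mul, sub_zero, Nat.sub_add_cancel hl1]
  exact bilBound_of_decBound (hl1.trans hl.le) hl.le (h n)

lemma BilGain.refine_left {p k r : ℕ} [Fact p.Prime] (hk : k < p) {η ε K : ℝ} (hε : 0 ≤ ε)
    (hr : r ≠ 0) (hK : 1 ≤ K) (hη : ∀ n : ℕ, DecBound p k n (K * (p : ℝ) ^ (η * n)))
    (hlow : ∀ l, 1 ≤ l → l < k → ∀ n : ℕ, DecBound p l n (K * (p : ℝ) ^ (ε * n))) {y : ℕ → ℝ}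
    (hy0 : y 0 = η) (h : BilGain p k η r y K) {n a b l B : ℕ} (ha : 1 ≤ a) (hb : 1 ≤ b)
    (hbr : k.factorial ^ r ∣ b) (hbn : k ^ r * b ≤ n) (hl : l < k)
    (hab : l * a ≤ (k - l + 1) * b) (hB : k * b ≤ B) :
    BilBound p k n l a b (K ^ 2 * (p : ℝ) ^ (ε * B + (η * n - y l * b))) := by
  have hp1 : (1 : ℝ) ≤ p := by exact_mod_cast (Fact.out : p.Prime).one_le
  have hp0 : (0 : ℝ) < p := by linarith
  have hkb : k * b ≤ n := (Nat.mul_le_mul_right _ (Nat.le_self_pow hr k)).trans hbn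
  have hbn' : b ≤ n := (Nat.le_mul_of_pos_left _ (by omega)).trans hkb
  rcases Nat.eq_zero_or_pos l with rfl | hl1
  · refine (bilBound_zero (by omega) hk hb hbn' (hη (n - b))).mono ?_
    have hexp : η * ((n - b : ℕ) : ℝ) ≤ ε * B + (η * n - y 0 * b) := by
      rw [hy0, Nat.cast_sub hbn', mul_sub]
      exact le_add_of_nonneg_left (by positivity)
    have hK2 : K ≤ K ^ 2 := le_self_pow₀ hK two_ne_zero
    gcongr
  · obtain ⟨c, hc⟩ := exists_mul_eq_mul_of_factorial_pow_dvd hr hl1 hl.le hbr (k - l + 1)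
    have hcb : c ≤ k * b := le_mul_of_mul_le hl1 hl.le hc.le
    refine ((h n b l c hb hbr hbn hl1 hl hc).refine_left hk hl1 hl ha
      (Nat.le_of_mul_le_mul_left (hab.trans hc.ge) hl1) (hcb.trans hkb) hbn' hc.le
      (hlow l hl1 hl (c - a))).mono ?_
    have hcB : ((c - a : ℕ) : ℝ) ≤ B := by exact_mod_cast (Nat.sub_le _ _).trans (hcb.trans hB)
    calc K * (p : ℝ) ^ (ε * ((c - a : ℕ) : ℝ)) * (K * (p : ℝ) ^ (η * n - y l * b))
        ≤ K * (p : ℝ) ^ (ε * B) * (K * (p : ℝ) ^ (η * n - y l * b)) := by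
          gcongr
      _ = _ := by rw [Real.rpow_add hp0]; ring

lemma BilGain.succ {p k r : ℕ} [Fact p.Prime] (hk : k < p) {η ε K : ℝ} (hε : 0 ≤ ε)
    (hr : r ≠ 0) (hK : 1 ≤ K) (hη : ∀ n : ℕ, DecBound p k n (K * (p : ℝ) ^ (η * n)))
    (hlow : ∀ l, 1 ≤ l → l < k → ∀ n : ℕ, DecBound p l n (K * (p : ℝ) ^ (ε * n))) {y y' : ℕ → ℝ}
    (hy0 : y 0 = η) (h : BilGain p k η r y K)
    (hy' : ∀ l m : ℕ, l + 1 + m = k →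
      y' (l + 1) = y m / (l + 1) + m / (m + 1) * y l - ε * k ^ 2) :
    BilGain p k η (r + 1) y' (K ^ 2) := by
  intro n b l' c hb hbr hbn hl1 hl hlc
  have hp0 : (0 : ℝ) < p := by exact_mod_cast (Fact.out : p.Prime).pos
  obtain ⟨l, rfl⟩ : ∃ l, l' = l + 1 := ⟨l' - 1, by omega⟩
  obtain ⟨m, hm⟩ := Nat.exists_eq_add_of_le hl.le
  have hm1 : k - (l + 1) = m := by omega
  rw [hm1] at hlc
  have hcb : c ≤ k * b := le_mul_of_mul_le hl1 hl.le (hm1 ▸ hlc.le)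
  have hbkb : b ≤ k * b := Nat.le_mul_of_pos_left _ (by omega)
  have hkb : k ^ r * (k * b) ≤ n := by rwa [← mul_assoc, ← pow_succ]
  have hc : 1 ≤ c := Nat.pos_of_ne_zero fun h0 => by
    rw [h0, mul_zero] at hlc
    exact (Nat.mul_pos m.succ_pos hb).ne hlc
  have hB : k * (k * b) ≤ k ^ 2 * b := by rw [sq, mul_assoc]
  have hmb : BilBound p k n m b c
      (K ^ 2 * (p : ℝ) ^ (ε * (k ^ 2 * b : ℕ) + (η * n - y m * c))) :=
    h.refine_left hk hε hr hK hη hlow hy0 hb hc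
      (factorial_pow_dvd_of_mul_eq hl1 hl.le hlc hbr)
      ((Nat.mul_le_mul_left _ hcb).trans hkb) (by omega)
      (by rw [show k - m + 1 = l + 1 + 1 by omega]; nlinarith)
      ((Nat.mul_le_mul_left k hcb).trans hB)
  have hlb : BilBound p k n l c b
      (K ^ 2 * (p : ℝ) ^ (ε * (k ^ 2 * b : ℕ) + (η * n - y l * b))) :=
    h.refine_left hk hε hr hK hη hlow hy0 hc hb
      ((pow_dvd_pow _ r.le_succ).trans hbr)
      ((Nat.mul_le_mul_left _ hbkb).trans hkb) (by omega)
      (by rw [show k - l + 1 = m + 1 + 1 by omega]; nlinarith)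
      ((Nat.mul_le_mul_left k hbkb).trans hB)
  have hcR : (c : ℝ) = (m + 1) * b / (l + 1 : ℝ) := by
    rw [eq_div_iff (by positivity), mul_comm]
    exact_mod_cast hlc
  have hyl := hy' l m hm.symm
  subst hm
  refine BilBound.holder (by positivity) hmb hlb (mul_rpow_mul_pow_eq hp0 _ ?_).le
  rw [hyl, hcR]
  push_cast
  field_simp
  ring

/-- The gain in the bilinear estimates after `r` steps of the iteration, each step losing `δ`. The
entry `0` stands for the linear decoupling estimate of exponent `η`. -/
noncomputable def bilinearGain (k : ℕ) (η δ : ℝ) : ℕ → ℕ → ℝ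
  | _, 0 => η
  | 0, _ + 1 => 0
  | r + 1, l + 1 => bilinearGain k η δ r (k - (l + 1)) / (l + 1)
      + (k - (l + 1) : ℕ) / ((k - (l + 1) : ℕ) + 1) * bilinearGain k η δ r l - δ

lemma bilinearGain_zero_right (k : ℕ) (η δ : ℝ) (r : ℕ) : bilinearGain k η δ r 0 = η := by
  cases r <;> rfl

lemma sum_antidiagonal_gain (y : ℕ → ℝ) (N : ℕ) :
    ∑ x ∈ antidiagonal N, (y (x.2 + 1) / (x.1 + 1) + (x.2 + 1) / (x.2 + 1 + 1) * y x.1)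
      = ∑ x ∈ antidiagonal N, y (x.1 + 1) + (N + 1) / (N + 1 + 1) * y 0 := by
  have hshift : ∑ x ∈ antidiagonal N, ((x.2 + 1) / (x.2 + 1 + 1) * y x.1 : ℝ)
      = (N + 1) / (N + 1 + 1) * y 0 + ∑ x ∈ antidiagonal N, x.2 / (x.2 + 1) * y (x.1 + 1) := by
    have h := Nat.sum_antidiagonal_succ' (n := N)
      (f := fun x => (x.2 : ℝ) / (x.2 + 1) * y x.1)
    rw [Nat.sum_antidiagonal_succ] at h
    simpa using h.symm
  rw [sum_add_distrib, hshift, ← Nat.sum_antidiagonal_swap, add_left_comm, ← sum_add_distrib,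
    add_comm]
  congr 1
  refine sum_congr rfl fun x _ => ?_
  simp only [Prod.fst_swap, Prod.snd_swap]
  field_simp
  ring

lemma sum_bilinearGain (N : ℕ) (η δ : ℝ) (r : ℕ) :
    ∑ x ∈ antidiagonal N, bilinearGain (N + 2) η δ r (x.1 + 1)
      = r * ((N + 1) * (η / (N + 2) - δ)) := by
  induction r with
  | zero => simp [bilinearGain]
  | succ r ih =>
    have hstep : ∀ x ∈ antidiagonal N, bilinearGain (N + 2) η δ (r + 1) (x.1 + 1)
        = bilinearGain (N + 2) η δ r (x.2 + 1) / (x.1 + 1)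
          + (x.2 + 1) / (x.2 + 1 + 1) * bilinearGain (N + 2) η δ r x.1 - δ := fun x hx => by
      have hsub : N + 2 - (x.1 + 1) = x.2 + 1 := by have := mem_antidiagonal.1 hx; omega
      rw [bilinearGain, hsub]
      push_cast
      rfl
    rw [sum_congr rfl hstep, sum_sub_distrib, sum_antidiagonal_gain, ih, sum_const,
      Nat.card_antidiagonal, bilinearGain_zero_right, nsmul_eq_mul]
    push_cast
    field_simp
    ring

lemma exists_le_bilinearGain {k r : ℕ} (hk : 2 ≤ k) {η δ Λ : ℝ} (hΛ : Λ ≤ r * (η / k - δ)) :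
    ∃ l, 1 ≤ l ∧ l < k ∧ Λ ≤ bilinearGain k η δ r l := by
  obtain ⟨N, rfl⟩ := Nat.exists_eq_add_of_le' hk
  have hsum : ∑ _x ∈ antidiagonal N, Λ
      ≤ ∑ x ∈ antidiagonal N, bilinearGain (N + 2) η δ r (x.1 + 1) := by
    rw [sum_bilinearGain, sum_const, Nat.card_antidiagonal, nsmul_eq_mul, mul_left_comm]
    push_cast at hΛ ⊢
    gcongr
  obtain ⟨x, hx, hle⟩ := exists_le_of_sum_le ⟨(0, N), by simp⟩ hsum
  have := mem_antidiagonal.1 hx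
  exact ⟨x.1 + 1, by omega, by omega, hle⟩

lemma exists_bilGain {p k : ℕ} [Fact p.Prime] (hk : k < p) {η ε : ℝ} (hε : 0 ≤ ε)
    (hη : DecExponent p k η) (hlow : ∀ l, 1 ≤ l → l < k → DecExponent p l ε) (r : ℕ) :
    ∃ C, BilGain p k η (r + 1) (bilinearGain k η (ε * k ^ 2) r) C := by
  obtain ⟨C₀, hC₀, hη⟩ := hη
  induction r with
  | zero => exact ⟨C₀, bilGain_zero 1 (fun _ => rfl) hη⟩
  | succ r ih =>
    obtain ⟨C, hC⟩ := ih
    choose! E _ hE using hlow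
    obtain ⟨K, hK⟩ := (insert C (insert C₀ ((Ico 1 k).image E))).exists_le
    simp only [forall_mem_insert, forall_mem_image, mem_Ico] at hK
    obtain ⟨hCK, hC₀K, hEK⟩ := hK
    refine ⟨K ^ 2, (hC.mono hCK).succ hk hε r.succ_ne_zero (hC₀.trans hC₀K)
      (fun n => (hη n).mono (by gcongr))
      (fun l hl1 hl n => (hE l hl1 hl n).mono (by have := hEK ⟨hl1, hl⟩; gcongr))
      (bilinearGain_zero_right _ _ _ _) fun l m hlm => ?_⟩
    rw [bilinearGain, show k - (l + 1) = m by omega]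

end BilinearGain

section DecouplingExponent

lemma DecExponent.of_succ {p k : ℕ} [NeZero p] (hk : 1 ≤ k) {A C θ : ℝ} (hC : 0 ≤ C)
    (hA : A < (p : ℝ) ^ θ)
    (h : ∀ (n : ℕ) (D : ℝ), DecBound p k n D →
      DecBound p k (n + 1) (A * D + C * (p : ℝ) ^ (θ * (n + 1 : ℕ)))) : DecExponent p k θ := by
  have hp0 : (0 : ℝ) < p := by exact_mod_cast NeZero.pos p
  have hgap : 0 < (p : ℝ) ^ θ - A := sub_pos.2 hA
  set B : ℝ := 1 + C * (p : ℝ) ^ θ / ((p : ℝ) ^ θ - A) with hB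
  have hB1 : 1 ≤ B := le_add_of_nonneg_right (by positivity)
  have hstep : A * B + C * (p : ℝ) ^ θ ≤ B * (p : ℝ) ^ θ := by
    have : B * ((p : ℝ) ^ θ - A) = (p : ℝ) ^ θ - A + C * (p : ℝ) ^ θ := by
      rw [hB]
      field_simp
    linarith
  refine ⟨B, hB1, fun n => ?_⟩
  induction n with
  | zero => exact (decBound_trivial p 0 hk).mono (by simpa using hB1)
  | succ n ih =>
    refine (h n _ ih).mono ?_
    have hexp : (p : ℝ) ^ (θ * (n + 1 : ℕ)) = (p : ℝ) ^ θ * (p : ℝ) ^ (θ * n) := by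
      rw [← Real.rpow_add hp0]
      push_cast
      ring_nf
    rw [hexp, ← mul_assoc, ← mul_assoc, ← mul_assoc, ← add_mul]
    gcongr

lemma decExponent_of_bilBound {p k l : ℕ} [Fact p.Prime] (hk1 : 1 ≤ k) (hk : k < p)
    (hl : l ≤ k) {θ C : ℝ} (hθ : 0 < θ) (hC : 0 ≤ C)
    (h : ∀ n : ℕ, BilBound p k n l 1 1 (C * (p : ℝ) ^ (θ * n))) : DecExponent p k θ := by
  have hp1 : (1 : ℝ) < p := by exact_mod_cast (Fact.out : p.Prime).one_lt
  have hk0 : (0 : ℝ) < tri k := by exact_mod_cast (tri_ne_zero hk1).bot_lt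
  -- the narrow part then only costs the factor `p ^ (θ / 2)` at each scale
  set τ : ℝ := (p : ℝ) ^ (θ / (4 * tri k)) - 1 with hτ
  have hτ0 : 0 < τ := sub_pos.2 (Real.one_lt_rpow hp1 (by positivity))
  have hnarrow : (1 + τ) ^ (2 * tri k) = (p : ℝ) ^ (θ / 2) := by
    rw [hτ, add_sub_cancel, ← Real.rpow_mul_natCast (by positivity)]
    congr 1
    push_cast
    field_simp
    norm_num
  refine DecExponent.of_succ hk1 (A := (p : ℝ) ^ (θ / 2))
    (C := (p : ℝ) ^ (2 * tri k) * (p / τ) ^ (2 * (tri k - tri l)) * p ^ 2 * C) (by positivity)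
    (Real.rpow_lt_rpow_of_exponent_lt hp1 (half_lt_self hθ)) fun n D hD => ?_
  rw [← hnarrow, mul_assoc _ C]
  exact DecBound.succ hk hl hk1 hτ0 hD (h (n + 1))

lemma BilBound.coarsen {p k n l b c : ℕ} [Fact p.Prime] (hk : k < p) (hl1 : 1 ≤ l) (hl : l < k)
    (hc : 1 ≤ c) (hbn : k * b ≤ n) (hcb : l * c ≤ (k - l + 1) * b) {M : ℝ}
    (hM : BilBound p k n l c b M) : BilBound p k n l 1 1 ((p : ℝ) ^ (k * tri k * b) * M) := by
  have hp : (1 : ℝ) ≤ p := by exact_mod_cast (Fact.out : p.Prime).one_le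
  have hckb := le_mul_of_mul_le hl1 hl.le hcb
  have hbkb : b ≤ k * b := Nat.le_mul_of_pos_left _ (by omega)
  refine ((hM.coarsen_left hk hl1 hl hc (hckb.trans hbn) (hbkb.trans hbn) hcb).coarsen_right hl
    (hbkb.trans hbn)).mono ?_
  rw [← mul_assoc, ← pow_mul, ← pow_mul, ← pow_add]
  refine mul_le_mul_of_nonneg_right (pow_le_pow_right₀ hp ?_) hM.1
  calc b * (tri k - tri l) + c * tri l ≤ k * b * (tri k - tri l) + k * b * tri l := by gcongr
    _ = k * tri k * b := by
      rw [← mul_add, Nat.sub_add_cancel (tri_mono hl.le)]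
      ring

lemma BilGain.bilBound_one_one {p k r l : ℕ} [Fact p.Prime] (hk : k < p) (hr : r ≠ 0)
    (hl1 : 1 ≤ l) (hl : l < k) {η K : ℝ}
    (hη : ∀ n : ℕ, DecBound p k n (K * (p : ℝ) ^ (η * n))) {y : ℕ → ℝ} (h : BilGain p k η r y K)
    (hy : k * tri k + 1 ≤ y l) {n b : ℕ} (hbr : k.factorial ^ r ∣ b) (hbn : k ^ r * b ≤ n) :
    BilBound p k n l 1 1 (K * (p : ℝ) ^ (η * n - b)) := by
  have hp1 : (1 : ℝ) ≤ p := by exact_mod_cast (Fact.out : p.Prime).one_le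
  have hp0 : (0 : ℝ) < p := by linarith
  rcases Nat.eq_zero_or_pos b with rfl | hb
  · simpa using bilBound_of_decBound (hl1.trans hl.le) hl.le (hη n)
  obtain ⟨c, hc⟩ := exists_mul_eq_mul_of_factorial_pow_dvd hr hl1 hl.le hbr (k - l + 1)
  have hc1 : 1 ≤ c := Nat.pos_of_ne_zero fun h0 => by
    rw [h0, mul_zero] at hc
    exact (Nat.mul_pos (k - l).succ_pos hb).ne hc
  have hK : 0 ≤ K := nonneg_of_mul_nonneg_left (hη 0).1 (by positivity)
  refine ((h n b l c hb hbr hbn hl1 hl hc).coarsen hk hl1 hl hc1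
    ((Nat.mul_le_mul_right _ (Nat.le_self_pow hr k)).trans hbn) hc.le).mono ?_
  rw [← Real.rpow_natCast, mul_left_comm, ← Real.rpow_add hp0]
  gcongr
  · have := mul_le_mul_of_nonneg_right hy (Nat.cast_nonneg (α := ℝ) b)
    push_cast
    linarith

lemma exists_dvd_and_le (d F n : ℕ) (hd : d ≠ 0) (hF : F ≠ 0) :
    ∃ b, F ∣ b ∧ d * b ≤ n ∧ n ≤ d * (b + F) := by
  refine ⟨F * (n / (d * F)), dvd_mul_right _ _, ?_, ?_⟩
  · rw [← mul_assoc]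
    exact Nat.mul_div_le _ _
  · rw [← Nat.mul_succ, ← mul_assoc]
    exact (Nat.lt_mul_div_succ n (Nat.mul_pos hd.bot_lt hF.bot_lt)).le

lemma decExponent_sub {p k : ℕ} [Fact p.Prime] (hk2 : 2 ≤ k) (hk : k < p)
    (hlow : ∀ l, 1 ≤ l → l < k → ∀ ε > 0, DecExponent p l ε) {η₀ : ℝ} (h0 : 0 < η₀) :
    ∃ σ > 0, ∀ η, η₀ ≤ η → DecExponent p k η → DecExponent p k (η - σ) := by
  have hp1 : (1 : ℝ) ≤ p := by exact_mod_cast (Fact.out : p.Prime).one_le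
  have hp0 : (0 : ℝ) < p := by linarith
  obtain ⟨r, hr⟩ := exists_nat_ge ((k * tri k + 1) / (η₀ / (2 * k)))
  rw [div_le_iff₀ (by positivity)] at hr
  set σ : ℝ := min (η₀ / 2) (1 / (k : ℝ) ^ (r + 1))
  have hσ0 : 0 < σ := by positivity
  refine ⟨σ, hσ0, fun η hle hη => ?_⟩
  obtain ⟨C, hgain⟩ := exists_bilGain hk (ε := η₀ / (2 * k) / k ^ 2) (by positivity) hη
    (fun l hl1 hl => hlow l hl1 hl _ (by positivity)) r
  rw [div_mul_cancel₀ _ (by positivity)] at hgain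
  obtain ⟨l, hl1, hl, hyl⟩ : ∃ l, 1 ≤ l ∧ l < k
      ∧ (k : ℝ) * tri k + 1 ≤ bilinearGain k η (η₀ / (2 * k)) r l := by
    refine exists_le_bilinearGain hk2 (hr.trans (mul_le_mul_of_nonneg_left ?_ r.cast_nonneg))
    have : η₀ / (2 * k) + η₀ / (2 * k) = η₀ / k := by field_simp; norm_num
    have : η₀ / k ≤ η / k := by gcongr
    linarith
  obtain ⟨C₀, hC₀, hη⟩ := hη
  set K := max C C₀
  have : 0 ≤ K := zero_le_one.trans (hC₀.trans (le_max_right C C₀))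
  set F := k.factorial ^ (r + 1)
  refine decExponent_of_bilBound (l := l) (by omega) hk hl.le (C := K * (p : ℝ) ^ F)
    (by linarith [min_le_left (η₀ / 2) (1 / (k : ℝ) ^ (r + 1))]) (by positivity) fun n => ?_
  obtain ⟨b, hFb, hbn, hnb⟩ := exists_dvd_and_le (k ^ (r + 1)) F n (by positivity) (by positivity)
  refine ((hgain.mono (le_max_left _ _)).bilBound_one_one hk r.succ_ne_zero hl1 hl
    (fun n => (hη n).mono (by gcongr; exact le_max_right _ _)) hyl hFb hbn).mono ?_
  have hσn : σ * n ≤ b + F :=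
    calc σ * n ≤ 1 / (k : ℝ) ^ (r + 1) * ((k : ℝ) ^ (r + 1) * (b + F)) := by
          gcongr
          · exact min_le_right _ _
          · exact_mod_cast hnb
      _ = b + F := by field_simp
  rw [mul_assoc, ← Real.rpow_natCast, ← Real.rpow_add hp0]
  gcongr
  linarith

lemma decExponent_of_pos {p k : ℕ} [Fact p.Prime] (hk1 : 1 ≤ k) (hk : k < p) {ε : ℝ}
    (hε : 0 < ε) : DecExponent p k ε := by
  induction k using Nat.strong_induction_on generalizing ε with
  | _ k ih =>
    rcases hk1.eq_or_lt with rfl | hk2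
    · exact DecExponent.mono (η := 0) ⟨1, le_rfl, fun n => by simpa using decBound_one p n⟩ hε.le
    by_contra hcon
    have hge : ∀ η, DecExponent p k η → ε ≤ η := fun η hη =>
      le_of_not_gt fun hlt => hcon (hη.mono hlt.le)
    obtain ⟨σ, hσ, hsub⟩ := decExponent_sub hk2 hk
      (fun l hl1 hl ε hε => ih l hl hl1 (hl.trans hk) hε) hε
    have hall : ∀ j : ℕ, DecExponent p k (tri k - j * σ) := fun j => by
      induction j with
      | zero =>
        refine ⟨1, le_rfl, fun n => (decBound_trivial p n hk1).mono (le_of_eq ?_)⟩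
        rw [← pow_mul, ← Real.rpow_natCast]
        push_cast
        ring_nf
      | succ j hj =>
        convert hsub _ (hge _ hj) hj using 1
        push_cast
        ring
    obtain ⟨j, hj⟩ := exists_nat_gt ((tri k : ℝ) / σ)
    rw [div_lt_iff₀ hσ] at hj
    linarith [hge _ (hall j)]

end DecouplingExponent

section VinogradovMeanValue

open Finset

/-- The integer points of the box `[1, M] ^ s`. -/
noncomputable def boxTuples (s M : ℕ) : Finset (Fin s → ℤ) :=
  Fintype.piFinset fun _ => Icc 1 (M : ℤ)

/-- The number of solutions of the Vinogradov system of degree `k` in `2 * s` integers between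
`1` and `M`. -/
noncomputable def vinogradovCount (s k M : ℕ) : ℕ :=
  #{z ∈ boxTuples s M ×ˢ boxTuples s M |
    ∀ m : Fin k, ∑ i, z.1 i ^ (m.1 + 1) = ∑ i, z.2 i ^ (m.1 + 1)}

variable {q : ℕ} [NeZero q] {k : ℕ}

lemma oscSum_pow {ι : Type*} (ψ : ι → Fin k → ZMod q) (a : ι → ℂ) (S : Finset ι) (s : ℕ)
    (α : Fin k → ZMod q) :
    oscSum ψ a S α ^ s = oscSum (fun x : Fin s → ι => ∑ i, ψ (x i)) (fun x => ∏ i, a (x i))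
      (Fintype.piFinset fun _ => S) α := by
  simp only [oscSum]
  rw [← Fin.prod_const, prod_univ_sum]
  refine sum_congr rfl fun x _ => ?_
  rw [prod_mul_distrib, ← addChar_map_sum, sum_comm]
  simp only [Finset.sum_apply, mul_sum]

lemma moment_eq_moment_one {ι : Type*} (ψ : ι → Fin k → ZMod q) (a : ι → ℂ) (s : ℕ)
    (S : Finset ι) :
    moment ψ a s S = moment (fun x : Fin s → ι => ∑ i, ψ (x i)) (fun x => ∏ i, a (x i)) 1
      (Fintype.piFinset fun _ => S) := by
  simp only [moment, ← oscSum_pow, norm_pow, ← pow_mul, mul_one, mul_comm s]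

lemma moment_coeff_one_eq {ι : Type*} (ψ : ι → Fin k → ZMod q) (s : ℕ) (S : Finset ι) :
    moment ψ 1 s S = Fintype.card (Fin k → ZMod q) *
      #{z ∈ (Fintype.piFinset fun _ : Fin s => S) ×ˢ (Fintype.piFinset fun _ : Fin s => S) |
        ∑ i, ψ (z.1 i) = ∑ i, ψ (z.2 i)} := by
  rw [moment_eq_moment_one, ← Complex.ofReal_inj, moment_one_eq, card_filter, sum_product]
  simp

lemma card_mul_vinogradovCount_le_moment (s M : ℕ) {ψ : ℤ → Fin k → ZMod q}
    (hψ : ∀ i m, ψ i m = (i : ZMod q) ^ (m.1 + 1)) :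
    (Fintype.card (Fin k → ZMod q) : ℝ) * vinogradovCount s k M
      ≤ moment ψ 1 s (Icc (1 : ℤ) M) := by
  rw [moment_coeff_one_eq]
  gcongr
  refine card_le_card (monotone_filter_right _ fun z _ hz => funext fun m => ?_)
  simp only [Finset.sum_apply, hψ]
  exact_mod_cast congrArg (Int.cast : ℤ → ZMod q) (hz m)

lemma moment_rpow_inv_le_of_card_le_one {ι : Type*} (ψ : ι → Fin k → ZMod q) {s : ℕ} (hs : s ≠ 0)
    {S : Finset ι} (hS : #S ≤ 1) :
    moment ψ 1 s S ^ (s : ℝ)⁻¹ ≤ (Fintype.card (Fin k → ZMod q) : ℝ) ^ (s : ℝ)⁻¹ * #S := by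
  rcases Nat.le_one_iff_eq_zero_or_eq_one.1 hS with h | h
  · rw [card_eq_zero.1 h, moment_empty_rpow_inv ψ 1 hs]
    positivity
  · obtain ⟨x, rfl⟩ := card_eq_one.1 h
    simp [moment, oscSum]

lemma classSum_Icc_le_of_lt (ψ : ℤ → Fin k → ZMod q) {s : ℕ} (hs : s ≠ 0) {Q : ℕ} [NeZero Q]
    {M : ℕ} (hM : M < Q) :
    classSum ψ 1 s Q id (Icc (1 : ℤ) M)
      ≤ (Fintype.card (Fin k → ZMod q) : ℝ) ^ (s : ℝ)⁻¹ * M := by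
  refine (sum_le_sum fun y _ => moment_rpow_inv_le_of_card_le_one ψ hs ?_).trans ?_
  · rw [card_le_one]
    intro a ha b hb
    simp only [mem_filter, mem_Icc, id] at ha hb
    have hdvd := (ZMod.intCast_eq_intCast_iff_dvd_sub a b Q).1 (ha.2.trans hb.2.symm)
    have hzero := Int.eq_zero_of_abs_lt_dvd hdvd (by rw [abs_lt]; constructor <;> omega)
    omega
  · rw [← mul_sum, ← Nat.cast_sum, sum_card_fiberwise_eq_card_filter]
    simp

lemma vinogradovCount_le_of_decBound {p n : ℕ} [NeZero p] {D : ℝ} (hk : 1 ≤ k)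
    (h : DecBound p k n D) {M : ℕ} (hM : M < p ^ n) :
    (vinogradovCount (tri k) k M : ℝ) ≤ D * M ^ tri k := by
  obtain ⟨hD, hdec⟩ := h
  have hs : tri k ≠ 0 := tri_ne_zero hk
  let ψ := polyFreq p (N := k * n) (0 : Fin k → ℕ) 0 id
  set G : ℝ := (Fintype.card (Fin k → ZMod (p ^ (k * n))) : ℝ)
  have hG : 0 < G := Nat.cast_pos.2 Fintype.card_pos
  refine le_of_mul_le_mul_left ?_ hG
  calc G * vinogradovCount (tri k) k M ≤ moment ψ 1 (tri k) (Icc 1 M) :=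
        card_mul_vinogradovCount_le_moment _ _ fun i m => by simp [ψ, polyFreq, momentPoly]
    _ ≤ D * classSum ψ 1 (tri k) (p ^ n) id (Icc 1 M) ^ tri k :=
        hdec (k * n) 0 0 id 1 (Icc 1 M) fun m => by simp
    _ ≤ D * (G ^ (tri k : ℝ)⁻¹ * M) ^ tri k := by
        gcongr
        · exact fiberSum_nonneg _ _ _ _ _
        · exact classSum_Icc_le_of_lt ψ hs hM
    _ = G * (D * M ^ tri k) := by
        rw [mul_pow, Real.rpow_inv_natCast_pow hG.le hs]
        ring

lemma exists_vinogradovCount_le (hk : 1 ≤ k) {ε : ℝ} (hε : 0 < ε) :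
    ∃ C : ℝ, 1 ≤ C ∧ ∀ M : ℕ, 1 ≤ M →
      (vinogradovCount (tri k) k M : ℝ) ≤ C * (M : ℝ) ^ (tri k + ε) := by
  obtain ⟨p, hkp, hp⟩ := Nat.exists_infinite_primes (k + 1)
  have : Fact p.Prime := ⟨hp⟩
  obtain ⟨C, hC, hdec⟩ := decExponent_of_pos (p := p) hk (by omega) hε
  have hp1 : (1 : ℝ) ≤ p := by exact_mod_cast hp.one_lt.le
  refine ⟨C * (p : ℝ) ^ ε, one_le_mul_of_one_le_of_one_le hC (Real.one_le_rpow hp1 hε.le),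
    fun M hM => ?_⟩
  have hM0 : (0 : ℝ) < M := by exact_mod_cast hM
  set n := Nat.log p M
  have hpn : (p : ℝ) ^ n ≤ M := by exact_mod_cast Nat.pow_log_le_self p (by omega)
  calc (vinogradovCount (tri k) k M : ℝ) ≤ C * (p : ℝ) ^ (ε * (n + 1 : ℕ)) * M ^ tri k :=
        vinogradovCount_le_of_decBound hk (hdec _) (Nat.lt_pow_succ_log_self hp.one_lt M)
    _ = C * ((p : ℝ) ^ ε * ((p : ℝ) ^ n) ^ ε) * M ^ tri k := by
        rw [← Real.rpow_natCast _ n, ← Real.rpow_mul (by positivity),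
          ← Real.rpow_add (by positivity)]
        push_cast
        ring_nf
    _ ≤ C * ((p : ℝ) ^ ε * M ^ ε) * M ^ tri k := by gcongr
    _ = C * (p : ℝ) ^ ε * (M : ℝ) ^ (tri k + ε) := by
        rw [Real.rpow_add hM0, Real.rpow_natCast]
        ring

end VinogradovMeanValue

section AdditiveCharacter

open Finset

lemma ec_eq_fourierChar (x : ℝ) : ec x = Real.fourierChar x := by
  rw [Real.fourierChar_apply, ec]
  congr 1
  push_cast
  ring

lemma ec_zero : ec 0 = 1 := by simp [ec]

lemma ec_add (x y : ℝ) : ec (x + y) = ec x * ec y := by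
  simp only [ec_eq_fourierChar, AddChar.map_add_eq_mul, Circle.coe_mul]

lemma norm_ec (x : ℝ) : ‖ec x‖ = 1 := by rw [ec_eq_fourierChar, Circle.norm_coe]

lemma ec_eq_one_iff {x : ℝ} : ec x = 1 ↔ ∃ n : ℤ, x = n := by
  rw [ec, Complex.exp_eq_one_iff]
  refine exists_congr fun n => ?_
  rw [mul_comm, mul_left_inj' Complex.two_pi_I_ne_zero]
  norm_cast

lemma ec_intCast (n : ℤ) : ec n = 1 := ec_eq_one_iff.2 ⟨n, rfl⟩

lemma ec_sub_intCast (x : ℝ) (n : ℤ) : ec (x - n) = ec x := by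
  rw [sub_eq_add_neg, ec_add, ← Int.cast_neg, ec_intCast, mul_one]

lemma conj_ec (x : ℝ) : (starRingEnd ℂ) (ec x) = ec (-x) := by
  simp only [ec_eq_fourierChar, AddChar.map_neg_eq_inv, Circle.coe_inv_eq_conj]

lemma ec_mul_natCast (x : ℝ) (n : ℕ) : ec (x * n) = ec x ^ n := by
  rw [ec_eq_fourierChar, ec_eq_fourierChar, mul_comm, ← nsmul_eq_mul, AddChar.map_nsmul_eq_pow,
    Circle.coe_pow]

lemma ec_sum {ι : Type*} (S : Finset ι) (f : ι → ℝ) : ec (∑ i ∈ S, f i) = ∏ i ∈ S, ec (f i) := by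
  simp only [ec_eq_fourierChar, addChar_map_sum]
  exact map_prod Circle.coeHom _ _

@[fun_prop]
lemma continuous_ec : Continuous ec := by
  unfold ec
  fun_prop

lemma four_mul_abs_le_norm_ec_sub_one {θ : ℝ} (hθ : |θ| ≤ 1 / 2) : 4 * |θ| ≤ ‖ec θ - 1‖ := by
  have hπ := Real.pi_pos
  have hsin : 2 / Real.pi * |Real.pi * θ| ≤ |Real.sin (Real.pi * θ)| :=
    Real.mul_abs_le_abs_sin (by rw [abs_mul, abs_of_pos hπ]; nlinarith)
  have hnorm : ‖ec θ - 1‖ = 2 * |Real.sin (Real.pi * θ)| := by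
    have hec : ec θ = Complex.exp (Complex.I * (2 * Real.pi * θ : ℝ)) := by
      rw [ec]
      congr 1
      push_cast
      ring
    rw [hec, Complex.norm_exp_I_mul_ofReal_sub_one, Real.norm_eq_abs, abs_mul, abs_two,
      show 2 * Real.pi * θ / 2 = Real.pi * θ by ring]
  rw [abs_mul, abs_of_pos hπ, ← mul_assoc, div_mul_cancel₀ _ hπ.ne'] at hsin
  linarith

lemma norm_sum_range_ec_le {θ : ℝ} (hθ : |θ| ≤ 1 / 2) (h0 : θ ≠ 0) (U : ℕ) :
    ‖∑ u ∈ range U, ec (θ * u)‖ ≤ 1 / 2 * |θ|⁻¹ := by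
  have hpos : 0 < |θ| := abs_pos.2 h0
  have hsub := four_mul_abs_le_norm_ec_sub_one hθ
  have hne : ec θ ≠ 1 := fun h => by
    rw [h, sub_self, norm_zero] at hsub
    linarith
  have hnum : ‖ec θ ^ U - 1‖ ≤ 2 := (norm_sub_le _ _).trans_eq (by
    rw [norm_pow, norm_ec, one_pow, norm_one]
    norm_num)
  calc ‖∑ u ∈ range U, ec (θ * u)‖ = ‖ec θ ^ U - 1‖ / ‖ec θ - 1‖ := by
        simp only [ec_mul_natCast]
        rw [geom_sum_eq hne, norm_div]
    _ ≤ 2 / (4 * |θ|) := by gcongr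
    _ = 1 / 2 * |θ|⁻¹ := by
        field_simp
        norm_num

end AdditiveCharacter

section LargeSieve

open Finset

variable {ι : Type*}

lemma abs_sub_lt_of_floor_div_eq {x y δ : ℝ} (hδ : 0 < δ) (hx : 0 ≤ x) (hy : 0 ≤ y)
    (h : ⌊x / δ⌋₊ = ⌊y / δ⌋₊) : |x - y| < δ := by
  have hx' := Nat.floor_le (div_nonneg hx hδ.le)
  have hy' := Nat.floor_le (div_nonneg hy hδ.le)
  have hx'' := Nat.lt_floor_add_one (x / δ)
  have hy'' := Nat.lt_floor_add_one (y / δ)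
  rw [h] at hx' hx''
  have hlt : |x / δ - y / δ| < 1 := abs_lt.2 ⟨by linarith, by linarith⟩
  rwa [← sub_div, abs_div, abs_of_pos hδ, div_lt_one hδ] at hlt

lemma sum_inv_le_of_separated (I : Finset ι) {θ : ι → ℝ} {δ : ℝ} (hδ : 0 < δ) (hδ1 : δ ≤ 1)
    (hlow : ∀ i ∈ I, δ ≤ θ i) (hup : ∀ i ∈ I, θ i ≤ 1)
    (hsep : ∀ i ∈ I, ∀ j ∈ I, i ≠ j → δ ≤ |θ i - θ j|) :
    ∑ i ∈ I, (θ i)⁻¹ ≤ δ⁻¹ * (1 + Real.log δ⁻¹) := by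
  set f : ι → ℕ := fun i => ⌊θ i / δ⌋₊
  have hθ : ∀ i ∈ I, 0 ≤ θ i := fun i hi => hδ.le.trans (hlow i hi)
  have hf : ∀ i ∈ I, 1 ≤ f i := fun i hi => by
    rw [Nat.one_le_floor_iff, one_le_div hδ]
    exact hlow i hi
  have hinj : Set.InjOn f I := fun i hi j hj hij => by
    by_contra hne
    exact (hsep i hi j hj hne).not_gt (abs_sub_lt_of_floor_div_eq hδ (hθ i hi) (hθ j hj) hij)
  have hrange : I.image f ⊆ Icc 1 ⌊δ⁻¹⌋₊ := image_subset_iff.2 fun i hi => by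
    refine mem_Icc.2 ⟨hf i hi, Nat.floor_le_floor ?_⟩
    rw [div_eq_mul_inv]
    exact mul_le_of_le_one_left (by positivity) (hup i hi)
  calc ∑ i ∈ I, (θ i)⁻¹ ≤ ∑ i ∈ I, δ⁻¹ * (f i : ℝ)⁻¹ := sum_le_sum fun i hi => by
        have hpos : (0 : ℝ) < f i := Nat.cast_pos.2 (hf i hi)
        rw [← mul_inv]
        refine inv_anti₀ (by positivity) ?_
        rw [← le_div_iff₀' hδ]
        exact Nat.floor_le (div_nonneg (hθ i hi) hδ.le)
    _ = δ⁻¹ * ∑ n ∈ I.image f, (n : ℝ)⁻¹ := by rw [sum_image hinj, mul_sum]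
    _ ≤ δ⁻¹ * ∑ n ∈ Icc 1 ⌊δ⁻¹⌋₊, (n : ℝ)⁻¹ := by gcongr
    _ ≤ δ⁻¹ * (1 + Real.log δ⁻¹) := by
        gcongr
        simpa [harmonic_eq_sum_Icc] using
          harmonic_floor_le_one_add_log _ (one_le_inv₀ hδ |>.2 hδ1)

lemma sum_inv_abs_le_of_separated (I : Finset ι) {θ : ι → ℝ} {δ : ℝ} (hδ : 0 < δ) (hδ1 : δ ≤ 1)
    (hlow : ∀ i ∈ I, δ ≤ |θ i|) (hup : ∀ i ∈ I, |θ i| ≤ 1)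
    (hsep : ∀ i ∈ I, ∀ j ∈ I, i ≠ j → δ ≤ |θ i - θ j|) :
    ∑ i ∈ I, |θ i|⁻¹ ≤ 2 * (δ⁻¹ * (1 + Real.log δ⁻¹)) := by
  rw [two_mul, ← sum_filter_add_sum_filter_not I (fun i => 0 ≤ θ i)]
  gcongr
  · refine sum_inv_le_of_separated _ hδ hδ1 (fun i hi => hlow i (mem_filter.1 hi).1)
      (fun i hi => hup i (mem_filter.1 hi).1) fun i hi j hj hij => ?_
    rw [mem_filter] at hi hj
    rw [abs_of_nonneg hi.2, abs_of_nonneg hj.2]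
    exact hsep i hi.1 j hj.1 hij
  · refine sum_inv_le_of_separated _ hδ hδ1 (fun i hi => hlow i (mem_filter.1 hi).1)
      (fun i hi => hup i (mem_filter.1 hi).1) fun i hi j hj hij => ?_
    rw [mem_filter, not_le] at hi hj
    rw [abs_of_neg hi.2, abs_of_neg hj.2, neg_sub_neg]
    exact hsep j hj.1 i hi.1 hij.symm

/-- The points `β y`, for `y` in `Y`, are `δ`-separated modulo one. -/
def SepModOne (Y : Finset ι) (β : ι → ℝ) (δ : ℝ) : Prop :=
  ∀ y ∈ Y, ∀ z ∈ Y, y ≠ z → ∀ n : ℤ, δ ≤ |β y - β z - n|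

lemma SepModOne.sum_norm_sum_range_ec_le {Y : Finset ι} {β : ι → ℝ} {δ : ℝ}
    (h : SepModOne Y β δ) (hδ : 0 < δ) (hδ1 : δ ≤ 1) (U : ℕ) {y : ι} (hy : y ∈ Y) :
    ∑ z ∈ Y, ‖∑ u ∈ range U, ec ((β z - β y) * u)‖ ≤ U + δ⁻¹ * (1 + Real.log δ⁻¹) := by
  classical
  set θ : ι → ℝ := fun z => β z - β y - round (β z - β y) with hθ
  have hec : ∀ z (u : ℕ), ec ((β z - β y) * u) = ec (θ z * u) := fun z u => by
    rw [ec_mul_natCast, ec_mul_natCast, hθ, ec_sub_intCast]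
  have hhalf : ∀ z, |θ z| ≤ 1 / 2 := fun z => abs_sub_round _
  have hlow : ∀ z ∈ Y.erase y, δ ≤ |θ z| := fun z hz =>
    h z (mem_of_mem_erase hz) y hy (ne_of_mem_erase hz) _
  have hsep : ∀ z ∈ Y.erase y, ∀ w ∈ Y.erase y, z ≠ w → δ ≤ |θ z - θ w| := fun z hz w hw hzw => by
    convert h z (mem_of_mem_erase hz) w (mem_of_mem_erase hw) hzw
      (round (β z - β y) - round (β w - β y)) using 2
    simp only [hθ]
    push_cast
    ring
  rw [← add_sum_erase _ _ hy]
  gcongr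
  · simp [ec_zero]
  · calc ∑ z ∈ Y.erase y, ‖∑ u ∈ range U, ec ((β z - β y) * u)‖
        ≤ ∑ z ∈ Y.erase y, 1 / 2 * |θ z|⁻¹ := sum_le_sum fun z hz => by
          simp only [hec]
          exact norm_sum_range_ec_le (hhalf z) (abs_pos.1 (hδ.trans_le (hlow z hz))) U
      _ ≤ 1 / 2 * (2 * (δ⁻¹ * (1 + Real.log δ⁻¹))) := by
          rw [← mul_sum]
          gcongr
          exact sum_inv_abs_le_of_separated _ hδ hδ1 hlow
            (fun z _ => (hhalf z).trans (by norm_num)) hsep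
      _ = δ⁻¹ * (1 + Real.log δ⁻¹) := by ring

lemma sum_sum_mul_mul_le_of_symm {Y : Finset ι} {K : ι → ι → ℝ} (hK : ∀ y z, 0 ≤ K y z)
    (hsymm : ∀ y z, K y z = K z y) {D : ℝ} (hrow : ∀ y ∈ Y, ∑ z ∈ Y, K y z ≤ D) (b : ι → ℝ) :
    ∑ y ∈ Y, ∑ z ∈ Y, b y * b z * K y z ≤ D * ∑ y ∈ Y, b y ^ 2 := by
  have hswap : ∑ y ∈ Y, ∑ z ∈ Y, b z ^ 2 * K y z = ∑ y ∈ Y, ∑ z ∈ Y, b y ^ 2 * K y z := by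
    rw [sum_comm]
    simp only [hsymm]
  calc ∑ y ∈ Y, ∑ z ∈ Y, b y * b z * K y z
      ≤ ∑ y ∈ Y, ∑ z ∈ Y, (b y ^ 2 * K y z / 2 + b z ^ 2 * K y z / 2) :=
        sum_le_sum fun y _ => sum_le_sum fun z _ => by
          nlinarith [mul_nonneg (hK y z) (sq_nonneg (b y - b z))]
    _ = ∑ y ∈ Y, b y ^ 2 * ∑ z ∈ Y, K y z := by
        simp only [sum_add_distrib, ← sum_div, hswap, add_halves, mul_sum]
    _ ≤ ∑ y ∈ Y, b y ^ 2 * D := by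
        gcongr with y hy
        exact hrow y hy
    _ = D * ∑ y ∈ Y, b y ^ 2 := by rw [← sum_mul, mul_comm]

lemma sum_norm_sq_sum_mul_ec_eq (Y : Finset ι) (β : ι → ℝ) (U : ℕ) (b : ι → ℂ) :
    ((∑ u ∈ range U, ‖∑ y ∈ Y, b y * ec (β y * u)‖ ^ 2 : ℝ) : ℂ)
      = ∑ y ∈ Y, ∑ z ∈ Y, (starRingEnd ℂ) (b y) * b z
          * ∑ u ∈ range U, ec ((β z - β y) * u) := by
  have hsq : ∀ u : ℕ, ((‖∑ y ∈ Y, b y * ec (β y * u)‖ ^ 2 : ℝ) : ℂ)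
      = ∑ y ∈ Y, ∑ z ∈ Y, (starRingEnd ℂ) (b y) * b z * ec ((β z - β y) * u) := fun u => by
    rw [Complex.ofReal_pow, ← Complex.conj_mul', map_sum, sum_mul_sum]
    refine sum_congr rfl fun y _ => sum_congr rfl fun z _ => ?_
    rw [map_mul, conj_ec, sub_mul, sub_eq_neg_add, ec_add]
    ring
  rw [Complex.ofReal_sum, sum_congr rfl fun u _ => hsq u, sum_comm]
  refine sum_congr rfl fun y _ => ?_
  rw [sum_comm]
  simp only [mul_sum]

lemma SepModOne.dual_large_sieve {Y : Finset ι} {β : ι → ℝ} {δ : ℝ}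
    (h : SepModOne Y β δ) (hδ : 0 < δ) (hδ1 : δ ≤ 1) (U : ℕ) (b : ι → ℂ) :
    ∑ u ∈ range U, ‖∑ y ∈ Y, b y * ec (β y * u)‖ ^ 2
      ≤ (U + δ⁻¹ * (1 + Real.log δ⁻¹)) * ∑ y ∈ Y, ‖b y‖ ^ 2 := by
  set K : ι → ι → ℝ := fun y z => ‖∑ u ∈ range U, ec ((β z - β y) * u)‖
  have hsymm : ∀ y z, K y z = K z y := fun y z => by
    simp only [K]
    rw [← Complex.norm_conj, map_sum]
    simp only [conj_ec, ← neg_mul, neg_sub]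
  calc ∑ u ∈ range U, ‖∑ y ∈ Y, b y * ec (β y * u)‖ ^ 2
      = ‖∑ y ∈ Y, ∑ z ∈ Y, (starRingEnd ℂ) (b y) * b z
          * ∑ u ∈ range U, ec ((β z - β y) * u)‖ := by
        rw [← sum_norm_sq_sum_mul_ec_eq, Complex.norm_of_nonneg (by positivity)]
    _ ≤ ∑ y ∈ Y, ∑ z ∈ Y, ‖b y‖ * ‖b z‖ * K y z := by
        refine norm_sum_le_of_le _ fun y _ => norm_sum_le_of_le _ fun z _ => ?_
        rw [norm_mul, norm_mul, Complex.norm_conj]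
    _ ≤ _ := sum_sum_mul_mul_le_of_symm (fun _ _ => norm_nonneg _) hsymm
        (fun _ hy => h.sum_norm_sum_range_ec_le hδ hδ1 U hy) _

lemma sum_norm_sq_le_of_dual {κ : Type*} {I : Finset κ} {Y : Finset ι} {A : κ → ι → ℂ} {D : ℝ}
    (hD : 0 ≤ D)
    (h : ∀ b : ι → ℂ, ∑ u ∈ I, ‖∑ y ∈ Y, b y * A u y‖ ^ 2 ≤ D * ∑ y ∈ Y, ‖b y‖ ^ 2) (c : κ → ℂ) :
    ∑ y ∈ Y, ‖∑ u ∈ I, c u * A u y‖ ^ 2 ≤ D * ∑ u ∈ I, ‖c u‖ ^ 2 := by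
  set S : ι → ℂ := fun y => ∑ u ∈ I, c u * A u y with hS
  set Q : ℝ := ∑ y ∈ Y, ‖S y‖ ^ 2
  have hQ : (Q : ℂ) = ∑ u ∈ I, c u * ∑ y ∈ Y, (starRingEnd ℂ) (S y) * A u y := by
    simp only [Q, Complex.ofReal_sum, Complex.ofReal_pow, ← Complex.conj_mul', mul_sum]
    rw [sum_comm]
    refine sum_congr rfl fun y _ => ?_
    nth_rw 2 [hS]
    rw [mul_sum]
    exact sum_congr rfl fun u _ => by ring
  have hQ0 : 0 ≤ Q := by positivity
  have hle : Q ≤ ∑ u ∈ I, ‖c u‖ * ‖∑ y ∈ Y, (starRingEnd ℂ) (S y) * A u y‖ := by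
    rw [← Complex.norm_of_nonneg hQ0, hQ]
    exact norm_sum_le_of_le _ fun u _ => (norm_mul _ _).le
  have hsq : Q * Q ≤ (D * ∑ u ∈ I, ‖c u‖ ^ 2) * Q := by
    calc Q * Q = Q ^ 2 := (sq Q).symm
      _ ≤ (∑ u ∈ I, ‖c u‖ * ‖∑ y ∈ Y, (starRingEnd ℂ) (S y) * A u y‖) ^ 2 := by gcongr
      _ ≤ (∑ u ∈ I, ‖c u‖ ^ 2) * ∑ u ∈ I, ‖∑ y ∈ Y, (starRingEnd ℂ) (S y) * A u y‖ ^ 2 :=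
          sum_mul_sq_le_sq_mul_sq _ _ _
      _ ≤ (∑ u ∈ I, ‖c u‖ ^ 2) * (D * Q) := by
          gcongr
          simpa only [Complex.norm_conj] using h fun y => (starRingEnd ℂ) (S y)
      _ = (D * ∑ u ∈ I, ‖c u‖ ^ 2) * Q := by ring
  rcases hQ0.eq_or_lt with h0 | h0
  · rw [← h0]
    positivity
  · exact le_of_mul_le_mul_right hsq h0

lemma SepModOne.large_sieve {Y : Finset ι} {β : ι → ℝ} {δ : ℝ}
    (h : SepModOne Y β δ) (hδ : 0 < δ) (hδ1 : δ ≤ 1) (U : ℕ) (c : ℕ → ℂ) :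
    ∑ y ∈ Y, ‖∑ u ∈ range U, c u * ec (β y * u)‖ ^ 2
      ≤ (U + δ⁻¹ * (1 + Real.log δ⁻¹)) * ∑ u ∈ range U, ‖c u‖ ^ 2 := by
  have hlog : 0 ≤ Real.log δ⁻¹ := Real.log_nonneg (one_le_inv₀ hδ |>.2 hδ1)
  exact sum_norm_sq_le_of_dual (A := fun (u : ℕ) y => ec (β y * u)) (by positivity)
    (h.dual_large_sieve hδ hδ1 U) c

end LargeSieve

section WeylCompletion

open Finset

lemma sum_range_ec_div_mul {M : ℕ} {n : ℤ} (hn : |n| < M) :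
    ∑ γ ∈ range M, ec ((n / M : ℝ) * γ) = if n = 0 then (M : ℂ) else 0 := by
  have hM : (M : ℝ) ≠ 0 := by
    have := abs_nonneg n
    exact Nat.cast_ne_zero.2 (by omega)
  split_ifs with h
  · simp [h, ec_zero]
  · have hne : ec (n / M : ℝ) ≠ 1 := fun h1 => by
      obtain ⟨j, hj⟩ := ec_eq_one_iff.1 h1
      rw [div_eq_iff hM] at hj
      exact h (Int.eq_zero_of_abs_lt_dvd ⟨j, by rw [mul_comm]; exact_mod_cast hj⟩ hn)
    simp only [ec_mul_natCast]
    rw [geom_sum_eq hne, ← ec_mul_natCast, div_mul_cancel₀ _ hM, ec_intCast, sub_self, zero_div]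

/-- The exponential sum obtained from the Weyl sum `∑ ec (α * z ^ k)` by the translation
`x = y + z` and completion: its range of summation no longer depends on `y`, and `c` is the
frequency of completion. -/
noncomputable def shiftSum (k M : ℕ) (α c : ℝ) (y : ℕ) : ℂ :=
  ∑ x ∈ Icc (1 : ℤ) M, ec (c * x + α * ((x : ℝ) - y) ^ k)

/-- The weight with which the frequency `γ / M` occurs in the completion modulo `M` of a sum of
length `P`. -/
noncomputable def complKernel (P M γ : ℕ) : ℝ :=
  ‖∑ z ∈ range P, ec ((γ / M : ℝ) * z)‖

lemma complKernel_nonneg (P M γ : ℕ) : 0 ≤ complKernel P M γ := norm_nonneg _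

lemma norm_sum_Icc_ec_neg (P : ℕ) (c : ℝ) :
    ‖∑ z ∈ Icc 1 P, ec (-(c * z))‖ = ‖∑ z ∈ range P, ec (c * z)‖ := by
  have hshift : ∑ z ∈ Icc 1 P, ec (c * z) = ec c * ∑ z ∈ range P, ec (c * z) := by
    rw [mul_sum, ← Ico_add_one_right_eq_Icc, range_eq_Ico]
    nth_rw 1 [← zero_add 1]
    rw [← sum_Ico_add' (fun z : ℕ => ec (c * z))]
    refine sum_congr rfl fun z _ => ?_
    rw [← ec_add]
    push_cast
    ring_nf
  rw [← Complex.norm_conj, map_sum]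
  simp only [conj_ec, neg_neg]
  rw [hshift, norm_mul, norm_ec, one_mul]

lemma mul_ec_eq_sum_mul_shiftSum (k : ℕ) {P M y z : ℕ} (hyP : y + P ≤ M) (hz : z ∈ Icc 1 P)
    (α : ℝ) :
    (M : ℂ) * ec (α * (z : ℝ) ^ k)
      = ∑ γ ∈ range M, ec (-((γ / M : ℝ) * y)) * ec (-((γ / M : ℝ) * z))
          * shiftSum k M α (γ / M) y := by
  rw [mem_Icc] at hz
  have hdetect : ∀ x ∈ Icc (1 : ℤ) M,
      ∑ γ ∈ range M, ec (((x - (y + z : ℕ) : ℤ) / M : ℝ) * γ) * ec (α * ((x : ℝ) - y) ^ k)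
        = if x = (y + z : ℕ) then (M : ℂ) * ec (α * (z : ℝ) ^ k) else 0 := fun x hx => by
    rw [mem_Icc] at hx
    rw [← sum_mul, sum_range_ec_div_mul (by rw [abs_lt]; constructor <;> omega)]
    by_cases h : x = (y + z : ℕ)
    · rw [if_pos (by omega), if_pos h, h]
      push_cast
      ring_nf
    · rw [if_neg (by omega), if_neg h, zero_mul]
  have hsum := sum_congr rfl hdetect
  rw [sum_ite_eq', if_pos (by rw [mem_Icc]; omega), sum_comm] at hsum
  rw [← hsum]
  refine sum_congr rfl fun γ _ => ?_
  rw [shiftSum, mul_sum]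
  refine sum_congr rfl fun x _ => ?_
  simp only [← ec_add]
  push_cast
  ring_nf

lemma mul_norm_weyl_le (k : ℕ) {P M y : ℕ} (hyP : y + P ≤ M) (α : ℝ) :
    M * ‖∑ z ∈ Icc 1 P, ec (α * (z : ℝ) ^ k)‖
      ≤ ∑ γ ∈ range M, complKernel P M γ * ‖shiftSum k M α (γ / M) y‖ := by
  have hcompl : (M : ℂ) * ∑ z ∈ Icc 1 P, ec (α * (z : ℝ) ^ k)
      = ∑ γ ∈ range M, ec (-((γ / M : ℝ) * y)) * (∑ z ∈ Icc 1 P, ec (-((γ / M : ℝ) * z)))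
          * shiftSum k M α (γ / M) y := by
    rw [mul_sum, sum_congr rfl fun z hz => mul_ec_eq_sum_mul_shiftSum k hyP hz α, sum_comm]
    refine sum_congr rfl fun γ _ => ?_
    rw [mul_sum, sum_mul]
  calc M * ‖∑ z ∈ Icc 1 P, ec (α * (z : ℝ) ^ k)‖
      = ‖(M : ℂ) * ∑ z ∈ Icc 1 P, ec (α * (z : ℝ) ^ k)‖ := by rw [norm_mul, Complex.norm_natCast]
    _ ≤ ∑ γ ∈ range M, complKernel P M γ * ‖shiftSum k M α (γ / M) y‖ := by
        rw [hcompl]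
        refine norm_sum_le_of_le _ fun γ _ => ?_
        rw [norm_mul, norm_mul, norm_ec, one_mul, norm_sum_Icc_ec_neg, complKernel]

lemma norm_weyl_pow_le (k : ℕ) {P M y n : ℕ} (hyP : y + P ≤ M) (α : ℝ) :
    (M * ‖∑ z ∈ Icc 1 P, ec (α * (z : ℝ) ^ k)‖) ^ (n + 1)
      ≤ (∑ γ ∈ range M, complKernel P M γ) ^ n
        * ∑ γ ∈ range M, complKernel P M γ * ‖shiftSum k M α (γ / M) y‖ ^ (n + 1) := by
  have hK := complKernel_nonneg P M
  calc (M * ‖∑ z ∈ Icc 1 P, ec (α * (z : ℝ) ^ k)‖) ^ (n + 1)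
      ≤ (∑ γ ∈ range M, complKernel P M γ * ‖shiftSum k M α (γ / M) y‖) ^ (n + 1) := by
        gcongr
        exact mul_norm_weyl_le k hyP α
    _ ≤ (∑ γ ∈ range M, complKernel P M γ) ^ n
        * (∑ γ ∈ range M, complKernel P M γ * ‖shiftSum k M α (γ / M) y‖ ^ (n + 1)) ^ 1 :=
        sum_pow_le_sum_pow_mul_sum_pow (fun γ _ => mul_nonneg (hK γ) (norm_nonneg _))
          (fun γ _ => hK γ) (fun γ _ => mul_nonneg (hK γ) (by positivity)) n.succ_ne_zero
          fun γ _ => by rw [mul_pow, pow_succ (complKernel P M γ), pow_one, mul_assoc]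
    _ = _ := by rw [pow_one]

lemma sepModOne_range_div (M : ℕ) : SepModOne (range M) (fun γ : ℕ => (γ / M : ℝ)) (M : ℝ)⁻¹ := by
  intro a ha b hb hab n
  rw [mem_range] at ha hb
  have hM : (0 : ℝ) < M := Nat.cast_pos.2 (by omega)
  have hne : (a - b - n * M : ℤ) ≠ 0 := fun h0 => hab (by
    have := Int.eq_zero_of_abs_lt_dvd (m := M) (x := (a : ℤ) - b) ⟨n, by linarith⟩
      (by rw [abs_lt]; constructor <;> omega)
    omega)
  have habs : (1 : ℝ) ≤ |((a - b - n * M : ℤ) : ℝ)| := by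
    rw [← Int.cast_abs]
    exact_mod_cast Int.one_le_abs hne
  calc (M : ℝ)⁻¹ ≤ |((a - b - n * M : ℤ) : ℝ)| * (M : ℝ)⁻¹ :=
        le_mul_of_one_le_left (by positivity) habs
    _ = |((a - b - n * M : ℤ) : ℝ) * (M : ℝ)⁻¹| := by rw [abs_mul, abs_of_pos (inv_pos.2 hM)]
    _ = |(a / M : ℝ) - b / M - n| := by
        push_cast
        field_simp

lemma sum_complKernel_le {P M : ℕ} (hM : 1 ≤ M) :
    ∑ γ ∈ range M, complKernel P M γ ≤ P + M * (1 + Real.log M) := by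
  have hM1 : (1 : ℝ) ≤ M := by exact_mod_cast hM
  simpa [complKernel] using (sepModOne_range_div M).sum_norm_sum_range_ec_le (by positivity)
    (inv_le_one_of_one_le₀ hM1) P (y := 0) (mem_range.2 hM)

lemma card_mul_norm_weyl_pow_le (k : ℕ) {P M s : ℕ} (hs : s ≠ 0) (hM : 1 ≤ M) {Y : Finset ℕ}
    (hY : ∀ y ∈ Y, y + P ≤ M) {α B : ℝ}
    (hB : ∀ c : ℝ, ∑ y ∈ Y, ‖shiftSum k M α c y‖ ^ s ≤ B) :
    #Y * ‖∑ z ∈ Icc 1 P, ec (α * (z : ℝ) ^ k)‖ ^ s ≤ (2 + Real.log M) ^ s * B := by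
  obtain ⟨n, rfl⟩ := Nat.exists_eq_succ_of_ne_zero hs
  rcases Y.eq_empty_or_nonempty with rfl | ⟨y₀, hy₀⟩
  · have hB0 : 0 ≤ B := by simpa using hB 0
    have := Real.log_natCast_nonneg M
    simpa using by positivity
  have hB0 : 0 ≤ B := (sum_nonneg fun _ _ => by positivity).trans (hB 0)
  set W := ‖∑ z ∈ Icc 1 P, ec (α * (z : ℝ) ^ k)‖
  set κ := ∑ γ ∈ range M, complKernel P M γ with hκ
  have hκ0 : 0 ≤ κ := sum_nonneg fun γ _ => complKernel_nonneg P M γ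
  have hκle : κ ≤ M * (2 + Real.log M) := by
    have hPM : (P : ℝ) ≤ M := by exact_mod_cast (Nat.le_add_left _ _).trans (hY y₀ hy₀)
    linarith [sum_complKernel_le (P := P) hM]
  have hM0 : (0 : ℝ) < M := by exact_mod_cast hM
  refine le_of_mul_le_mul_left ?_ (pow_pos hM0 (n + 1))
  calc (M : ℝ) ^ (n + 1) * (#Y * W ^ (n + 1)) = ∑ _y ∈ Y, (M * W) ^ (n + 1) := by
        rw [sum_const, nsmul_eq_mul]
        ring
    _ ≤ ∑ y ∈ Y, κ ^ n
          * ∑ γ ∈ range M, complKernel P M γ * ‖shiftSum k M α (γ / M) y‖ ^ (n + 1) :=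
        sum_le_sum fun y hy => norm_weyl_pow_le k (hY y hy) α
    _ = κ ^ n * ∑ γ ∈ range M,
          complKernel P M γ * ∑ y ∈ Y, ‖shiftSum k M α (γ / M) y‖ ^ (n + 1) := by
        rw [← mul_sum, sum_comm]
        simp only [mul_sum]
    _ ≤ κ ^ n * ∑ γ ∈ range M, complKernel P M γ * B := by
        gcongr with γ
        · exact complKernel_nonneg P M γ
        · exact hB _
    _ = κ ^ (n + 1) * B := by rw [← sum_mul, ← hκ, pow_succ, mul_assoc]
    _ ≤ (M * (2 + Real.log M)) ^ (n + 1) * B := by gcongr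
    _ = (M : ℝ) ^ (n + 1) * ((2 + Real.log M) ^ (n + 1) * B) := by rw [mul_pow, mul_assoc]

end WeylCompletion

section PowerSums

open Finset

variable {s l M : ℕ}

/-- The first `l` power sums of a tuple: the quantities on which the completed Weyl sums are
fibred. -/
def lowPowerSums (l : ℕ) (x : Fin s → ℤ) : Fin l → ℤ := fun j => ∑ i, x i ^ (j.1 + 1)

lemma sub_pow_add_two {R : Type*} [CommRing R] (t y : R) (l : ℕ) :
    (t - y) ^ (l + 2) = t ^ (l + 2) - (l + 2 : ℕ) * y * t ^ (l + 1) + (-y) ^ (l + 2)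
      + ∑ j : Fin l, t ^ (j.1 + 1) * ((-y) ^ (l + 2 - (j.1 + 1)) * (l + 2).choose (j.1 + 1)) := by
  have hsub : l + 2 - (l + 1) = 1 := by omega
  rw [sub_eq_add_neg, add_pow, sum_range_succ, sum_range_succ, sum_range_succ',
    Fin.sum_univ_eq_sum_range
      (fun j => t ^ (j + 1) * ((-y) ^ (l + 2 - (j + 1)) * (l + 2).choose (j + 1)))]
  simp only [hsub, Nat.sub_self, Nat.choose_self, Nat.choose_succ_self_right, pow_zero, pow_one,
    Nat.choose_zero_right, Nat.sub_zero, mul_assoc]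
  push_cast
  ring

lemma exists_sum_shift_phase_eq (hl : 1 ≤ l) (α c : ℝ) (y : ℕ) : ∃ φ : (Fin l → ℤ) → ℝ,
    ∀ x : Fin s → ℤ, ∑ i, (c * x i + α * ((x i : ℝ) - y) ^ (l + 2))
      = φ (lowPowerSums l x) + (α * (∑ i, x i ^ (l + 2) : ℤ)
        + (-((l + 2 : ℕ) * α * y)) * (∑ i, x i ^ (l + 1) : ℤ)) := by
  refine ⟨fun w => c * w ⟨0, hl⟩ + α * (s * (-(y : ℝ)) ^ (l + 2)
    + ∑ j : Fin l, (w j : ℝ) * ((-(y : ℝ)) ^ (l + 2 - (j.1 + 1)) * (l + 2).choose (j.1 + 1))),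
    fun x => ?_⟩
  simp only [sub_pow_add_two, lowPowerSums, sum_add_distrib, sum_sub_distrib, ← mul_sum, sum_const,
    card_univ, Fintype.card_fin, nsmul_eq_mul]
  push_cast
  simp only [pow_one, sum_mul]
  rw [sum_comm (s := (univ : Finset (Fin s)))]
  ring

lemma shiftSum_pow (s k M : ℕ) (α c : ℝ) (y : ℕ) :
    shiftSum k M α c y ^ s
      = ∑ x ∈ boxTuples s M, ec (∑ i, (c * x i + α * ((x i : ℝ) - y) ^ k)) := by
  rw [shiftSum, ← Fin.prod_const, prod_univ_sum, boxTuples]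
  exact sum_congr rfl fun x _ => (ec_sum _ _).symm

lemma norm_shiftSum_pow_le (s M : ℕ) (hl : 1 ≤ l) (α c : ℝ) (y : ℕ) :
    ‖shiftSum (l + 2) M α c y‖ ^ (2 * s)
      ≤ #((boxTuples s M).image (lowPowerSums l)) * ∑ w ∈ (boxTuples s M).image (lowPowerSums l),
        ‖∑ x ∈ boxTuples s M with lowPowerSums l x = w, ec (α * (∑ i, x i ^ (l + 2) : ℤ))
          * ec ((-((l + 2 : ℕ) * α * y)) * (∑ i, x i ^ (l + 1) : ℤ))‖ ^ 2 := by
  obtain ⟨φ, hφ⟩ := exists_sum_shift_phase_eq (s := s) hl α c y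
  have hfibre : ∀ w, ∑ x ∈ boxTuples s M with lowPowerSums l x = w,
        ec (∑ i, (c * x i + α * ((x i : ℝ) - y) ^ (l + 2)))
      = ec (φ w) * ∑ x ∈ boxTuples s M with lowPowerSums l x = w,
          ec (α * (∑ i, x i ^ (l + 2) : ℤ))
            * ec ((-((l + 2 : ℕ) * α * y)) * (∑ i, x i ^ (l + 1) : ℤ)) := fun w => by
    rw [mul_sum]
    refine sum_congr rfl fun x hx => ?_
    rw [hφ, (mem_filter.1 hx).2, ec_add, ec_add]
  rw [mul_comm, pow_mul, ← norm_pow, shiftSum_pow,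
    ← sum_fiberwise_of_maps_to (t := (boxTuples s M).image (lowPowerSums l))
      fun x hx => mem_image_of_mem (lowPowerSums l) hx]
  refine (pow_le_pow_left₀ (norm_nonneg _) (norm_sum_le _ _) 2).trans
    (sq_sum_le_card_mul_sum_sq.trans_eq ?_)
  simp only [hfibre, norm_mul (ec (φ _)), norm_ec, one_mul]

lemma sum_pow_mem_Icc {x : Fin s → ℤ} (hx : x ∈ boxTuples s M) (j : ℕ) :
    ∑ i, x i ^ j ∈ Icc (0 : ℤ) ((s * M ^ j : ℕ) : ℤ) := by
  simp only [boxTuples, Fintype.mem_piFinset, mem_Icc] at hx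
  rw [mem_Icc]
  refine ⟨sum_nonneg fun i _ => pow_nonneg (by linarith [(hx i).1]) _, ?_⟩
  calc ∑ i, x i ^ j ≤ ∑ _i : Fin s, (M : ℤ) ^ j :=
        sum_le_sum fun i _ => pow_le_pow_left₀ (by linarith [(hx i).1]) (hx i).2 _
    _ = ((s * M ^ j : ℕ) : ℤ) := by simp

lemma sum_range_succ_eq_tri (l : ℕ) : ∑ j ∈ range l, (j + 1) = tri l := by
  induction l with
  | zero => rfl
  | succ l ih => rw [sum_range_succ, tri_succ, ih]

lemma card_image_lowPowerSums_le (l : ℕ) (hs : 1 ≤ s) (hM : 1 ≤ M) :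
    #((boxTuples s M).image (lowPowerSums l)) ≤ (2 * s) ^ l * M ^ tri l := by
  have hsub : (boxTuples s M).image (lowPowerSums l)
      ⊆ Fintype.piFinset fun j : Fin l => Icc (0 : ℤ) ((s * M ^ (j.1 + 1) : ℕ) : ℤ) := by
    refine image_subset_iff.2 fun x hx => ?_
    rw [Fintype.mem_piFinset]
    exact fun j => sum_pow_mem_Icc hx _
  calc #((boxTuples s M).image (lowPowerSums l))
      ≤ ∏ j : Fin l, #(Icc (0 : ℤ) ((s * M ^ (j.1 + 1) : ℕ) : ℤ)) := by
        rw [← Fintype.card_piFinset]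
        exact card_le_card hsub
    _ ≤ ∏ j : Fin l, 2 * s * M ^ (j.1 + 1) := prod_le_prod' fun j _ => by
        have : 1 ≤ s * M ^ (j.1 + 1) := Nat.mul_pos hs (Nat.pow_pos hM)
        rw [Int.card_Icc, mul_assoc]
        omega
    _ = (2 * s) ^ l * M ^ tri l := by
        rw [prod_mul_distrib, Fin.prod_const, prod_pow_eq_pow_sum,
          Fin.sum_univ_eq_sum_range (fun j => j + 1), sum_range_succ_eq_tri]

/-- The tuples with prescribed low power sums and prescribed power sum of degree `l + 1`. -/
noncomputable def tupleFibre (s l M : ℕ) (w : Fin l → ℤ) (t : ℕ) : Finset (Fin s → ℤ) :=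
  {x ∈ boxTuples s M | lowPowerSums l x = w ∧ (∑ i, x i ^ (l + 1)).toNat = t}

/-- The majorant of the Weyl sum on the minor arcs furnished by the large sieve: the translation
`y` has been averaged out, and only the power sums of degree `l + 2` remain in the phase. -/
noncomputable def sieveMajorant (s l M : ℕ) (α : ℝ) : ℝ :=
  ∑ w ∈ (boxTuples s M).image (lowPowerSums l), ∑ t ∈ range (s * M ^ (l + 1) + 1),
    ‖∑ x ∈ tupleFibre s l M w t, ec (α * (∑ i, x i ^ (l + 2) : ℤ))‖ ^ 2

lemma sum_fibre_mul_ec_eq (a : (Fin s → ℤ) → ℂ) (β : ℝ) (w : Fin l → ℤ) :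
    ∑ x ∈ boxTuples s M with lowPowerSums l x = w, a x * ec (β * (∑ i, x i ^ (l + 1) : ℤ))
      = ∑ t ∈ range (s * M ^ (l + 1) + 1), (∑ x ∈ tupleFibre s l M w t, a x) * ec (β * t) := by
  have hIcc : ∀ x ∈ ({x ∈ boxTuples s M | lowPowerSums l x = w} : Finset _),
      ∑ i, x i ^ (l + 1) ∈ Icc (0 : ℤ) ((s * M ^ (l + 1) : ℕ) : ℤ) :=
    fun x hx => sum_pow_mem_Icc (mem_filter.1 hx).1 _
  rw [← sum_fiberwise_of_maps_to (t := range (s * M ^ (l + 1) + 1))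
    (g := fun x : Fin s → ℤ => (∑ i, x i ^ (l + 1)).toNat) fun x hx => by
      have := mem_Icc.1 (hIcc x hx)
      rw [mem_range]
      omega]
  refine sum_congr rfl fun t _ => ?_
  rw [sum_mul, tupleFibre, ← filter_filter]
  refine sum_congr rfl fun x hx => ?_
  obtain ⟨hxw, rfl⟩ := mem_filter.1 hx
  rw [← Int.cast_natCast (R := ℝ), Int.toNat_of_nonneg (mem_Icc.1 (hIcc x hxw)).1]

lemma sum_norm_shiftSum_pow_le (s M : ℕ) (hl : 1 ≤ l) (α c : ℝ) {Y : Finset ℕ} {δ : ℝ}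
    (hY : SepModOne Y (fun y : ℕ => -((l + 2 : ℕ) * α * y)) δ) (hδ : 0 < δ) (hδ1 : δ ≤ 1) :
    ∑ y ∈ Y, ‖shiftSum (l + 2) M α c y‖ ^ (2 * s)
      ≤ #((boxTuples s M).image (lowPowerSums l))
        * ((((s * M ^ (l + 1) + 1 : ℕ) : ℝ) + δ⁻¹ * (1 + Real.log δ⁻¹))
          * sieveMajorant s l M α) := by
  refine (sum_le_sum fun y _ => norm_shiftSum_pow_le s M hl α c y).trans ?_
  rw [← mul_sum, sum_comm, sieveMajorant]
  gcongr
  rw [mul_sum]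
  gcongr with w
  simp only [sum_fibre_mul_ec_eq]
  exact hY.large_sieve hδ hδ1 _ _

lemma continuous_sieveMajorant (s l M : ℕ) : Continuous (sieveMajorant s l M) := by
  unfold sieveMajorant
  fun_prop

lemma sieveMajorant_nonneg (s l M : ℕ) (α : ℝ) : 0 ≤ sieveMajorant s l M α := by
  unfold sieveMajorant
  positivity

lemma intervalIntegral_ec_mul_int (n : ℤ) :
    ∫ α in (0 : ℝ)..1, ec (α * n) = if n = 0 then 1 else 0 := by
  split_ifs with h
  · simp [h, ec_zero]
  · have hn : (2 * Real.pi * Complex.I * n : ℂ) ≠ 0 :=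
      mul_ne_zero Complex.two_pi_I_ne_zero (Int.cast_ne_zero.2 h)
    have hexp : ∀ x : ℝ, ec (x * n) = Complex.exp ((2 * Real.pi * Complex.I * n) * x) := fun x => by
      rw [ec]
      push_cast
      ring_nf
    simp only [hexp]
    rw [integral_exp_mul_complex hn, ← hexp, ← hexp, one_mul, zero_mul, ec_intCast, ec_zero,
      sub_self, zero_div]

lemma norm_sq_sum_ec_eq {ι : Type*} (A : Finset ι) (v : ι → ℤ) (α : ℝ) :
    ((‖∑ x ∈ A, ec (α * v x)‖ ^ 2 : ℝ) : ℂ) = ∑ z ∈ A ×ˢ A, ec (α * (v z.1 - v z.2 : ℤ)) := by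
  push_cast
  rw [← Complex.mul_conj', map_sum, sum_mul_sum, sum_product]
  refine sum_congr rfl fun x _ => sum_congr rfl fun y _ => ?_
  rw [conj_ec, ← ec_add]
  ring_nf

lemma intervalIntegral_norm_sq_sum_ec {ι : Type*} (A : Finset ι) (v : ι → ℤ) :
    ∫ α in (0 : ℝ)..1, ‖∑ x ∈ A, ec (α * v x)‖ ^ 2 = #{z ∈ A ×ˢ A | v z.1 = v z.2} := by
  rw [← Complex.ofReal_inj, ← intervalIntegral.integral_ofReal]
  simp only [norm_sq_sum_ec_eq]
  rw [intervalIntegral.integral_finsetSum fun z _ =>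
    Continuous.intervalIntegrable (by fun_prop) _ _]
  simp only [intervalIntegral_ec_mul_int, sub_eq_zero]
  rw [sum_boole]
  norm_cast

lemma intervalIntegral_sieveMajorant_le (s l M : ℕ) :
    ∫ α in (0 : ℝ)..1, sieveMajorant s l M α ≤ vinogradovCount s (l + 2) M := by
  set V : Finset ((Fin s → ℤ) × (Fin s → ℤ)) := {z ∈ boxTuples s M ×ˢ boxTuples s M |
    ∀ m : Fin (l + 2), ∑ i, z.1 i ^ (m.1 + 1) = ∑ i, z.2 i ^ (m.1 + 1)} with hV
  have hfibre : ∀ w t, #{z ∈ tupleFibre s l M w t ×ˢ tupleFibre s l M w t |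
      ∑ i, z.1 i ^ (l + 2) = ∑ i, z.2 i ^ (l + 2)}
        ≤ #{z ∈ V | (lowPowerSums l z.1, (∑ i, z.1 i ^ (l + 1)).toNat) = (w, t)} := fun w t => by
    refine card_le_card fun z hz => ?_
    simp only [tupleFibre, mem_filter, mem_product] at hz
    obtain ⟨⟨⟨hx, hxw, hxt⟩, hy, hyw, hyt⟩, htop⟩ := hz
    simp only [hV, mem_filter, mem_product, Prod.mk.injEq]
    refine ⟨⟨⟨hx, hy⟩, fun ⟨m, hm⟩ => ?_⟩, hxw, hxt⟩
    rcases lt_trichotomy m l with h | rfl | h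
    · exact congrFun (hxw.trans hyw.symm) ⟨m, h⟩
    · have hx0 := mem_Icc.1 (sum_pow_mem_Icc hx (m + 1))
      have hy0 := mem_Icc.1 (sum_pow_mem_Icc hy (m + 1))
      dsimp only
      omega
    · obtain rfl : m = l + 1 := by omega
      exact htop
  unfold sieveMajorant
  simp only [← sum_product']
  rw [intervalIntegral.integral_finsetSum fun p _ =>
    Continuous.intervalIntegrable (by fun_prop) _ _]
  simp only [intervalIntegral_norm_sq_sum_ec _ fun x : Fin s → ℤ => ∑ i, x i ^ (l + 2)]
  rw [← Nat.cast_sum, Nat.cast_le]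
  calc _ ≤ ∑ p ∈ (boxTuples s M).image (lowPowerSums l) ×ˢ range (s * M ^ (l + 1) + 1),
        #{z ∈ V | (lowPowerSums l z.1, (∑ i, z.1 i ^ (l + 1)).toNat) = p} :=
        sum_le_sum fun p _ => hfibre p.1 p.2
    _ ≤ #V := by
        rw [sum_card_fiberwise_eq_card_filter]
        exact card_filter_le _ _

end PowerSums

section MinorArcs

open Finset MeasureTheory

lemma measurableSet_minorArcs (k : ℕ) (X : ℝ) : MeasurableSet (minorArcs k X) := by
  refine measurableSet_Ico.inter (measurableSet_setOfPred.2 ?_)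
  refine Measurable.forall fun a => Measurable.forall fun q => measurable_const.imp
    (measurable_const.imp (Measurable.imp ?_ measurable_const))
  exact measurableSet_setOfPred.1 (measurableSet_le (by fun_prop) measurable_const)

lemma lt_abs_mul_sub_of_mem_minorArcs {k : ℕ} {X α : ℝ} (hα : α ∈ minorArcs k X) {q : ℕ}
    (hq : 0 < q) (hqX : (q : ℝ) ≤ (2 * (k : ℝ))⁻¹ * X) (n : ℤ) :
    (2 * (k : ℝ))⁻¹ * X ^ (1 - (k : ℝ)) < |q * α - n| := by
  by_contra! hle
  obtain ⟨d, n', q', hd, hcop, hn, hqd⟩ := Int.exists_gcd_one' (m := n) (n := q)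
    (Int.gcd_pos_of_ne_zero_right _ (by exact_mod_cast hq.ne'))
  lift q' to ℕ using nonneg_of_mul_nonneg_left (by omega) (by exact_mod_cast hd : (0 : ℤ) < d)
  have hqd : q = q' * d := by exact_mod_cast hqd
  have hd1 : (1 : ℝ) ≤ d := by exact_mod_cast hd
  have hreduced : |(q' : ℝ) * α - n'| ≤ |q * α - n| := calc
    |(q' : ℝ) * α - n'| ≤ d * |(q' : ℝ) * α - n'| := le_mul_of_one_le_left (abs_nonneg _) hd1
    _ = |d * ((q' : ℝ) * α - n')| := by rw [abs_mul, Nat.abs_cast]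
    _ = |q * α - n| := by
        rw [hqd, hn]
        push_cast
        ring_nf
  have hlt := hα.2 n' q' (pos_of_mul_pos_left (hqd ▸ hq) d.zero_le) hcop (hreduced.trans hle)
  have hq'q : (q' : ℝ) ≤ q := by exact_mod_cast hqd ▸ Nat.le_mul_of_pos_right q' hd
  linarith

lemma sepModOne_of_mem_minorArcs {k : ℕ} (hk : 1 ≤ k) {X α : ℝ} (hα : α ∈ minorArcs k X) {Y : ℕ}
    (hY : (k : ℝ) * Y ≤ (2 * (k : ℝ))⁻¹ * X) :
    SepModOne (Icc 1 Y) (fun y : ℕ => -((k : ℕ) * α * y))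
      ((2 * (k : ℝ))⁻¹ * X ^ (1 - (k : ℝ))) := by
  have hlt : ∀ y ∈ Icc 1 Y, ∀ z ∈ Icc 1 Y, y < z → ∀ n : ℤ,
      (2 * (k : ℝ))⁻¹ * X ^ (1 - (k : ℝ)) ≤ |-((k : ℕ) * α * y) - -((k : ℕ) * α * z) - n| := by
    intro y hy z hz hyz n
    rw [mem_Icc] at hy hz
    have hqX : ((k * (z - y) : ℕ) : ℝ) ≤ (2 * (k : ℝ))⁻¹ * X := by
      refine le_trans ?_ hY
      exact_mod_cast Nat.mul_le_mul_left k (by omega)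
    refine (lt_abs_mul_sub_of_mem_minorArcs hα (Nat.mul_pos hk (by omega)) hqX n).le.trans_eq ?_
    rw [Nat.cast_mul, Nat.cast_sub hyz.le]
    ring_nf
  intro y hy z hz hne n
  rcases lt_or_gt_of_ne hne with h | h
  · exact hlt y hy z hz h n
  · rw [← abs_neg]
    refine (hlt z hz y hy h (-n)).trans_eq (congrArg abs ?_)
    push_cast
    ring

lemma card_mul_norm_gk_pow_le {l s : ℕ} (hl : 1 ≤ l) (hs : 1 ≤ s) {X α δ : ℝ} (hX : 1 ≤ X)
    (hδ : 0 < δ) (hδ1 : δ ≤ 1) {Y : ℕ} (hYX : Y ≤ ⌊X⌋₊)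
    (hY : SepModOne (Icc 1 Y) (fun y : ℕ => -((l + 2 : ℕ) * α * y)) δ) :
    Y * ‖gk (l + 2) X α‖ ^ (2 * s) ≤ (2 + Real.log (2 * ⌊X⌋₊ : ℕ)) ^ (2 * s)
      * (((2 * s) ^ l * (2 * ⌊X⌋₊) ^ tri l : ℕ)
        * ((((s * (2 * ⌊X⌋₊) ^ (l + 1) + 1 : ℕ) : ℝ) + δ⁻¹ * (1 + Real.log δ⁻¹))
          * sieveMajorant s l (2 * ⌊X⌋₊) α)) := by
  have hM : 1 ≤ 2 * ⌊X⌋₊ := by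
    have := (Nat.one_le_floor_iff X).2 hX
    omega
  have hF := sieveMajorant_nonneg s l (2 * ⌊X⌋₊) α
  have hlog : 0 ≤ Real.log δ⁻¹ := Real.log_nonneg ((one_le_inv₀ hδ).2 hδ1)
  have hweyl := card_mul_norm_weyl_pow_le (l + 2) (P := ⌊X⌋₊) (M := 2 * ⌊X⌋₊) (s := 2 * s)
    (Y := Icc 1 Y) (by omega) hM (fun y hy => by rw [mem_Icc] at hy; omega) fun c =>
      (sum_norm_shiftSum_pow_le s (2 * ⌊X⌋₊) hl α c hY hδ hδ1).trans (mul_le_mul_of_nonneg_right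
        (Nat.cast_le.2 (card_image_lowPowerSums_le l hs hM)) (by positivity))
  rwa [Nat.card_Icc, Nat.add_sub_cancel] at hweyl

lemma continuous_gk (k : ℕ) (X : ℝ) : Continuous (gk k X) := by
  unfold gk
  fun_prop

lemma integrableOn_minorArcs {f : ℝ → ℝ} (hf : Continuous f) (k : ℕ) (X : ℝ) :
    IntegrableOn f (minorArcs k X) :=
  (hf.integrableOn_Icc (a := 0) (b := 1)).mono_set fun _ hα => Set.Ico_subset_Icc_self hα.1

lemma integral_minorArcs_le_intervalIntegral {f : ℝ → ℝ} (hf : Continuous f)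
    (h0 : ∀ α, 0 ≤ f α) (k : ℕ) (X : ℝ) :
    ∫ α in minorArcs k X, f α ≤ ∫ α in (0 : ℝ)..1, f α := by
  rw [intervalIntegral.integral_of_le zero_le_one, ← integral_Icc_eq_integral_Ioc]
  exact setIntegral_mono_set hf.integrableOn_Icc (Filter.Eventually.of_forall h0)
    (Filter.Eventually.of_forall fun _ hα => Set.Ico_subset_Icc_self hα.1)

lemma card_mul_integral_minorArcs_le {l s : ℕ} (hl : 1 ≤ l) (hs : 1 ≤ s) {X δ : ℝ} (hX : 1 ≤ X)
    (hδ : 0 < δ) (hδ1 : δ ≤ 1) {Y : ℕ} (hYX : Y ≤ ⌊X⌋₊)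
    (hY : ∀ α ∈ minorArcs (l + 2) X,
      SepModOne (Icc 1 Y) (fun y : ℕ => -((l + 2 : ℕ) * α * y)) δ) :
    Y * ∫ α in minorArcs (l + 2) X, ‖gk (l + 2) X α‖ ^ (2 * s)
      ≤ (2 + Real.log (2 * ⌊X⌋₊ : ℕ)) ^ (2 * s) * (((2 * s) ^ l * (2 * ⌊X⌋₊) ^ tri l : ℕ)
        * ((((s * (2 * ⌊X⌋₊) ^ (l + 1) + 1 : ℕ) : ℝ) + δ⁻¹ * (1 + Real.log δ⁻¹))
          * vinogradovCount s (l + 2) (2 * ⌊X⌋₊))) := by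
  have hpointwise := setIntegral_mono_on
    (integrableOn_minorArcs (((continuous_gk (l + 2) X).norm.pow (2 * s)).const_mul (Y : ℝ)) _ X)
    (integrableOn_minorArcs ((((continuous_sieveMajorant s l (2 * ⌊X⌋₊)).const_mul _).const_mul
      _).const_mul _) _ X) (measurableSet_minorArcs (l + 2) X)
    fun α hα => card_mul_norm_gk_pow_le hl hs hX hδ hδ1 hYX (hY α hα)
  simp only [integral_const_mul] at hpointwise
  refine hpointwise.trans ?_
  have hlog : 0 ≤ Real.log δ⁻¹ := Real.log_nonneg ((one_le_inv₀ hδ).2 hδ1)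
  gcongr
  exact (integral_minorArcs_le_intervalIntegral (continuous_sieveMajorant s l _)
    (sieveMajorant_nonneg _ _ _) (l + 2) X).trans (intervalIntegral_sieveMajorant_le s l _)

end MinorArcs

section GrowthExponent

open Asymptotics Filter

/-- The estimate `f(X) ≪ X ^ (κ + ε)` for every `ε > 0`. -/
def GrowthExponentLE (f : ℝ → ℝ) (κ : ℝ) : Prop :=
  ∀ ε > 0, f =O[atTop] fun X => X ^ (κ + ε)

namespace GrowthExponentLE

variable {f g : ℝ → ℝ} {κ μ : ℝ}

lemma of_isBigO (h : f =O[atTop] fun X => X ^ κ) : GrowthExponentLE f κ := fun ε hε =>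
  h.trans <| IsBigO.of_bound' <| (eventually_ge_atTop 1).mono fun X hX =>
    abs_le_abs_of_nonneg (by positivity) (Real.rpow_le_rpow_of_exponent_le hX (by linarith))

lemma mono (hg : GrowthExponentLE g κ) (h : f =O[atTop] g) : GrowthExponentLE f κ :=
  fun ε hε => h.trans (hg ε hε)

lemma add (hf : GrowthExponentLE f κ) (hg : GrowthExponentLE g κ) :
    GrowthExponentLE (fun X => f X + g X) κ := fun ε hε => (hf ε hε).add (hg ε hε)

lemma mul (hf : GrowthExponentLE f κ) (hg : GrowthExponentLE g μ) :
    GrowthExponentLE (fun X => f X * g X) (κ + μ) := fun ε hε =>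
  ((hf (ε / 2) (half_pos hε)).mul (hg (ε / 2) (half_pos hε))).congr' .rfl <|
    (eventually_gt_atTop 0).mono fun X hX => by
      dsimp only
      rw [← Real.rpow_add hX]
      ring_nf

lemma const (c : ℝ) (hκ : 0 ≤ κ) : GrowthExponentLE (fun _ => c) κ :=
  of_isBigO <| (isBigO_const_const c (one_ne_zero (α := ℝ)) atTop).trans <| IsBigO.of_bound' <|
    (eventually_ge_atTop 1).mono fun _ hX =>
      abs_le_abs_of_nonneg zero_le_one (Real.one_le_rpow hX hκ)

lemma const_mul (c : ℝ) (hf : GrowthExponentLE f κ) : GrowthExponentLE (fun X => c * f X) κ :=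
  hf.mono (isBigO_const_mul_self c f atTop)

lemma pow (hf : GrowthExponentLE f κ) (n : ℕ) : GrowthExponentLE (fun X => f X ^ n) (n * κ) := by
  induction n with
  | zero => simpa using const 1 le_rfl
  | succ n ih =>
    simp only [pow_succ]
    convert ih.mul hf using 1
    push_cast
    ring

lemma log (hf : f =O[atTop] fun X => X ^ κ) (hκ : 0 < κ) (h1 : ∀ᶠ X in atTop, 1 ≤ f X) :
    GrowthExponentLE (fun X => Real.log (f X)) 0 := fun ε hε => by
  have hpow : (fun X => f X ^ (ε / κ)) =O[atTop] fun X => X ^ (0 + ε) := by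
    refine (hf.rpow (by positivity) ?_).congr' .rfl ?_
    · filter_upwards [eventually_ge_atTop 0] with X hX using Real.rpow_nonneg hX κ
    · filter_upwards [eventually_ge_atTop 0] with X hX
      rw [← Real.rpow_mul hX, mul_div_cancel₀ _ hκ.ne', zero_add]
  refine (IsBigO.of_bound (ε / κ)⁻¹ ?_).trans hpow
  filter_upwards [h1] with X hX
  rw [Real.norm_of_nonneg (Real.log_nonneg hX), Real.norm_of_nonneg (by positivity),
    inv_mul_eq_div]
  exact Real.log_le_rpow_div (by positivity) (by positivity)

lemma le_of_rpow_isBigO (hf : GrowthExponentLE f κ) (h : (fun X => X ^ μ) =O[atTop] f) :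
    μ ≤ κ := by
  by_contra! hlt
  have hO : (fun X : ℝ => X ^ ((μ - κ) / 2)) =O[atTop] fun _ => (1 : ℝ) := by
    refine ((h.trans (hf ((μ - κ) / 2) (by linarith))).mul
      (isBigO_refl (fun X : ℝ => X ^ (-((μ + κ) / 2))) atTop)).congr' ?_ ?_
    all_goals
      filter_upwards [eventually_gt_atTop 0] with X hX
      rw [← Real.rpow_add hX]
      ring_nf
    exact Real.rpow_zero X
  exact not_isBoundedUnder_of_tendsto_atTop
    (tendsto_norm_atTop_atTop.comp (tendsto_rpow_atTop (by linarith)))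
    ((isBigO_one_iff ℝ).1 hO)

end GrowthExponentLE

lemma growthExponentLE_iff {f : ℝ → ℝ} {κ : ℝ} (hf : ∀ X, 0 ≤ f X) : GrowthExponentLE f κ ↔
    ∀ ε > 0, ∃ C X₀ : ℝ, 0 < C ∧ ∀ X, X₀ ≤ X → f X ≤ C * X ^ (κ + ε) := by
  refine forall₂_congr fun ε _ => ⟨fun h => ?_, fun ⟨C, X₀, _, h⟩ => .of_bound C ?_⟩
  · obtain ⟨C, hC, h⟩ := h.exists_pos
    obtain ⟨X₀, hX₀⟩ := eventually_atTop.1 (h.bound.and (eventually_ge_atTop 0))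
    refine ⟨C, X₀, hC, fun X hX => ?_⟩
    obtain ⟨hle, hX0⟩ := hX₀ X hX
    rwa [Real.norm_of_nonneg (hf X), Real.norm_of_nonneg (Real.rpow_nonneg hX0 _)] at hle
  · filter_upwards [eventually_ge_atTop X₀, eventually_ge_atTop 0] with X hX hX0
    rw [Real.norm_of_nonneg (hf X), Real.norm_of_nonneg (Real.rpow_nonneg hX0 _)]
    exact h X hX

lemma isBigO_two_mul_floor : (fun X : ℝ => ((2 * ⌊X⌋₊ : ℕ) : ℝ)) =O[atTop] fun X => X := by
  push_cast
  exact isEquivalent_nat_floor.isBigO.const_mul_left 2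

lemma growthExponentLE_two_mul_floor :
    GrowthExponentLE (fun X : ℝ => ((2 * ⌊X⌋₊ : ℕ) : ℝ)) 1 :=
  .of_isBigO (by simpa only [Real.rpow_one] using isBigO_two_mul_floor)

lemma one_le_two_mul_floor {X : ℝ} (hX : 1 ≤ X) : 1 ≤ 2 * ⌊X⌋₊ := by
  have := (Nat.one_le_floor_iff X).2 hX
  omega

lemma growthExponentLE_two_add_log_floor :
    GrowthExponentLE (fun X => 2 + Real.log (2 * ⌊X⌋₊ : ℕ)) 0 :=
  (GrowthExponentLE.const 2 le_rfl).add <|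
    .log (by simpa only [Real.rpow_one] using isBigO_two_mul_floor) one_pos <|
      (eventually_ge_atTop 1).mono fun _ hX => by exact_mod_cast one_le_two_mul_floor hX

lemma growthExponentLE_mul_one_add_log {c κ : ℝ} (hc : 1 ≤ c) (hκ : 0 < κ) :
    GrowthExponentLE (fun X => c * X ^ κ * (1 + Real.log (c * X ^ κ))) κ := by
  have hO : (fun X : ℝ => c * X ^ κ) =O[atTop] fun X => X ^ κ := isBigO_const_mul_self c _ _
  have hlog : GrowthExponentLE (fun X => Real.log (c * X ^ κ)) 0 :=
    .log hO hκ <| (eventually_ge_atTop 1).mono fun X hX =>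
      one_le_mul_of_one_le_of_one_le hc (Real.one_le_rpow hX hκ.le)
  simpa only [add_zero] using
    (GrowthExponentLE.of_isBigO hO).mul ((GrowthExponentLE.const 1 le_rfl).add hlog)

lemma growthExponentLE_vinogradovCount {k : ℕ} (hk : 1 ≤ k) :
    GrowthExponentLE (fun X => (vinogradovCount (tri k) k (2 * ⌊X⌋₊) : ℝ)) (tri k) := by
  intro ε hε
  obtain ⟨C, -, hC⟩ := exists_vinogradovCount_le hk hε
  refine (IsBigO.of_bound C ?_).trans
    (isBigO_two_mul_floor.rpow (by positivity) (eventually_ge_atTop 0))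
  filter_upwards [eventually_ge_atTop 1] with X hX
  rw [Real.norm_natCast, Real.norm_of_nonneg (by positivity)]
  exact hC _ (one_le_two_mul_floor hX)

lemma isBigO_inv_floor_div {c : ℝ} (hc : 0 < c) :
    (fun X : ℝ => (⌊X / c⌋₊ : ℝ)⁻¹) =O[atTop] fun X => X ^ (-1 : ℝ) := by
  have hfloor := (isEquivalent_nat_floor.comp_tendsto
    (tendsto_id.atTop_div_const hc)).inv.isBigO
  refine hfloor.trans (IsBigO.of_bound c (.of_forall fun X => ?_))
  simp [Real.rpow_neg_one, abs_of_pos hc, div_eq_mul_inv]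

lemma natCast_mul_floor_div_le (k : ℕ) {X : ℝ} (hX : 0 ≤ X) :
    (k : ℝ) * ⌊X / (2 * (k : ℝ) ^ 2)⌋₊ ≤ (2 * (k : ℝ))⁻¹ * X := by
  calc (k : ℝ) * ⌊X / (2 * (k : ℝ) ^ 2)⌋₊ ≤ k * (X / (2 * (k : ℝ) ^ 2)) := by
        gcongr
        exact Nat.floor_le (by positivity)
    _ = (2 * (k : ℝ))⁻¹ * X := by field_simp

lemma floor_mul_integral_minorArcs_le {l s : ℕ} (hl : 1 ≤ l) (hs : 1 ≤ s) {X : ℝ} (hX : 1 ≤ X) :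
    ⌊X / (2 * ((l + 2 : ℕ) : ℝ) ^ 2)⌋₊ * ∫ α in minorArcs (l + 2) X, ‖gk (l + 2) X α‖ ^ (2 * s)
      ≤ (2 + Real.log (2 * ⌊X⌋₊ : ℕ)) ^ (2 * s) * (((2 * s) ^ l * (2 * ⌊X⌋₊) ^ tri l : ℕ)
        * ((((s * (2 * ⌊X⌋₊) ^ (l + 1) + 1 : ℕ) : ℝ)
            + 2 * (l + 2 : ℕ) * X ^ (l + 1 : ℝ)
              * (1 + Real.log (2 * (l + 2 : ℕ) * X ^ (l + 1 : ℝ))))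
          * vinogradovCount s (l + 2) (2 * ⌊X⌋₊))) := by
  have hX0 : 0 < X := by linarith
  set δ := (2 * ((l + 2 : ℕ) : ℝ))⁻¹ * X ^ (1 - ((l + 2 : ℕ) : ℝ)) with hδ
  have hδinv : δ⁻¹ = 2 * (l + 2 : ℕ) * X ^ (l + 1 : ℝ) := by
    rw [hδ, mul_inv, inv_inv, ← Real.rpow_neg hX0.le]
    push_cast
    ring_nf
  have hk1 : (1 : ℝ) ≤ (l + 2 : ℕ) := by exact_mod_cast (by omega : 1 ≤ l + 2)
  have hδ1 : 1 ≤ δ⁻¹ := by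
    rw [hδinv]
    exact one_le_mul_of_one_le_of_one_le (by linarith) (Real.one_le_rpow hX (by positivity))
  rw [← hδinv]
  refine card_mul_integral_minorArcs_le hl hs hX (by positivity)
    ((one_le_inv₀ (by positivity)).1 hδ1) (Nat.floor_le_floor (div_le_self hX0.le (by nlinarith)))
    fun α hα => sepModOne_of_mem_minorArcs (by omega) hα
      (natCast_mul_floor_div_le _ hX0.le)

lemma tri_add_succ_add_tri (l : ℕ) : tri l + (l + 1) + tri (l + 2) = (l + 2) ^ 2 := by
  have h₀ := two_mul_tri l
  have h₂ := two_mul_tri (l + 2)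
  nlinarith

lemma growthExponentLE_integral_minorArcs {l : ℕ} (hl : 1 ≤ l) :
    GrowthExponentLE (fun X => ∫ α in minorArcs (l + 2) X, ‖gk (l + 2) X α‖ ^ (2 * tri (l + 2)))
      ((l + 2 : ℕ) ^ 2 - 1) := by
  set s := tri (l + 2)
  have hs1 : 1 ≤ s := (by omega : 1 ≤ l + 2).trans (le_tri _)
  have hlog := growthExponentLE_two_add_log_floor.pow (2 * s)
  have hpow (n : ℕ) : GrowthExponentLE (fun X => ((2 * ⌊X⌋₊ : ℕ) : ℝ) ^ n) n := by
    simpa only [mul_one] using growthExponentLE_two_mul_floor.pow n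
  have himage : GrowthExponentLE (fun X => (((2 * s) ^ l * (2 * ⌊X⌋₊) ^ tri l : ℕ) : ℝ))
      (tri l) := by
    have := (hpow (tri l)).const_mul (((2 * s) ^ l : ℕ) : ℝ)
    exact_mod_cast this
  have hlength : GrowthExponentLE (fun X => ((s * (2 * ⌊X⌋₊) ^ (l + 1) + 1 : ℕ) : ℝ))
      (l + 1) := by
    have := ((hpow (l + 1)).const_mul s).add (.const 1 (Nat.cast_nonneg _))
    exact_mod_cast this
  have hspacing := growthExponentLE_mul_one_add_log (c := 2 * (l + 2 : ℕ)) (κ := l + 1)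
    (by push_cast; linarith) (by positivity)
  have hJ := growthExponentLE_vinogradovCount (k := l + 2) (by omega)
  have hY : GrowthExponentLE _ (-1) :=
    .of_isBigO (isBigO_inv_floor_div (c := 2 * ((l + 2 : ℕ) : ℝ) ^ 2) (by positivity))
  have hexp : ((l + 2 : ℕ) ^ 2 - 1 : ℝ)
      = -1 + ((2 * s : ℕ) * 0 + (tri l + ((l + 1) + (tri (l + 2) : ℝ)))) := by
    have := congrArg (Nat.cast (R := ℝ)) (tri_add_succ_add_tri l)
    push_cast at this ⊢
    linarith
  rw [hexp]
  refine (hY.mul (hlog.mul (himage.mul ((hlength.add hspacing).mul hJ)))).mono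
    (IsBigO.of_bound' ?_)
  filter_upwards [eventually_ge_atTop (2 * ((l + 2 : ℕ) : ℝ) ^ 2)] with X hX
  have hX1 : 1 ≤ X := by
    refine le_trans ?_ hX
    exact_mod_cast Nat.one_le_iff_ne_zero.2 (by positivity)
  have hpos : (0 : ℝ) < ⌊X / (2 * ((l + 2 : ℕ) : ℝ) ^ 2)⌋₊ := by
    exact_mod_cast Nat.floor_pos.2 ((one_le_div (by positivity)).2 hX)
  refine abs_le_abs_of_nonneg (MeasureTheory.integral_nonneg fun _ => by positivity) ?_
  rw [← div_eq_inv_mul, le_div_iff₀' hpos]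
  exact floor_mul_integral_minorArcs_le hl hs1 hX1

end GrowthExponent

section MeanValueExponents

open Asymptotics Filter Finset

lemma mem_boxTuples_floor {v : ℕ} {X : ℝ} (hX : 0 ≤ X) {x : Fin v → ℤ} :
    x ∈ boxTuples v ⌊X⌋₊ ↔ ∀ i, 1 ≤ x i ∧ (x i : ℝ) ≤ X := by
  simp only [boxTuples, Fintype.mem_piFinset, mem_Icc, Int.natCast_floor_eq_floor hX, Int.le_floor]

lemma card_boxTuples (v M : ℕ) : #(boxTuples v M) = M ^ v := by
  simp [boxTuples]

lemma Jcount_eq_vinogradovCount (v w : ℕ) {X : ℝ} (hX : 0 ≤ X) :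
    Jcount v w X = vinogradovCount v w ⌊X⌋₊ := by
  rw [Jcount, vinogradovCount, ← Set.ncard_coe_finset]
  congr 1
  ext z
  simp only [coe_filter, mem_product, mem_boxTuples_floor hX, Set.mem_ofPred_eq, and_assoc,
    sum_sub_distrib, sub_eq_zero, mem_Icc]
  refine and_congr_right' (and_congr_right' ⟨fun h m => h _ (by omega), fun h j hj => ?_⟩)
  simpa only [Nat.sub_add_cancel hj.1] using h ⟨j - 1, by omega⟩

lemma vinogradovCount_le (s k M : ℕ) : vinogradovCount s k M ≤ M ^ (2 * s) :=
  (card_filter_le _ _).trans_eq (by rw [card_product, card_boxTuples, two_mul, pow_add])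

lemma pow_le_vinogradovCount (s k M : ℕ) : M ^ s ≤ vinogradovCount s k M := by
  rw [← card_boxTuples]
  refine card_le_card_of_injOn (fun x => (x, x)) (fun x hx => ?_)
    fun x _ y _ h => (Prod.mk.inj h).1
  simpa using hx

lemma isBigO_Jcount (v w : ℕ) : (fun X => (Jcount v w X : ℝ)) =O[atTop] fun X => X ^ (2 * v) := by
  refine IsBigO.of_bound' ?_
  filter_upwards [eventually_ge_atTop 0] with X hX
  refine abs_le_abs_of_nonneg (Nat.cast_nonneg _) ?_
  calc (Jcount v w X : ℝ) ≤ (⌊X⌋₊ : ℝ) ^ (2 * v) := by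
        rw [Jcount_eq_vinogradovCount v w hX]
        exact_mod_cast vinogradovCount_le v w _
    _ ≤ X ^ (2 * v) := by
        gcongr
        exact Nat.floor_le hX

lemma isBigO_pow_Jcount (v w : ℕ) : (fun X => X ^ v) =O[atTop] fun X => (Jcount v w X : ℝ) := by
  have hfloor := (isEquivalent_nat_floor (R := ℝ)).isBigO_symm.pow v
  refine hfloor.trans (IsBigO.of_bound' ?_)
  filter_upwards [eventually_ge_atTop 0] with X hX
  refine abs_le_abs_of_nonneg (by positivity) ?_
  rw [Jcount_eq_vinogradovCount v w hX]
  exact_mod_cast pow_le_vinogradovCount v w _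

lemma etaExp_eq (v w : ℕ) : etaExp v w = sInf {η : ℝ | 0 < η ∧
    GrowthExponentLE (fun X => (Jcount v w X : ℝ)) (2 * v - w * (w + 1) / 2 + η)} := by
  simp only [etaExp, growthExponentLE_iff fun X => Nat.cast_nonneg (Jcount v w X), gt_iff_lt]

lemma etaExp_nonneg (v w : ℕ) : 0 ≤ etaExp v w := Real.sInf_nonneg fun _ h => h.1.le

lemma le_etaExp (v w : ℕ) : (w : ℝ) * (w + 1) / 2 - v ≤ etaExp v w := by
  rw [etaExp_eq]
  refine le_csInf ⟨(w : ℝ) * (w + 1) / 2 + 1, by positivity, ?_⟩ fun η hη => ?_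
  · refine .of_isBigO ((isBigO_Jcount v w).trans (IsBigO.of_bound' ?_))
    filter_upwards [eventually_ge_atTop 1] with X hX
    refine abs_le_abs_of_nonneg (by positivity) ?_
    rw [← Real.rpow_natCast]
    refine Real.rpow_le_rpow_of_exponent_le hX ?_
    push_cast
    linarith
  · have := hη.2.le_of_rpow_isBigO (μ := v)
      (by simpa only [Real.rpow_natCast] using isBigO_pow_Jcount v w)
    linarith

lemma add_div_one_add_div_le {w t D Δ : ℝ} (hw : 1 ≤ w) (htΔ : t ≤ Δ) (hΔ : 0 ≤ Δ)
    (hD : w * (w + 1) ≤ D) : (D + 2 * t - w * (w - 1)) / (1 + Δ / w) ≤ D := by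
  rw [div_le_iff₀ (by positivity)]
  calc D + 2 * t - w * (w - 1) ≤ D + (w + 1) * Δ := by nlinarith
    _ = D + w * (w + 1) * (Δ / w) := by field_simp
    _ ≤ D + D * (Δ / w) := by gcongr
    _ = D * (1 + Δ / w) := by ring

lemma le_s0C {k v w : ℕ} (hw : 1 ≤ w) (hwk : w ≤ k - 1) :
    (k : ℝ) ^ 2 + k - 2 ≤ s0C k v w := by
  have hΔ0 : 0 ≤ DstarC k v := (etaExp_nonneg v (k - 1)).trans (le_max_right _ _)
  have hΔ : (k : ℝ) * (k + 1) / 2 - 1 - v ≤ DstarC k v :=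
    le_trans (by linarith [le_etaExp v k]) (le_max_left _ _)
  have hw1 : (1 : ℝ) ≤ w := by exact_mod_cast hw
  have hwk' : (w : ℝ) + 1 ≤ k := by exact_mod_cast (by omega : w + 1 ≤ k)
  have hkey := add_div_one_add_div_le (D := (k : ℝ) ^ 2 - k) hw1 hΔ hΔ0 (by nlinarith)
  have hnum : (k : ℝ) ^ 2 - k + 2 * ((k : ℝ) * (k + 1) / 2 - 1 - v) - w * (w - 1)
      = 2 * (k : ℝ) ^ 2 - 2 - (2 * (v : ℝ) + (w : ℝ) ^ 2 - w) := by ring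
  rw [hnum] at hkey
  rw [s0C]
  linarith

lemma le_s1C {k : ℕ} (hk : 2 ≤ k) : (k : ℝ) ^ 2 + k - 2 ≤ s1C k := by
  have hk2 : (2 : ℝ) ≤ k := by exact_mod_cast hk
  refine le_csInf ⟨s0C k 1 1, 1, 1, le_rfl, by omega, le_rfl, by push_cast; nlinarith, rfl⟩ ?_
  rintro _ ⟨v, w, hw, hwk, -, -, rfl⟩
  exact le_s0C hw hwk

lemma sq_lt_of_s1C_lt {k s : ℕ} (hk : 2 ≤ k) (hs : s1C k < s) : k ^ 2 < s := by
  have hk2 : (2 : ℝ) ≤ k := by exact_mod_cast hk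
  exact_mod_cast (by linarith [le_s1C hk] : (k : ℝ) ^ 2 < s)

end MeanValueExponents

section Interpolation

open Asymptotics Filter MeasureTheory

lemma norm_gk_le (k : ℕ) {X : ℝ} (hX : 0 ≤ X) (α : ℝ) : ‖gk k X α‖ ≤ X := by
  refine (norm_sum_le _ _).trans ?_
  simpa [norm_ec] using Nat.floor_le hX

lemma volume_real_minorArcs_le (k : ℕ) (X : ℝ) : volume.real (minorArcs k X) ≤ 1 := by
  simpa using measureReal_mono (μ := volume)
    (fun _ hα => hα.1 : minorArcs k X ⊆ Set.Ico (0 : ℝ) 1) (by simp)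

lemma continuous_norm_gk_pow (k : ℕ) (X : ℝ) (n : ℕ) : Continuous fun α => ‖gk k X α‖ ^ n :=
  (continuous_gk k X).norm.pow n

lemma pow_le_inv_pow_mul_pow_add {t T : ℝ} (ht : 0 ≤ t) (hT : 0 < T) (n m : ℕ) :
    t ^ n ≤ (T ^ m)⁻¹ * t ^ (n + m) + T ^ n := by
  rcases le_total t T with h | h
  · exact (pow_le_pow_left₀ ht h n).trans (le_add_of_nonneg_left (by positivity))
  · refine le_add_of_le_of_nonneg ?_ (by positivity)
    rw [← div_eq_inv_mul, le_div_iff₀ (by positivity), pow_add]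
    gcongr

lemma integral_norm_gk_pow_le_add (k : ℕ) {X T : ℝ} (hT : 0 < T) (n m : ℕ) :
    ∫ α in minorArcs k X, ‖gk k X α‖ ^ n
      ≤ (T ^ m)⁻¹ * (∫ α in minorArcs k X, ‖gk k X α‖ ^ (n + m)) + T ^ n := by
  have hint := integrableOn_minorArcs
    ((continuous_norm_gk_pow k X (n + m)).const_mul (T ^ m)⁻¹) k X
  have hconst := integrableOn_minorArcs (continuous_const (y := T ^ n)) k X
  calc ∫ α in minorArcs k X, ‖gk k X α‖ ^ n
      ≤ ∫ α in minorArcs k X, ((T ^ m)⁻¹ * ‖gk k X α‖ ^ (n + m) + T ^ n) :=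
        setIntegral_mono (integrableOn_minorArcs (continuous_norm_gk_pow k X n) k X)
          (hint.add hconst) fun α => pow_le_inv_pow_mul_pow_add (norm_nonneg _) hT n m
    _ = (T ^ m)⁻¹ * (∫ α in minorArcs k X, ‖gk k X α‖ ^ (n + m))
          + volume.real (minorArcs k X) * T ^ n := by
        rw [integral_add hint hconst, integral_const_mul, setIntegral_const, smul_eq_mul]
    _ ≤ _ := by
        gcongr
        exact mul_le_of_le_one_left (by positivity) (volume_real_minorArcs_le k X)

lemma integral_norm_gk_pow_add_le (k : ℕ) {X : ℝ} (hX : 0 ≤ X) (m n : ℕ) :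
    ∫ α in minorArcs k X, ‖gk k X α‖ ^ (m + n)
      ≤ X ^ m * ∫ α in minorArcs k X, ‖gk k X α‖ ^ n := by
  rw [← integral_const_mul]
  refine setIntegral_mono (integrableOn_minorArcs (continuous_norm_gk_pow k X _) k X)
    (integrableOn_minorArcs ((continuous_norm_gk_pow k X n).const_mul _) k X) fun α => ?_
  dsimp only
  rw [pow_add]
  gcongr
  exact norm_gk_le k hX α

lemma growthExponentLE_integral_minorArcs_succ_sq {k : ℕ} (hk : 3 ≤ k) :
    GrowthExponentLE (fun X => ∫ α in minorArcs k X, ‖gk k X α‖ ^ (k ^ 2 + 1))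
      ((k ^ 2 + 1 : ℕ) - k - 1 / k) := by
  have hk0 : (k : ℝ) ≠ 0 := by positivity
  have hcritical := growthExponentLE_integral_minorArcs (l := k - 2) (by omega)
  rw [Nat.sub_add_cancel (by omega : 2 ≤ k), two_mul_tri,
    show k * (k + 1) = k ^ 2 + 1 + (k - 1) by zify [(by omega : 1 ≤ k)]; ring] at hcritical
  -- The two terms of the interpolation balance at `T = X ^ (1 - 1 / k)`.
  have hT (n : ℕ) : (fun X : ℝ => (X ^ (1 - 1 / (k : ℝ))) ^ n)
      =ᶠ[atTop] fun X => X ^ ((1 - 1 / (k : ℝ)) * n) :=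
    (eventually_ge_atTop 0).mono fun X hX => (Real.rpow_mul_natCast hX _ n).symm
  have hlarge : GrowthExponentLE (fun X => ((X ^ (1 - 1 / (k : ℝ))) ^ (k - 1))⁻¹)
      (-((1 - 1 / k) * (k - 1 : ℕ))) :=
    .of_isBigO <| EventuallyEq.isBigO <| by
      filter_upwards [hT (k - 1), eventually_ge_atTop 0] with X h hX
      rw [h, Real.rpow_neg hX]
  have hsmall : GrowthExponentLE (fun X => (X ^ (1 - 1 / (k : ℝ))) ^ (k ^ 2 + 1))
      ((k ^ 2 + 1 : ℕ) - k - 1 / k) := by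
    convert GrowthExponentLE.of_isBigO (hT (k ^ 2 + 1)).isBigO using 1
    push_cast
    field_simp
    ring
  have hexp : -((1 - 1 / (k : ℝ)) * (k - 1 : ℕ)) + (k ^ 2 - 1)
      = (k ^ 2 + 1 : ℕ) - k - 1 / k := by
    rw [Nat.cast_sub (by omega)]
    push_cast
    field_simp
    ring
  refine ((hexp ▸ hlarge.mul hcritical).add hsmall).mono (IsBigO.of_bound' ?_)
  filter_upwards [eventually_gt_atTop 0] with X hX
  exact abs_le_abs_of_nonneg (integral_nonneg fun _ => by positivity)
    (integral_norm_gk_pow_le_add k (by positivity) _ _)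

lemma growthExponentLE_integral_minorArcs_of_sq_lt {k s : ℕ} (hk : 3 ≤ k) (hs : k ^ 2 < s) :
    GrowthExponentLE (fun X => ∫ α in minorArcs k X, ‖gk k X α‖ ^ s) (s - k - 1 / k) := by
  obtain ⟨m, rfl⟩ := Nat.exists_eq_add_of_le' hs
  have hpow : GrowthExponentLE (fun X : ℝ => X ^ m) m :=
    .of_isBigO (by simpa only [Real.rpow_natCast] using isBigO_refl _ _)
  convert (hpow.mul (growthExponentLE_integral_minorArcs_succ_sq hk)).mono ?_ using 1
  · push_cast
    ring
  · refine IsBigO.of_bound' ?_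
    filter_upwards [eventually_ge_atTop 0] with X hX
    exact abs_le_abs_of_nonneg (integral_nonneg fun _ => by positivity)
      (integral_norm_gk_pow_add_le k hX m _)

end Interpolation

theorem theorem9_2_general (k s : ℕ) (hk : 3 ≤ k) (hs : k ^ 2 < s) :
    ∃ δ : ℝ, 0 < δ ∧ ∃ C : ℝ, 0 < C ∧ ∃ X₀ : ℝ, ∀ X : ℝ, X₀ ≤ X →
      (∫ α in minorArcs k X, ‖gk k X α‖ ^ s) ≤ C * X ^ ((s : ℝ) - (k : ℝ) - δ) := by
  obtain ⟨C, X₀, hC, h⟩ := (growthExponentLE_iff fun X =>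
    MeasureTheory.integral_nonneg fun α => by positivity).1
      (growthExponentLE_integral_minorArcs_of_sq_lt hk hs) (1 / (2 * k)) (by positivity)
  refine ⟨1 / (2 * k), by positivity, C, hC, X₀, fun X hX => (h X hX).trans_eq ?_⟩
  congr 2
  field_simp
  ring

/-- Theorem 9.2: for k ≥ 3 and s > s₁(k) there is δ > 0 with
∫_𝔪 |g_k(α;X)|^s dα ≤ C X^{s-k-δ}. -/
theorem theorem9_2 (k s : ℕ) (hk : 3 ≤ k) (hs : s1C k < (s:ℝ)) :
    ∃ δ : ℝ, 0 < δ ∧ ∃ C : ℝ, 0 < C ∧ ∃ X₀ : ℝ, ∀ X : ℝ, X₀ ≤ X →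
      (∫ α in minorArcs k X, ‖gk k X α‖^s) ≤ C * X ^ ((s:ℝ) - (k:ℝ) - δ) :=
  theorem9_2_general k s hk (sq_lt_of_s1C_lt (by omega) hs)
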